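/- Let r ≥ 1 and let m_1, …, m_r and d_1, …, d_r be integers forming principal data, and let G be the group with presentation ⟨x, t | w⟩ where w = ∏_{i=1}^{r} t^{-d_i} x^{m_i} t^{d_i} in the free group on x, t. Set e = min_i d_i, D = max_i d_i, δ = D − e, and for 0 ≤ k ≤ δ let a_k = Σ_{i : d_i − e = k} m_i, so that the associated polynomial is A(X) = a_0 + a_1 X + ⋯ + a_{δ−1} X^{δ−1} − m X^{δ} where −m = a_δ is the coefficient coming from the unique index attaining D. Assume that gcd(a_0, …, a_{δ−1}) = 1 and that a_{δ−1} is not divisible by m. If every complex root of A(X) is a positive real number, then G is bi-orderable. -/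

import Mathlib

/-- A group is bi-orderable if it admits a strict total order invariant under
left and right multiplication. -/
def IsBiOrderable (G : Type*) [Group G] : Prop :=
  ∃ lt : G → G → Prop, IsStrictTotalOrder G lt ∧
    ∀ a b c : G, lt a b → lt (c * a) (c * b) ∧ lt (a * c) (b * c)

/-!
Conjugation by `t` presents `G = ⟨x, t ∣ w⟩` as an ascending HNN extension of the group `Γ`
generated by `x_k = t ^ (-k) * x * t ^ k`, `k ≥ 0`, subject to the translates of `w`. A positive
cone of `Γ` that is stable under the shift `τ : x_k ↦ x_{k+1}` spreads to the kernel of the exponent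
sum in `t`, and so gives a bi-order on `G`.

Principality makes `Γ` a union of groups obtained from the free group on `x_0, …, x_{δ-1}` by
adjoining `M`-th roots one at a time, `M = |m|`; as the coefficients of `A` below the leading one
have no common factor, each new root has order exactly `M` modulo the preceding group, even in
`Γ^ab ⊗ ℚ`. Upper triangular matrices over `ℝ⟦X⟧` with exponentials on the diagonal have `M`-th
roots, so representations of the free group by such matrices extend to `Γ`. The `2 × 2` case gives
twisted Fox derivatives; from their linear independence on generators of the kernel of
`Γ → Γ^ab ⊗ ℚ`, larger matrices show that the powers of the augmentation ideal of `ℝ[Γ]` intersect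
`{g - 1 | g ∈ Γ}` in `0`.

On the quotient of the augmentation ideal by its square, `τ` is annihilated by `A`; as all roots of
`A` are positive reals, `τ` acts on every successive quotient of the filtration by a triangular
matrix with positive eigenvalues, and such a quotient has a `τ`-invariant order. Ordering the
elements of `Γ` by their leading terms gives the `τ`-stable positive cone.
-/

namespace PrincipalGroup

section RootTowers

open PowerSeries
open scoped commutatorElement

/-! ### Logarithms and crossed homomorphisms -/

/-- A homomorphism from a multiplicative group to an additive one, kept unbundled so that its
values need no `Multiplicative` wrapper. -/
def IsLog {Γ A : Type*} [Group Γ] [AddCommGroup A] (f : Γ → A) : Prop :=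
  ∀ g h, f (g * h) = f g + f h

namespace IsLog

variable {Γ A B : Type*} [Group Γ] [AddCommGroup A] [AddCommGroup B] {f : Γ → A}

/-- The bundled form of a logarithm, which gives access to kernels and to the library on
homomorphisms. -/
def toHom (hf : IsLog f) : Γ →* Multiplicative A :=
  .mk' (fun g => .ofAdd (f g)) hf

lemma mem_ker_toHom (hf : IsLog f) {g : Γ} : g ∈ hf.toHom.ker ↔ f g = 0 := Iff.rfl

lemma map_one (hf : IsLog f) : f 1 = 0 := congrArg Multiplicative.toAdd (_root_.map_one hf.toHom)

lemma map_inv (hf : IsLog f) (g : Γ) : f g⁻¹ = -f g :=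
  congrArg Multiplicative.toAdd (_root_.map_inv hf.toHom g)

lemma map_pow (hf : IsLog f) (g : Γ) (n : ℕ) : f (g ^ n) = n • f g :=
  congrArg Multiplicative.toAdd (_root_.map_pow hf.toHom g n)

lemma map_zpow (hf : IsLog f) (g : Γ) (n : ℤ) : f (g ^ n) = n • f g :=
  congrArg Multiplicative.toAdd (_root_.map_zpow hf.toHom g n)

lemma comp {F : Type*} [FunLike F A B] [AddMonoidHomClass F A B] (hf : IsLog f) (u : F) :
    IsLog (fun g => u (f g)) :=
  fun g h => by simp only [hf g h, map_add]

lemma const_mul {R : Type*} [Ring R] {l : Γ → R} (hl : IsLog l) (s : R) :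
    IsLog (fun g => s * l g) :=
  fun g h => by simp only [hl g h, mul_add]

lemma map_conj (hf : IsLog f) (y g : Γ) : f (y * g * y⁻¹) = f g := by
  rw [hf, hf, hf.map_inv, add_comm, neg_add_cancel_left]

lemma map_commutator (hf : IsLog f) (p q : Γ) : f ⁅p, q⁆ = 0 := by
  rw [commutatorElement_def, hf, hf.map_conj, hf.map_inv, add_neg_cancel]

/-- The group of values of a logarithm on a subgroup. -/
def image (hf : IsLog f) (P : Subgroup Γ) : AddSubgroup A where
  carrier := f '' P
  zero_mem' := ⟨1, one_mem P, hf.map_one⟩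
  add_mem' := by
    rintro _ _ ⟨g, hg, rfl⟩ ⟨h, hh, rfl⟩
    exact ⟨g * h, mul_mem hg hh, hf g h⟩
  neg_mem' := by
    rintro _ ⟨g, hg, rfl⟩
    exact ⟨g⁻¹, inv_mem hg, hf.map_inv g⟩

lemma mem_image_of_mem (hf : IsLog f) {P : Subgroup Γ} {g : Γ} (hg : g ∈ P) : f g ∈ hf.image P :=
  ⟨g, hg, rfl⟩

lemma image_mono (hf : IsLog f) {P Q : Subgroup Γ} (h : P ≤ Q) : hf.image P ≤ hf.image Q :=
  Set.image_mono h

lemma sub {f' : Γ → A} (hf : IsLog f) (hf' : IsLog f') : IsLog (fun g => f g - f' g) :=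
  fun g h => by simp only [hf g h, hf' g h, add_sub_add_comm]

end IsLog

/-- `φ` is a crossed homomorphism with respect to the action through the multiplicative map `E`;
Fox derivatives are the example to keep in mind. -/
def IsCrossed {Γ C : Type*} [Group Γ] [CommRing C] (E : Γ →* C) (φ : Γ → C) : Prop :=
  ∀ g h, φ (g * h) = φ g + E g * φ h

namespace IsCrossed

variable {Γ C : Type*} [Group Γ] [CommRing C] {E : Γ →* C} {φ : Γ → C}

lemma map_one (h : IsCrossed E φ) : φ 1 = 0 := by
  simpa using h 1 1

lemma map_inv (h : IsCrossed E φ) (g : Γ) : φ g⁻¹ = -(E g⁻¹ * φ g) := by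
  have hg := h g⁻¹ g
  rw [inv_mul_cancel, h.map_one] at hg
  linear_combination -hg

lemma map_pow (h : IsCrossed E φ) (g : Γ) (n : ℕ) :
    φ (g ^ n) = (∑ s ∈ Finset.range n, E g ^ s) * φ g := by
  induction n with
  | zero => simp [h.map_one]
  | succ n ih => rw [pow_succ, h, ih, Finset.sum_range_succ, _root_.map_pow]; ring

lemma one_sub_mul_comm (h : IsCrossed E φ) {p q : Γ} (hpq : Commute p q) :
    (1 - E p) * φ q = (1 - E q) * φ p := by
  have h1 := h p q
  rw [hpq.eq, h] at h1
  linear_combination h1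

lemma commutator (h : IsCrossed E φ) (p q : Γ) :
    φ ⁅p, q⁆ = (1 - E q) * φ p - (1 - E p) * φ q := by
  have hcomm : ⁅p, q⁆ * (q * p) = p * q := by rw [commutatorElement_def]; group
  have hE : E ⁅p, q⁆ = 1 := by
    have hu : IsUnit (E (q * p)) := (Group.isUnit _).map E
    rw [← hu.mul_left_inj, ← _root_.map_mul, hcomm, one_mul, _root_.map_mul, _root_.map_mul,
      mul_comm]
  have h1 := h ⁅p, q⁆ (q * p)
  rw [hcomm, h, h, hE] at h1
  linear_combination -h1

lemma one_sub_mul_commutator (h : IsCrossed E φ) (p : Γ) {q q' : Γ} (hq : Commute q q') :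
    (1 - E q') * φ ⁅p, q⁆ = (1 - E q) * φ ⁅p, q'⁆ := by
  rw [h.commutator, h.commutator]
  linear_combination (1 - E p) * h.one_sub_mul_comm hq

lemma conj (h : IsCrossed E φ) (y : Γ) {k : Γ} (hk : E k = 1) :
    φ (y * k * y⁻¹) = E y * φ k := by
  have hy : E y * E y⁻¹ = 1 := by rw [← _root_.map_mul, mul_inv_cancel, _root_.map_one]
  rw [h, h, h.map_inv, _root_.map_mul, hk]
  linear_combination -(φ y) * hy

lemma sub {φ' : Γ → C} (h : IsCrossed E φ) (h' : IsCrossed E φ') :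
    IsCrossed E (fun g => φ g - φ' g) := fun g k => by
  simp only [h g k, h' g k]
  ring

/-- The subgroup on which a crossed homomorphism vanishes. -/
def ker (h : IsCrossed E φ) : Subgroup Γ where
  carrier := {g | φ g = 0}
  one_mem' := h.map_one
  mul_mem' {a b} ha hb := show φ (a * b) = 0 by rw [h, ha, hb, mul_zero, add_zero]
  inv_mem' {a} ha := show φ a⁻¹ = 0 by rw [h.map_inv, ha, mul_zero, neg_zero]

lemma mem_ker (h : IsCrossed E φ) {g : Γ} : g ∈ h.ker ↔ φ g = 0 := Iff.rfl

lemma mem_of_mem_closure {S : Type*} [SetLike S C] [SubringClass S C] (h : IsCrossed E φ) (R : S)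
    {s : Set Γ} (hE : ∀ g ∈ Subgroup.closure s, E g ∈ R) (hs : ∀ g ∈ s, φ g ∈ R) {g : Γ}
    (hg : g ∈ Subgroup.closure s) : φ g ∈ R := by
  induction hg using Subgroup.closure_induction with
  | mem g hg => exact hs g hg
  | one => rw [h.map_one]; exact zero_mem R
  | mul a b ha _ iha ihb => rw [h]; exact add_mem iha (mul_mem (hE a ha) ihb)
  | inv a ha iha => rw [h.map_inv]; exact neg_mem (mul_mem (hE _ (inv_mem ha)) iha)

end IsCrossed

/-! ### Formal exponentials -/

section FormalExponential

variable {K : Type*} [Field K] [CharZero K]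

/-- The formal exponential `exp (a X)`. -/
noncomputable def fexp (a : K) : K⟦X⟧ := rescale a (exp K)

lemma fexp_add (a b : K) : fexp (a + b) = fexp a * fexp b := (exp_mul_exp_eq_exp_add a b).symm

@[simp] lemma fexp_zero : fexp (0 : K) = 1 := by simp [fexp]

variable (K) in
/-- The exponential as a multiplicative map; it pulls a logarithm back to a character. -/
noncomputable def fexpHom : Multiplicative K →* K⟦X⟧ where
  toFun a := fexp a.toAdd
  map_one' := fexp_zero
  map_mul' a b := fexp_add a.toAdd b.toAdd

/-- The character `g ↦ exp (l g X)` attached to a logarithm `l`. -/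
noncomputable def expChar {Γ : Type*} [Group Γ] {l : Γ → K} (hl : IsLog l) : Γ →* K⟦X⟧ :=
  (fexpHom K).comp hl.toHom

@[simp] lemma expChar_apply {Γ : Type*} [Group Γ] {l : Γ → K} (hl : IsLog l) (g : Γ) :
    expChar hl g = fexp (l g) := rfl

lemma fexp_mul_fexp_neg (a : K) : fexp a * fexp (-a) = 1 := by
  rw [← fexp_add, add_neg_cancel, fexp_zero]

@[simp] lemma constantCoeff_fexp (a : K) : constantCoeff (fexp a) = 1 := by
  simp [fexp, ← coeff_zero_eq_constantCoeff_apply, coeff_rescale]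

lemma isUnit_fexp (a : K) : IsUnit (fexp a) := .of_mul_eq_one _ (fexp_mul_fexp_neg a)

lemma fexp_ne_zero (a : K) : fexp a ≠ 0 := (isUnit_fexp a).ne_zero

lemma rescale_fexp (s a : K) : rescale s (fexp a) = fexp (s * a) := by
  rw [fexp, rescale_rescale, mul_comm, fexp]

lemma fexp_pow (a : K) (n : ℕ) : fexp a ^ n = fexp (n * a) := by
  induction n with
  | zero => simp
  | succ k ih => rw [pow_succ, ih, ← fexp_add, Nat.cast_succ, add_one_mul]

lemma derivative_fexp (a : K) : derivative K (fexp a) = a • fexp a := by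
  ext n
  have hn : (n.factorial : K) ≠ 0 := by exact_mod_cast n.factorial_ne_zero
  have hn' : (n : K) + 1 ≠ 0 := by exact_mod_cast n.succ_ne_zero
  simp only [coeff_derivative, fexp, coeff_rescale, coeff_exp, map_smul, smul_eq_mul,
    Nat.factorial_succ, Nat.cast_mul, Nat.cast_succ, one_div, map_inv₀, map_mul, map_add, map_one,
    map_natCast]
  field_simp
  rw [pow_succ']

lemma linearIndependent_fexp : LinearIndependent K (fexp : K → K⟦X⟧) := by
  refine Module.End.eigenvectors_linearIndependent' (derivative K).toLinearMap id
    Function.injective_id fexp fun a => ?_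
  rw [Module.End.hasEigenvector_iff, Module.End.mem_eigenspace_iff]
  exact ⟨derivative_fexp a, fexp_ne_zero a⟩

lemma one_sub_fexp_ne_zero {a : K} (ha : a ≠ 0) : 1 - fexp a ≠ 0 := by
  rw [sub_ne_zero, ← fexp_zero]
  exact fun h => ha (linearIndependent_fexp.injective h).symm

lemma linearIndependent_one_sub_fexp :
    LinearIndependent K fun a : {a : K // a ≠ 0} => 1 - fexp (a : K) := by
  have h := linearIndependent_fexp (K := K).affineIndependent
  rw [affineIndependent_iff_linearIndependent_vsub K _ (0 : K)] at h
  simpa only [Pi.neg_def, vsub_eq_sub, neg_sub, fexp_zero] using h.neg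

/-- The algebra of exponential sums with exponents in `L`. -/
noncomputable def expAlg (L : AddSubgroup K) : Subalgebra K K⟦X⟧ :=
  Algebra.adjoin K (fexp '' (L : Set K))

lemma fexp_mem_expAlg {L : AddSubgroup K} {a : K} (ha : a ∈ L) : fexp a ∈ expAlg L :=
  Algebra.subset_adjoin ⟨a, ha, rfl⟩

lemma expAlg_mono {L L' : AddSubgroup K} (h : L ≤ L') : expAlg L ≤ expAlg L' :=
  Algebra.adjoin_mono (Set.image_mono h)

lemma toSubmodule_expAlg (L : AddSubgroup K) :
    (expAlg L).toSubmodule = Submodule.span K (fexp '' (L : Set K)) := by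
  have hclosed : fexp '' (L : Set K) = L.toSubgroup.toSubmonoid.map (fexpHom K) := rfl
  rw [expAlg, Algebra.adjoin_eq_span, hclosed, Submonoid.closure_eq]

lemma fexp_mul_mem_span {L : AddSubgroup K} {f : K⟦X⟧} (hf : f ∈ expAlg L) (a : K) :
    fexp a * f ∈ Submodule.span K (fexp '' ((a + ·) '' (L : Set K))) := by
  rw [← Subalgebra.mem_toSubmodule, toSubmodule_expAlg] at hf
  have himage := Submodule.mem_map_of_mem (f := LinearMap.mulLeft K (fexp a)) hf
  rw [Submodule.map_span, Set.image_image] at himage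
  simpa only [LinearMap.mulLeft_apply, ← fexp_add, Set.image_image] using himage

lemma eq_zero_of_sum_fexp_mul_expAlg {L : AddSubgroup K} {ι : Type*} {a : ι → K}
    (ha : ∀ ⦃i j⦄, a i - a j ∈ L → i = j) {s : Finset ι} {f : ι → K⟦X⟧}
    (hf : ∀ i ∈ s, f i ∈ expAlg L) (h0 : ∑ i ∈ s, fexp (a i) * f i = 0) :
    ∀ i ∈ s, f i = 0 := by
  classical
  intro i hi
  let coset : ι → Set K := fun j => (a j + ·) '' (L : Set K)
  have hdisj : Disjoint (coset i) (⋃ j ∈ s.erase i, coset j) := by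
    simp only [Set.disjoint_left, Set.mem_iUnion, coset]
    rintro _ ⟨u, hu, rfl⟩ ⟨j, hj, v, hv, huv⟩
    refine Finset.ne_of_mem_erase hj (ha ?_)
    rw [show a j - a i = u - v by linear_combination huv]
    exact sub_mem hu hv
  have hrest : fexp (a i) * f i = -∑ j ∈ s.erase i, fexp (a j) * f j := by
    rw [← Finset.add_sum_erase s _ hi] at h0
    exact eq_neg_of_add_eq_zero_left h0
  have hzero : fexp (a i) * f i = 0 := by
    refine Submodule.disjoint_def.1 (linearIndependent_fexp.disjoint_span_image hdisj) _
      (fexp_mul_mem_span (hf i hi) _) ?_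
    rw [hrest]
    refine neg_mem (sum_mem fun j hj => ?_)
    refine Submodule.span_mono (Set.image_mono ?_)
      (fexp_mul_mem_span (hf j (Finset.mem_of_mem_erase hj)) _)
    exact Set.subset_biUnion_of_mem (u := coset) hj
  exact (mul_eq_zero.1 hzero).resolve_left (fexp_ne_zero _)

/-- The power series that are fractions of exponential sums with exponents in `L`. -/
noncomputable def expFrac (L : AddSubgroup K) : Subalgebra K K⟦X⟧ where
  carrier := {f | ∃ D ∈ expAlg L, D ≠ 0 ∧ D * f ∈ expAlg L}
  mul_mem' := by
    rintro f g ⟨D, hD, hD0, hf⟩ ⟨E, hE, hE0, hg⟩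
    refine ⟨D * E, mul_mem hD hE, mul_ne_zero hD0 hE0, ?_⟩
    rw [mul_mul_mul_comm]
    exact mul_mem hf hg
  add_mem' := by
    rintro f g ⟨D, hD, hD0, hf⟩ ⟨E, hE, hE0, hg⟩
    refine ⟨D * E, mul_mem hD hE, mul_ne_zero hD0 hE0, ?_⟩
    rw [show D * E * (f + g) = E * (D * f) + D * (E * g) by ring]
    exact add_mem (mul_mem hE hf) (mul_mem hD hg)
  algebraMap_mem' r := ⟨1, one_mem _, one_ne_zero, by rw [one_mul]; exact algebraMap_mem _ r⟩

lemma expAlg_le_expFrac (L : AddSubgroup K) : expAlg L ≤ expFrac L := fun f hf =>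
  ⟨1, one_mem _, one_ne_zero, by rwa [one_mul]⟩

lemma expFrac_mono {L L' : AddSubgroup K} (h : L ≤ L') : expFrac L ≤ expFrac L' := by
  rintro f ⟨D, hD, hD0, hf⟩
  exact ⟨D, expAlg_mono h hD, hD0, expAlg_mono h hf⟩

lemma fexp_mem_expFrac {L : AddSubgroup K} {a : K} (ha : a ∈ L) : fexp a ∈ expFrac L :=
  expAlg_le_expFrac L (fexp_mem_expAlg ha)

lemma mem_expFrac_of_mul_mem {L : AddSubgroup K} {r f : K⟦X⟧} (hr : r ∈ expAlg L) (hr0 : r ≠ 0)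
    (hf : r * f ∈ expFrac L) : f ∈ expFrac L := by
  obtain ⟨D, hD, hD0, hf⟩ := hf
  exact ⟨D * r, mul_mem hD hr, mul_ne_zero hD0 hr0, by rwa [mul_assoc]⟩

lemma eq_zero_of_sum_fexp_mul {L : AddSubgroup K} {ι : Type*} {a : ι → K}
    (ha : ∀ ⦃i j⦄, a i - a j ∈ L → i = j) {s : Finset ι} {f : ι → K⟦X⟧}
    (hf : ∀ i ∈ s, f i ∈ expFrac L) (h0 : ∑ i ∈ s, fexp (a i) * f i = 0) :
    ∀ i ∈ s, f i = 0 := by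
  classical
  choose! D hD hD0 hDf using hf
  have hden : ∏ j ∈ s, D j ≠ 0 := Finset.prod_ne_zero_iff.2 hD0
  have hmem : ∀ i ∈ s, (∏ j ∈ s, D j) * f i ∈ expAlg L := fun i hi => by
    rw [← Finset.prod_erase_mul s _ hi, mul_assoc]
    exact mul_mem (prod_mem fun j hj => hD j (Finset.mem_of_mem_erase hj)) (hDf i hi)
  have hzero := eq_zero_of_sum_fexp_mul_expAlg ha hmem (by
    simp_rw [mul_left_comm _ (∏ j ∈ s, D j)]
    rw [← Finset.mul_sum, h0, mul_zero])
  exact fun i hi => (mul_eq_zero.1 (hzero i hi)).resolve_left hden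

lemma eq_of_sum_fexp_mul_add_sum_one_sub_fexp_mul {L : AddSubgroup K} {ι : Type*} {a : ι → K}
    (ha : ∀ ⦃i j⦄, a i - a j ∈ L → i = j) {s : Finset ι} {i₀ : ι} (hi₀ : i₀ ∈ s)
    (ha₀ : a i₀ = 0) {f g : ι → K⟦X⟧} (hf : ∀ i, f i ∈ expFrac L) (hg : ∀ i, g i ∈ expFrac L)
    (h0 : ∑ i ∈ s, fexp (a i) * f i + ∑ i ∈ s, (1 - fexp (a i)) * g i = 0) :
    ∀ i ∈ s, i ≠ i₀ → f i = g i := by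
  classical
  have hcoeff := eq_zero_of_sum_fexp_mul ha (s := s)
    (f := fun i => f i - g i + if i = i₀ then ∑ j ∈ s, g j else 0) (fun i _ => by
      refine add_mem (sub_mem (hf i) (hg i)) ?_
      split_ifs
      · exact sum_mem fun j _ => hg j
      · exact zero_mem _) (by
      simp only [mul_add, mul_sub, Finset.sum_add_distrib, Finset.sum_sub_distrib, mul_ite,
        mul_zero, Finset.sum_ite_eq', hi₀, if_true, sub_mul, one_mul, ha₀, fexp_zero] at h0 ⊢
      linear_combination h0)
  intro i hi h
  simpa [h, sub_eq_zero] using hcoeff i hi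

end FormalExponential

/-! ### Roots of upper triangular matrices -/

/-- The matrix `A` vanishes strictly below its `d`-th superdiagonal; for `d = 0` this says that
`A` is upper triangular. -/
def Above {R : Type*} [Zero R] {n : ℕ} (d : ℕ) (A : Matrix (Fin n) (Fin n) R) : Prop :=
  ∀ i j : Fin n, (j : ℕ) < i + d → A i j = 0

namespace Above

variable {R : Type*} [CommRing R] {n : ℕ} {a b : ℕ} {A B : Matrix (Fin n) (Fin n) R}

protected lemma mul (hA : Above a A) (hB : Above b B) : Above (a + b) (A * B) := by
  intro i j hij
  rw [Matrix.mul_apply]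
  refine Finset.sum_eq_zero fun k _ => ?_
  by_cases h : (k : ℕ) < i + a
  · rw [hA i k h, zero_mul]
  · rw [hB k j (by omega), mul_zero]

lemma mul_apply (hA : Above a A) (hB : Above b B) {i k j : Fin n} (hk : (k : ℕ) = i + a)
    (hj : (j : ℕ) = k + b) : (A * B) i j = A i k * B k j := by
  rw [Matrix.mul_apply]
  refine Finset.sum_eq_single k (fun l _ hl => ?_) (by simp)
  by_cases h : (l : ℕ) < i + a
  · rw [hA i l h, zero_mul]
  · have : (l : ℕ) ≠ k := fun h => hl (Fin.ext h)
    rw [hB l j (by omega), mul_zero]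

protected lemma add (hA : Above a A) (hB : Above a B) : Above a (A + B) := fun i j h => by
  rw [Matrix.add_apply, hA i j h, hB i j h, add_zero]

protected lemma sub (hA : Above a A) (hB : Above a B) : Above a (A - B) := fun i j h => by
  rw [Matrix.sub_apply, hA i j h, hB i j h, sub_zero]

lemma mono (hA : Above a A) (h : b ≤ a) : Above b A := fun i j hij => hA i j (by omega)

lemma diagonal (v : Fin n → R) : Above 0 (Matrix.diagonal v) := fun i j h => by
  rw [Matrix.diagonal_apply_ne]; rintro rfl; omega

protected lemma one : Above 0 (1 : Matrix (Fin n) (Fin n) R) := diagonal _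

lemma mul_apply_self (hA : Above 0 A) (hB : Above 0 B) (i : Fin n) :
    (A * B) i i = A i i * B i i := hA.mul_apply hB (by simp) (by simp)

lemma mul_apply_castSucc_succ {A B : Matrix (Fin (n + 1)) (Fin (n + 1)) R} (hA : Above 0 A)
    (hB : Above 0 B) (i : Fin n) : (A * B) i.castSucc i.succ =
      A i.castSucc i.castSucc * B i.castSucc i.succ + A i.castSucc i.succ * B i.succ i.succ := by
  rw [Matrix.mul_apply, Finset.sum_eq_add_of_mem i.castSucc i.succ (Finset.mem_univ _)
    (Finset.mem_univ _) i.castSucc_lt_succ.ne]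
  rintro k - ⟨hk, hk'⟩
  rcases lt_or_ge k i.castSucc with h | h
  · rw [hA _ _ h, zero_mul]
  · have hne : (k : ℕ) ≠ i := fun h => hk (Fin.ext h)
    have hle : (i : ℕ) ≤ k := h
    have hne' : (k : ℕ) ≠ i + 1 := fun h => hk' (Fin.ext h)
    rw [hB k _ (by rw [Fin.val_succ]; omega), mul_zero]

protected lemma pow (hA : Above 0 A) (m : ℕ) : Above 0 (A ^ m) := by
  induction m with
  | zero => simpa using Above.one
  | succ k ih => rw [pow_succ]; exact ih.mul hA

lemma pow_apply_self (hA : Above 0 A) (m : ℕ) (i : Fin n) : (A ^ m) i i = A i i ^ m := by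
  induction m with
  | zero => simp
  | succ k ih => rw [pow_succ, (hA.pow k).mul_apply_self hA, ih, pow_succ]

lemma isUnit (hA : Above 0 A) (h : ∀ i, IsUnit (A i i)) : IsUnit A := by
  rw [Matrix.isUnit_iff_isUnit_det, Matrix.det_of_isUpperTriangular fun i j hij => hA i j hij]
  exact IsUnit.prod_univ_iff.2 h

lemma inv_unit {u : (Matrix (Fin n) (Fin n) R)ˣ} (hu : Above 0 u.val) : Above 0 u⁻¹.val := by
  have htri : Matrix.BlockTriangular u.val (id : Fin n → Fin n) := fun i j h => hu i j h
  have := Matrix.blockTriangular_inv_of_blockTriangular htri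
  intro i j hij
  rw [Matrix.coe_units_inv]
  exact this hij

/-- The matrix with diagonal `v` and superdiagonal `w`. -/
def bidiagonal (n : ℕ) (v w : ℕ → R) : Matrix (Fin n) (Fin n) R :=
  Matrix.of fun i j => if i = j then v i else if (j : ℕ) = i + 1 then w i else 0

lemma above_bidiagonal (v w : ℕ → R) : Above 0 (bidiagonal n v w) := fun i j h => by
  rw [bidiagonal, Matrix.of_apply, if_neg (by rintro rfl; omega), if_neg (by omega)]

lemma bidiagonal_apply_self (v w : ℕ → R) (i : Fin n) : bidiagonal n v w i i = v i := by
  simp [bidiagonal]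

lemma bidiagonal_apply_castSucc_succ (v w : ℕ → R) (i : Fin n) :
    bidiagonal (n + 1) v w i.castSucc i.succ = w i := by
  simp [bidiagonal, i.castSucc_lt_succ.ne]

lemma pow_add_sub_pow (hA : Above 0 A) {d : ℕ} (hd : 1 ≤ d) (hB : Above d B) (m : ℕ) :
    Above d ((A + B) ^ m - A ^ m) ∧ ∀ i j : Fin n, (j : ℕ) = i + d →
      ((A + B) ^ m - A ^ m) i j =
        (∑ s ∈ Finset.range m, A i i ^ s * A j j ^ (m - 1 - s)) * B i j := by
  induction m with
  | zero => simp [Above]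
  | succ m ih =>
    have hAB : Above 0 (A + B) := hA.add (hB.mono (Nat.zero_le _))
    have hsplit : (A + B) ^ (m + 1) - A ^ (m + 1) =
        ((A + B) ^ m - A ^ m) * (A + B) + A ^ m * B := by
      rw [pow_succ, pow_succ]; noncomm_ring
    rw [hsplit]
    refine ⟨(ih.1.mul hAB).add (zero_add d ▸ (hA.pow m).mul hB), fun i j hij => ?_⟩
    rw [Matrix.add_apply, ih.1.mul_apply hAB hij (by simp),
      (hA.pow m).mul_apply hB (k := i) (by simp) hij, ih.2 i j hij, hA.pow_apply_self,
      Matrix.add_apply, hB j j (by omega), add_zero, Nat.add_sub_cancel, geom_sum₂_succ_eq]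
    ring

lemma exists_pow_sub_above_succ (hA : Above 0 A) {M d : ℕ} (hd : 1 ≤ d)
    (hAB : Above d (A ^ M - B))
    (hu : ∀ i j, IsUnit (∑ s ∈ Finset.range M, A i i ^ s * A j j ^ (M - 1 - s))) :
    ∃ A' : Matrix (Fin n) (Fin n) R,
      Above 0 A' ∧ (∀ i, A' i i = A i i) ∧ Above (d + 1) (A' ^ M - B) := by
  let C : Matrix (Fin n) (Fin n) R := Matrix.of fun i j =>
    if (j : ℕ) = i + d then -((hu i j).unit⁻¹ : Rˣ) * (A ^ M - B) i j else 0
  have hC : Above d C := fun i j hij => if_neg (by omega)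
  obtain ⟨habove, hdiag⟩ := hA.pow_add_sub_pow hd hC M
  refine ⟨A + C, hA.add (hC.mono (Nat.zero_le _)), fun i => ?_, fun i j hij => ?_⟩
  · rw [Matrix.add_apply, hC i i (by omega), add_zero]
  rw [show (A + C) ^ M - B = ((A + C) ^ M - A ^ M) + (A ^ M - B) by abel]
  rcases Nat.lt_or_ge j (i + d) with h | h
  · exact habove.add hAB i j h
  · have hj : (j : ℕ) = i + d := by omega
    have hinv := (hu i j).mul_val_inv
    rw [Matrix.add_apply, hdiag i j hj]
    simp only [C, Matrix.of_apply, if_pos hj]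
    linear_combination (-(A ^ M - B) i j) * hinv

theorem exists_pow_eq (hB : Above 0 B) {M : ℕ} (v : Fin n → R) (hv : ∀ i, v i ^ M = B i i)
    (hu : ∀ i j, IsUnit (∑ s ∈ Finset.range M, v i ^ s * v j ^ (M - 1 - s))) :
    ∃ A : Matrix (Fin n) (Fin n) R, Above 0 A ∧ (∀ i, A i i = v i) ∧ A ^ M = B := by
  have happrox : ∀ d : ℕ, 1 ≤ d → ∃ A : Matrix (Fin n) (Fin n) R,
      Above 0 A ∧ (∀ i, A i i = v i) ∧ Above d (A ^ M - B) := by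
    intro d hd
    induction d, hd using Nat.le_induction with
    | base =>
      refine ⟨Matrix.diagonal v, diagonal v, fun i => by simp, fun i j hij => ?_⟩
      rcases Nat.lt_or_ge j i with h | h
      · exact ((diagonal v).pow M).sub hB i j (by omega)
      · obtain rfl : i = j := Fin.ext (by omega)
        rw [Matrix.sub_apply, (diagonal v).pow_apply_self, Matrix.diagonal_apply_eq, hv, sub_self]
    | succ d hd ih =>
      obtain ⟨A, hA, hAv, hAB⟩ := ih
      obtain ⟨A', hA', hdiag, hA'B⟩ :=
        hA.exists_pow_sub_above_succ hd hAB (by simpa only [hAv] using hu)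
      exact ⟨A', hA', fun i => (hdiag i).trans (hAv i), hA'B⟩
  obtain ⟨A, hA, hAv, hAB⟩ := happrox (n + 1) (by omega)
  refine ⟨A, hA, hAv, Matrix.ext fun i j => sub_eq_zero.1 ?_⟩
  rw [← Matrix.sub_apply]
  exact hAB i j (by omega)

end Above

/-! ### Towers of root adjunctions -/

/-- The subgroup generated by the first `k` terms of a sequence. -/
def stage {Γ : Type*} [Group Γ] (x : ℕ → Γ) (k : ℕ) : Subgroup Γ :=
  Subgroup.closure (x '' Set.Iio k)

section Stage

variable {Γ : Type*} [Group Γ] {x : ℕ → Γ} {j k : ℕ}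

lemma gen_mem_stage (h : j < k) : x j ∈ stage x k := Subgroup.subset_closure ⟨j, h, rfl⟩

lemma stage_mono (h : j ≤ k) : stage x j ≤ stage x k :=
  Subgroup.closure_mono (Set.image_mono (Set.Iio_subset_Iio h))

lemma stage_le_iff {H : Subgroup Γ} : stage x k ≤ H ↔ ∀ j < k, x j ∈ H := by
  simp [stage, Set.subset_def]

lemma stage_zero : stage x 0 = ⊥ := by simp [stage]

lemma stage_succ : stage x (k + 1) = Subgroup.closure (insert (x k) (stage x k : Set Γ)) := by
  refine le_antisymm (stage_le_iff.2 fun j hj => ?_) ((Subgroup.closure_le _).2 ?_)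
  · rcases Nat.lt_succ_iff_lt_or_eq.1 hj with h | rfl
    · exact Subgroup.subset_closure (Or.inr (gen_mem_stage h))
    · exact Subgroup.subset_closure (Or.inl rfl)
  · exact Set.insert_subset (gen_mem_stage k.lt_succ_self) (stage_mono k.le_succ)

end Stage

/-- The order of the `k`-th generator of a root tower modulo the earlier ones, with `0` standing
for infinite order. -/
def stageOrder (δ M k : ℕ) : ℕ := if k < δ then 0 else M

/-- The abstract properties of the base group `Γ` of the ascending HNN extension: `x k` for
`k < δ` are free to be sent anywhere in a group with `M`-th roots, later ones are `M`-th roots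
of words in the earlier ones, and `π` is the rationalised abelianisation. -/
structure IsRootTower {Γ V : Type*} [Group Γ] [AddCommGroup V] [Module ℚ V]
    (x : ℕ → Γ) (δ M : ℕ) (π : Γ → V) : Prop where
  isLog : IsLog π
  closure_range : Subgroup.closure (Set.range x) = ⊤
  pos : 0 < M
  pow_mem : ∀ k, δ ≤ k → x k ^ M ∈ stage x k
  exists_hom : ∀ (U : Type) [Group U], (∀ u : U, ∃ v, v ^ M = u) →
    ∀ f : ℕ → U, ∃ ρ : Γ →* U, ∀ j < δ, ρ (x j) = f j
  lattice : ∀ k, ∀ g ∈ stage x k, ∀ q : ℚ, π g = q • π (x k) →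
    ∃ j : ℤ, q = j * (stageOrder δ M k : ℚ)

lemma exists_linearMap_ker_eq {V : Type*} [AddCommGroup V] [Module ℚ V] [FiniteDimensional ℚ V]
    (W : Submodule ℚ V) : ∃ c : V →ₗ[ℚ] ℝ, LinearMap.ker c = W := by
  have hrank : Cardinal.lift.{0} (Module.rank ℚ (V ⧸ W)) ≤ Cardinal.lift (Module.rank ℚ ℝ) := by
    rw [Real.rank_rat_real, Cardinal.lift_continuum, Cardinal.lift_le_continuum]
    exact (Module.rank_lt_aleph0 ℚ _).le.trans Cardinal.aleph0_le_continuum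
  obtain ⟨f, hf⟩ := lift_rank_le_iff_exists_linearMap.1 hrank
  exact ⟨f ∘ₗ W.mkQ, by rw [LinearMap.ker_comp, LinearMap.ker_eq_bot.2 hf, ← LinearMap.ker,
    Submodule.ker_mkQ]⟩

/-! ### Triangular representations and twisted Fox derivatives -/

/-- Pairs consisting of an upper triangular matrix and a real number `ℓ` such that the diagonal
entries are `fexp (σ i * ℓ)`. Recording `ℓ` makes the `M`-th roots of such a matrix canonical on
the diagonal. -/
noncomputable def repGroup (n : ℕ) (σ : ℕ → ℝ) :
    Subgroup ((Matrix (Fin n) (Fin n) ℝ⟦X⟧)ˣ × Multiplicative ℝ) where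
  carrier := {u | Above 0 u.1.val ∧ ∀ i, u.1.val i i = fexp (σ i * u.2.toAdd)}
  one_mem' := ⟨Above.one, fun i => by simp⟩
  mul_mem' := by
    rintro a b ⟨ha, ha'⟩ ⟨hb, hb'⟩
    refine ⟨ha.mul hb, fun i => ?_⟩
    rw [Prod.fst_mul, Units.val_mul, ha.mul_apply_self hb, ha', hb', ← fexp_add, Prod.snd_mul,
      toAdd_mul, mul_add]
  inv_mem' := by
    rintro a ⟨ha, ha'⟩
    refine ⟨ha.inv_unit, fun i => ?_⟩
    have hmul := congrFun (congrFun a.1.mul_inv i) i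
    rw [ha.mul_apply_self ha.inv_unit, ha', Matrix.one_apply_eq] at hmul
    refine (left_inv_eq_right_inv ?_ hmul).symm
    rw [← fexp_add, ← mul_add, Prod.snd_inv, toAdd_inv, neg_add_cancel, mul_zero, fexp_zero]

lemma repGroup_exists_pow_eq {n : ℕ} {σ : ℕ → ℝ} {M : ℕ} (hM : 0 < M) (u : repGroup n σ) :
    ∃ v, v ^ M = u := by
  obtain ⟨⟨u, l⟩, hu, hu'⟩ := u
  have hM' : (M : ℝ) ≠ 0 := by positivity
  obtain ⟨A, hA, hAv, hAM⟩ := hu.exists_pow_eq (M := M) (fun i => fexp (σ i * (l.toAdd / M)))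
    (fun i => by rw [fexp_pow, hu', mul_left_comm, mul_div_cancel₀ _ hM'])
    (fun i j => by
      rw [isUnit_iff_constantCoeff, map_sum]
      simp [hM.ne'])
  have hAu : IsUnit A := (isUnit_pow_iff hM.ne').1 (hAM ▸ u.isUnit)
  refine ⟨⟨⟨hAu.unit, .ofAdd (l.toAdd / M)⟩, hA, hAv⟩, Subtype.ext (Prod.ext (Units.ext hAM) ?_)⟩
  refine Multiplicative.toAdd.injective (?_ : M • (l.toAdd / M) = l.toAdd)
  rw [nsmul_eq_mul, mul_div_cancel₀ _ hM']

/-- A triangular representation with diagonal characters `fexp (σ i * l g)` that sends each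
generator `x j`, `j < δ`, to a bidiagonal matrix supported in the rows `i` with `J i = j`. -/
structure IsFoxRep {Γ : Type*} [Group Γ] (x : ℕ → Γ) (δ : ℕ) (l : Γ → ℝ) {n : ℕ} (σ : ℕ → ℝ)
    (J : ℕ → ℕ) (ρ : Γ →* Matrix (Fin (n + 1)) (Fin (n + 1)) ℝ⟦X⟧) : Prop where
  above : ∀ g, Above 0 (ρ g)
  apply_self : ∀ g i, ρ g i i = fexp (σ i * l g)
  apply_gen : ∀ j < δ, ∀ i : Fin n, ρ (x j) i.castSucc i.succ =
    if j = J i then fexp (σ (i + 1) * l (x j)) else 0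

namespace IsRootTower

section Basic

variable {Γ V : Type*} [Group Γ] [AddCommGroup V] [Module ℚ V] {x : ℕ → Γ} {δ M : ℕ} {π : Γ → V}
  {l : Γ → ℝ}

lemma eq_top_of_root_mem (hT : IsRootTower x δ M π) {H : Subgroup Γ} (hx : ∀ j < δ, x j ∈ H)
    (hroot : ∀ y, y ^ M ∈ H → y ∈ H) : H = ⊤ := by
  rw [eq_top_iff, ← hT.closure_range, Subgroup.closure_le]
  rintro _ ⟨k, rfl⟩
  induction k using Nat.strong_induction_on with
  | _ k ih =>
    rcases lt_or_ge k δ with h | h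
    · exact hx k h
    · exact hroot _ (stage_le_iff.2 ih (hT.pow_mem k h))

lemma log_ext (hT : IsRootTower x δ M π) {l' : Γ → ℝ} (hl : IsLog l) (hl' : IsLog l')
    (heq : ∀ j < δ, l (x j) = l' (x j)) (g : Γ) : l g = l' g := by
  have hsub := hl.sub hl'
  have htop : hsub.toHom.ker = ⊤ := hT.eq_top_of_root_mem
    (fun j hj => sub_eq_zero.2 (heq j hj)) fun y hy => by
      rw [hsub.mem_ker_toHom, hsub.map_pow] at hy
      exact (smul_eq_zero.1 hy).resolve_left hT.pos.ne'
  have hg : g ∈ hsub.toHom.ker := htop ▸ Subgroup.mem_top g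
  exact sub_eq_zero.1 hg

lemma crossed_ext (hT : IsRootTower x δ M π) (hl : IsLog l) {φ φ' : Γ → ℝ⟦X⟧}
    (h : IsCrossed (expChar hl) φ) (h' : IsCrossed (expChar hl) φ')
    (heq : ∀ j < δ, φ (x j) = φ' (x j)) (g : Γ) : φ g = φ' g := by
  have hsub := h.sub h'
  have htop : hsub.ker = ⊤ := hT.eq_top_of_root_mem
    (fun j hj => sub_eq_zero.2 (heq j hj)) fun y hy => by
      rw [hsub.mem_ker, hsub.map_pow] at hy
      refine (mul_eq_zero.1 hy).resolve_left fun h0 => hT.pos.ne' ?_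
      simpa using congrArg constantCoeff h0
  have hg : g ∈ hsub.ker := htop ▸ Subgroup.mem_top g
  exact sub_eq_zero.1 hg

lemma exists_isFoxRep (hT : IsRootTower x δ M π) (hl : IsLog l) (n : ℕ) (σ : ℕ → ℝ)
    (J : ℕ → ℕ) :
    ∃ ρ : Γ →* Matrix (Fin (n + 1)) (Fin (n + 1)) ℝ⟦X⟧, IsFoxRep x δ l σ J ρ := by
  let A : ℕ → Matrix (Fin (n + 1)) (Fin (n + 1)) ℝ⟦X⟧ := fun j =>
    Above.bidiagonal _ (fun i => fexp (σ i * l (x j)))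
      (fun i => if j = J i then fexp (σ (i + 1) * l (x j)) else 0)
  have hA : ∀ j, Above 0 (A j) := fun j => Above.above_bidiagonal _ _
  have hA' : ∀ j i, A j i i = fexp (σ i * l (x j)) := fun j => Above.bidiagonal_apply_self _ _
  have hu : ∀ j, IsUnit (A j) := fun j => (hA j).isUnit fun i => hA' j i ▸ isUnit_fexp _
  obtain ⟨ρ, hρ⟩ := hT.exists_hom (repGroup (n + 1) σ) (repGroup_exists_pow_eq hT.pos)
    (fun j => ⟨⟨(hu j).unit, .ofAdd (l (x j))⟩, hA j, hA' j⟩)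
  have hlog : ∀ g, (ρ g).1.2.toAdd = l g := hT.log_ext (fun g h => by simp) hl
    fun j hj => by rw [hρ j hj, toAdd_ofAdd]
  refine ⟨(Units.coeHom _).comp ((MonoidHom.fst _ _).comp ((repGroup (n + 1) σ).subtype.comp ρ)),
    fun g => (ρ g).2.1, fun g i => hlog g ▸ (ρ g).2.2 i, fun j hj i => ?_⟩
  simp only [MonoidHom.comp_apply, hρ j hj]
  change A j _ _ = _
  exact Above.bidiagonal_apply_castSucc_succ _ _ i

lemma exists_crossed (hT : IsRootTower x δ M π) (hl : IsLog l) (j : ℕ) :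
    ∃ φ : Γ → ℝ⟦X⟧, IsCrossed (expChar hl) φ ∧ ∀ i < δ, φ (x i) = if i = j then 1 else 0 := by
  obtain ⟨ρ, hρ⟩ := hT.exists_isFoxRep hl 1 (fun i => if i = 0 then 1 else 0) (fun _ => j)
  have hdiag : ∀ g, ρ g 0 0 = fexp (l g) := fun g => by simpa using hρ.apply_self g 0
  have hdiag' : ∀ g, ρ g 1 1 = 1 := fun g => by simpa using hρ.apply_self g 1
  refine ⟨fun g => ρ g 0 1, fun g h => ?_, fun i hi => by simpa using hρ.apply_gen i hi 0⟩
  have hmul := (hρ.above g).mul_apply_castSucc_succ (hρ.above h) 0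
  rw [← map_mul] at hmul
  refine hmul.trans ?_
  change ρ g 0 0 * ρ h 0 1 + ρ g 0 1 * ρ h 1 1 = _
  rw [hdiag, hdiag', mul_one, expChar_apply, add_comm]

/-- The twisted Fox derivative with respect to `x j`, `j < δ`: the crossed homomorphism for the
character `exp (l X)` with value `1` at `x j` and `0` at the other `x i`, `i < δ`. -/
noncomputable def foxDeriv (hT : IsRootTower x δ M π) (hl : IsLog l) (j : ℕ) : Γ → ℝ⟦X⟧ :=
  (hT.exists_crossed hl j).choose

lemma isCrossed_foxDeriv (hT : IsRootTower x δ M π) (hl : IsLog l) (j : ℕ) :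
    IsCrossed (expChar hl) (hT.foxDeriv hl j) := (hT.exists_crossed hl j).choose_spec.1

lemma foxDeriv_gen (hT : IsRootTower x δ M π) (hl : IsLog l) (j : ℕ) {i : ℕ} (hi : i < δ) :
    hT.foxDeriv hl j (x i) = if i = j then 1 else 0 := (hT.exists_crossed hl j).choose_spec.2 i hi

lemma isFoxRep_apply_castSucc_succ (hT : IsRootTower x δ M π) (hl : IsLog l) {n : ℕ} {σ : ℕ → ℝ}
    {J : ℕ → ℕ} {ρ : Γ →* Matrix (Fin (n + 1)) (Fin (n + 1)) ℝ⟦X⟧} (hρ : IsFoxRep x δ l σ J ρ)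
    (i : Fin n) {g : Γ} (hg : l g = 0) :
    ρ g i.castSucc i.succ = rescale (σ i - σ (i + 1)) (hT.foxDeriv hl (J i) g) := by
  have heq := hT.crossed_ext (hl.const_mul (σ i - σ (i + 1)))
    (φ := fun g => ρ g i.castSucc i.succ * fexp (-(σ (i + 1) * l g)))
    (φ' := fun g => rescale (σ i - σ (i + 1)) (hT.foxDeriv hl (J i) g)) ?_ ?_ ?_ g
  · simpa [hg] using heq
  · intro g h
    have hsplit : fexp (-(σ (i + 1) * (l g + l h))) =
        fexp (-(σ (i + 1) * l g)) * fexp (-(σ (i + 1) * l h)) := by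
      rw [← fexp_add, mul_add, neg_add]
    have hratio : fexp ((σ i - σ (i + 1)) * l g) =
        fexp (σ i * l g) * fexp (-(σ (i + 1) * l g)) := by
      rw [← fexp_add, sub_mul, sub_eq_add_neg]
    simp only [map_mul, (hρ.above g).mul_apply_castSucc_succ (hρ.above h), hρ.apply_self,
      expChar_apply, hl g h, Fin.val_castSucc, Fin.val_succ, hsplit, hratio]
    linear_combination (ρ g i.castSucc i.succ * fexp (-(σ (i + 1) * l g))) *
      fexp_mul_fexp_neg (σ (i + 1) * l h)
  · intro g h
    simp only [hT.isCrossed_foxDeriv hl (J i) g h, map_add, map_mul, expChar_apply, rescale_fexp]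
  · intro j hj
    simp only [hρ.apply_gen j hj, hT.foxDeriv_gen hl _ hj]
    split_ifs
    · rw [fexp_mul_fexp_neg, map_one]
    · rw [zero_mul, map_zero]

lemma pi_gen_ne_zero (hT : IsRootTower x δ M π) (k : ℕ) : π (x k) ≠ 0 := by
  intro h
  obtain ⟨j, hj⟩ := hT.lattice k 1 (one_mem _) (1 / 2) (by rw [hT.isLog.map_one, h, smul_zero])
  have hone : (1 : ℤ) = 2 * (j * stageOrder δ M k) := by
    have : (1 : ℚ) = 2 * (j * stageOrder δ M k) := by linarith
    exact_mod_cast this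
  omega

lemma exists_foxDeriv_ne_zero [FiniteDimensional ℚ V] (hT : IsRootTower x δ M π) (hl : IsLog l)
    {g : Γ} (hg : π g ≠ 0) : ∃ j < δ, hT.foxDeriv hl j g ≠ 0 := by
  by_contra! h
  obtain ⟨c, hc⟩ := exists_linearMap_ker_eq (⊥ : Submodule ℚ V)
  have hsum := hT.log_ext (hT.isLog.comp c)
    (l' := fun g => ∑ j ∈ Finset.range δ, c (π (x j)) * constantCoeff (hT.foxDeriv hl j g))
    (fun a b => by
      simp only [hT.isCrossed_foxDeriv hl _ a b, map_add, map_mul, expChar_apply,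
        constantCoeff_fexp, one_mul, mul_add, Finset.sum_add_distrib])
    (fun i hi => by
      rw [Finset.sum_eq_single_of_mem i (Finset.mem_range.2 hi) fun j _ hj => by
        rw [hT.foxDeriv_gen hl j hi, if_neg hj.symm, map_zero, mul_zero]]
      simp [hT.foxDeriv_gen hl i hi]) g
  rw [Finset.sum_eq_zero fun j hj => by
    rw [h j (Finset.mem_range.1 hj), map_zero, mul_zero]] at hsum
  exact hg (LinearMap.ker_eq_bot.1 hc (hsum.trans (map_zero c).symm))

end Basic

end IsRootTower

/-! ### Independent generators of the kernel of a root tower -/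

lemma exists_linearMap_eq_of_closure_eq {Γ E W : Type*} [Group Γ] [AddCommGroup E] [Module ℝ E]
    [AddCommGroup W] [Module ℝ W] {P : Subgroup Γ} {F : Γ → E} {ψ : Γ → W}
    (hF : IsLog fun g : P => F g) (hψ : IsLog fun g : P => ψ g) {B : Set Γ}
    (hB : Subgroup.closure B = P) (hli : LinearIndepOn ℝ F B) :
    ∃ L : E →ₗ[ℝ] W, ∀ g ∈ P, L (F g) = ψ g := by
  have hli' : LinearIndependent ℝ fun b : B => F b := hli
  obtain ⟨L, hL⟩ := ((Module.Basis.span hli').constr ℝ fun b : B => ψ b).exists_extend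
  have hLB : ∀ b ∈ B, L (F b) = ψ b := fun b hb => by
    have hb' := LinearMap.congr_fun hL (Module.Basis.span hli' ⟨b, hb⟩)
    rwa [Module.Basis.constr_basis, LinearMap.comp_apply, Submodule.subtype_apply,
      Module.Basis.span_apply] at hb'
  have hdiff : IsLog fun g : P => L (F g) - ψ g := (hF.comp L.toAddMonoidHom).sub hψ
  have hle : Subgroup.closure B ≤ hdiff.toHom.ker.map P.subtype :=
    (Subgroup.closure_le _).2 fun b hb => ⟨⟨b, hB ▸ Subgroup.subset_closure hb⟩,
      hdiff.mem_ker_toHom.2 (sub_eq_zero.2 (hLB b hb)), rfl⟩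
  refine ⟨L, fun g hg => ?_⟩
  obtain ⟨g, hg', rfl⟩ := hle (hB.symm ▸ hg : g ∈ Subgroup.closure B)
  exact sub_eq_zero.1 (hdiff.mem_ker_toHom.1 hg')

/-- The representatives `0, …, N - 1` of the integers modulo `N`; all integers if `N = 0`. -/
def residues (N : ℕ) : Set ℤ := {i | i % N = i}

instance (N : ℕ) : Zero (residues N) := ⟨⟨0, Int.zero_emod _⟩⟩

lemma residues_coe_zero (N : ℕ) : ((0 : residues N) : ℤ) = 0 := rfl

/-- The generators of the kernel of a logarithm after adjoining `y`, built from generators `β` of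
the kernel before and from representatives `t` of the values of the logarithm modulo that
of `y ^ N`. -/
def newGen {Γ ι T : Type*} [Group Γ] {N : ℕ} (β : ι → Γ) (t : T → Γ) (y : Γ) :
    (residues N × ι) ⊕ (T × residues N) → Γ
  | .inl (i, b) => y ^ (i : ℤ) * β b * (y ^ (i : ℤ))⁻¹
  | .inr (τ, i) => ⁅t τ, y ^ (i : ℤ)⁆

lemma linearIndepOn_of_box {A ι T E : Type*} [AddCommGroup E] [Module ℝ E]
    (v : (A × ι) ⊕ (T × A) → E) (i₀ : A)
    (h : ∀ (s : Finset A) (sB : Finset ι) (sT : Finset T) (f : A → ι → ℝ) (g : T → A → ℝ),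
      i₀ ∈ s → (∀ τ, g τ i₀ = 0) →
      ∑ i ∈ s, ∑ b ∈ sB, f i b • v (.inl (i, b)) + ∑ i ∈ s, ∑ τ ∈ sT, g τ i • v (.inr (τ, i)) = 0 →
      (∀ i ∈ s, ∀ τ ∈ sT, g τ i = 0) ∧ ∀ i ∈ s, ∀ b ∈ sB, f i b = 0) :
    LinearIndepOn ℝ v {p | ∀ τ, p ≠ .inr (τ, i₀)} := by
  classical
  rw [linearIndepOn_iff]
  intro u hu hsum
  let I := u.support.toLeft
  let J := u.support.toRight
  let s := insert i₀ (I.image Prod.fst ∪ J.image Prod.snd)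
  have hI : ∀ i b, u (.inl (i, b)) ≠ 0 → i ∈ s ∧ b ∈ I.image Prod.snd := fun i b hne => by
    have hmem : (i, b) ∈ I := Finset.mem_toLeft.2 (Finsupp.mem_support_iff.2 hne)
    exact ⟨Finset.mem_insert_of_mem (Finset.mem_union_left _ (Finset.mem_image_of_mem _ hmem)),
      Finset.mem_image_of_mem _ hmem⟩
  have hJ : ∀ τ i, u (.inr (τ, i)) ≠ 0 → i ∈ s ∧ τ ∈ J.image Prod.fst := fun τ i hne => by
    have hmem : (τ, i) ∈ J := Finset.mem_toRight.2 (Finsupp.mem_support_iff.2 hne)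
    exact ⟨Finset.mem_insert_of_mem (Finset.mem_union_right _ (Finset.mem_image_of_mem _ hmem)),
      Finset.mem_image_of_mem _ hmem⟩
  have hsub : u.support ⊆
      (s ×ˢ I.image Prod.snd).disjSum (J.image Prod.fst ×ˢ s) := by
    rintro (⟨i, b⟩ | ⟨τ, i⟩) hp
    · exact Finset.inl_mem_disjSum.2 (Finset.mem_product.2 (hI i b (Finsupp.mem_support_iff.1 hp)))
    · exact Finset.inr_mem_disjSum.2
        (Finset.mem_product.2 (hJ τ i (Finsupp.mem_support_iff.1 hp)).symm)
  rw [Finsupp.linearCombination_apply, Finsupp.sum_of_support_subset _ hsub _ (by simp),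
    Finset.sum_disjSum, Finset.sum_product, Finset.sum_product_right] at hsum
  obtain ⟨hg, hf⟩ := h s _ _ (fun i b => u (.inl (i, b))) (fun τ i => u (.inr (τ, i)))
    (Finset.mem_insert_self _ _)
    (fun τ => not_not.1 fun hne => hu (Finsupp.mem_support_iff.2 hne) τ rfl) hsum
  ext (⟨i, b⟩ | ⟨τ, i⟩) <;> by_contra hne
  · exact hne (hf i (hI i b hne).1 b (hI i b hne).2)
  · exact hne (hg i (hJ τ i hne).1 τ (hJ τ i hne).2)

section NewGen

variable {Γ ι T : Type*} [Group Γ] {N : ℕ} {β : ι → Γ} {t : T → Γ} {y : Γ} {l : Γ → ℝ}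
  {hl : IsLog l} {φ : Γ → ℝ⟦X⟧}

lemma crossed_newGen_inl (hφ : IsCrossed (expChar hl) φ) (hβ : ∀ b, l (β b) = 0) (i : residues N)
    (b : ι) : φ (newGen β t y (.inl (i, b))) = fexp (i * l y) * φ (β b) := by
  rw [newGen, hφ.conj _ (by rw [expChar_apply, hβ, fexp_zero]), expChar_apply, hl.map_zpow,
    zsmul_eq_mul]

lemma one_sub_mul_crossed_newGen_inr (hφ : IsCrossed (expChar hl) φ) {q : Γ} (hq : Commute y q)
    (τ : T) (i : residues N) : (1 - fexp (l q)) * φ (newGen β t y (.inr (τ, i))) =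
      (1 - fexp (i * l y)) * φ ⁅t τ, q⁆ := by
  have hcomm := hφ.one_sub_mul_commutator (t τ) (hq.zpow_left i)
  rwa [expChar_apply, expChar_apply, hl.map_zpow, zsmul_eq_mul] at hcomm

lemma one_sub_mul_sum_eq_of_relation (hφ : IsCrossed (expChar hl) φ) (hβ : ∀ b, l (β b) = 0)
    {q : Γ} (hq : Commute y q) {L : AddSubgroup ℝ}
    (hsep : ∀ ⦃i j : residues N⦄, i * l y - j * l y ∈ L → i = j)
    (hβL : ∀ b, (1 - fexp (l q)) * φ (β b) ∈ expFrac L) (htL : ∀ τ, φ ⁅t τ, q⁆ ∈ expFrac L)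
    {s : Finset (residues N)} {sB : Finset ι} {sT : Finset T} {f : residues N → ι → ℝ}
    {g : T → residues N → ℝ} (hs : 0 ∈ s)
    (hrel : ∑ i ∈ s, ∑ b ∈ sB, f i b • φ (newGen β t y (.inl (i, b))) +
      ∑ i ∈ s, ∑ τ ∈ sT, g τ i • φ (newGen β t y (.inr (τ, i))) = 0)
    {i : residues N} (hi : i ∈ s) (hi0 : i ≠ 0) :
    ∑ b ∈ sB, f i b • ((1 - fexp (l q)) * φ (β b)) = ∑ τ ∈ sT, g τ i • φ ⁅t τ, q⁆ := by
  refine eq_of_sum_fexp_mul_add_sum_one_sub_fexp_mul hsep hs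
    (by rw [residues_coe_zero, Int.cast_zero, zero_mul])
    (f := fun i => ∑ b ∈ sB, f i b • ((1 - fexp (l q)) * φ (β b)))
    (g := fun i => ∑ τ ∈ sT, g τ i • φ ⁅t τ, q⁆)
    (fun i => sum_mem fun b _ => Subalgebra.smul_mem _ (hβL b) _)
    (fun i => sum_mem fun τ _ => Subalgebra.smul_mem _ (htL τ) _) ?_ i hi hi0
  rw [← mul_zero (1 - fexp (l q)), ← hrel]
  simp only [mul_add, Finset.mul_sum, mul_smul_comm, one_sub_mul_crossed_newGen_inr hφ hq,
    crossed_newGen_inl hφ hβ, mul_left_comm (1 - fexp (l q))]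

end NewGen

section NormalForm

variable {Γ A : Type*} [Group Γ] [AddCommGroup A] {π : Γ → A} {P H : Subgroup Γ} {y : Γ} {N : ℕ}

lemma commutator_mem_of_conj_mem (hπ : IsLog π) {p τ w q : Γ} (hp : p ∈ P) (hτ : τ ∈ P)
    (hw : w ∈ P) (hpτ : π (p * w) = π τ) (hwq : Commute w q) (hτH : ⁅τ, q⁆ ∈ H)
    (hK : ∀ κ ∈ P, π κ = 0 → κ ∈ H ∧ q * κ * q⁻¹ ∈ H) : ⁅p, q⁆ ∈ H := by
  have hκ : p * w * τ⁻¹ ∈ P := mul_mem (mul_mem hp hw) (inv_mem hτ)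
  have hκ0 : π (p * w * τ⁻¹) = 0 := by rw [hπ, hpτ, hπ.map_inv, add_neg_cancel]
  have hpq : ⁅p, q⁆ = ⁅p * w * τ⁻¹ * τ, q⁆ := by
    rw [inv_mul_cancel_right, commutatorElement_mul_left_eq_conj_mul p w q,
      commutatorElement_eq_one_iff_commute.2 hwq, mul_one, mul_inv_cancel, one_mul]
  rw [hpq, commutatorElement_mul_left_eq_conj_mul, commutatorElement_def (p * w * τ⁻¹)]
  have hinv := hK _ (inv_mem hκ) (by rw [hπ.map_inv, hκ0, neg_zero])
  have hcalc : p * w * τ⁻¹ * ⁅τ, q⁆ * (p * w * τ⁻¹)⁻¹ *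
      (p * w * τ⁻¹ * q * (p * w * τ⁻¹)⁻¹ * q⁻¹) =
      p * w * τ⁻¹ * ⁅τ, q⁆ * (q * (p * w * τ⁻¹)⁻¹ * q⁻¹) := by group
  rw [hcalc]
  exact mul_mem (mul_mem (hK _ hκ hκ0).1 hτH) hinv.2

lemma commutator_zpow_mem (hπ : IsLog π) (hw : y ^ N ∈ P) {p : Γ} (hp : p ∈ P)
    (hK : ∀ κ ∈ P, π κ = 0 → ∀ r ∈ residues N, y ^ r * κ * (y ^ r)⁻¹ ∈ H)
    (hpH : ∀ r ∈ residues N, ⁅p, y ^ r⁆ ∈ H) (i : ℤ) : ⁅p, y ^ i⁆ ∈ H := by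
  have hr : i % N ∈ residues N := Int.emod_emod ..
  have hω : (y ^ N) ^ (i / N) ∈ P := zpow_mem hw _
  have hsplit : y ^ i = y ^ (i % N) * (y ^ N) ^ (i / N) := by
    rw [← zpow_natCast y N, ← zpow_mul, ← zpow_add, Int.emod_add_mul_ediv]
  rw [hsplit, commutatorElement_mul_right_eq_mul_conj]
  have hmem : ⁅p, (y ^ N) ^ (i / N)⁆ ∈ P :=
    mul_mem (mul_mem (mul_mem hp hω) (inv_mem hp)) (inv_mem hω)
  simpa only [mul_assoc] using mul_mem (hpH _ hr) (hK _ hmem (hπ.map_commutator _ _) _ hr)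

lemma exists_eq_mul_zpow_mul (hcomm : ∀ p ∈ P, ∀ i : ℤ, ⁅p, y ^ i⁆ ∈ H) {g : Γ}
    (hg : g ∈ Subgroup.closure (insert y (P : Set Γ))) :
    ∃ h ∈ H, ∃ i : ℤ, ∃ p ∈ P, g = h * y ^ i * p := by
  have hstep : ∀ h ∈ H, ∀ i : ℤ, ∀ p ∈ P, ∀ ε : ℤ, ∃ h' ∈ H, h * y ^ i * p * y ^ ε =
      h' * y ^ (i + ε) * p := fun h hh i p hp ε => by
    refine ⟨h * (⁅p, y ^ i⁆⁻¹ * ⁅p, y ^ (i + ε)⁆),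
      mul_mem hh (mul_mem (inv_mem (hcomm p hp i)) (hcomm p hp _)), ?_⟩
    rw [commutatorElement_def, commutatorElement_def]
    group
  induction hg using Subgroup.closure_induction_right with
  | one => exact ⟨1, one_mem _, 0, 1, one_mem _, by simp⟩
  | mul_right g _ a ha ih =>
    obtain ⟨h, hh, i, p, hp, rfl⟩ := ih
    rcases ha with rfl | ha
    · obtain ⟨h', hh', heq⟩ := hstep h hh i p hp 1
      exact ⟨h', hh', _, p, hp, by rw [← heq, zpow_one]⟩
    · exact ⟨h, hh, i, p * a, mul_mem hp ha, by simp only [mul_assoc]⟩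
  | mul_inv_cancel g _ a ha ih =>
    obtain ⟨h, hh, i, p, hp, rfl⟩ := ih
    rcases ha with rfl | ha
    · obtain ⟨h', hh', heq⟩ := hstep h hh i p hp (-1)
      exact ⟨h', hh', _, p, hp, by rw [← heq, zpow_neg_one]⟩
    · exact ⟨h, hh, i, p * a⁻¹, mul_mem hp (inv_mem ha), by simp only [mul_assoc]⟩

lemma mem_of_mem_closure_insert (hπ : IsLog π) (hw : y ^ N ∈ P)
    (hK : ∀ κ ∈ P, π κ = 0 → ∀ r ∈ residues N, y ^ r * κ * (y ^ r)⁻¹ ∈ H)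
    (hT : ∀ p ∈ P, ∃ j : ℤ, ∃ τ ∈ P, π (p * (y ^ N) ^ j) = π τ ∧
      ∀ r ∈ residues N, ⁅τ, y ^ r⁆ ∈ H)
    (hlat : ∀ p ∈ P, ∀ i : ℤ, π p = i • π y → (N : ℤ) ∣ i) (hH : ∀ h ∈ H, π h = 0) {g : Γ}
    (hg : g ∈ Subgroup.closure (insert y (P : Set Γ))) (hg0 : π g = 0) : g ∈ H := by
  have hKH : ∀ κ ∈ P, π κ = 0 → κ ∈ H := fun κ hκ h0 => by
    simpa using hK κ hκ h0 0 (Int.zero_emod _)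
  have hres : ∀ p ∈ P, ∀ r ∈ residues N, ⁅p, y ^ r⁆ ∈ H := fun p hp r hr => by
    obtain ⟨j, τ, hτ, hpτ, hτH⟩ := hT p hp
    have hcomm : Commute ((y ^ N) ^ j) (y ^ r) :=
      (((Commute.refl y).pow_left N).zpow_left j).zpow_right r
    exact commutator_mem_of_conj_mem hπ hp hτ (zpow_mem hw j) hpτ hcomm (hτH r hr)
      fun κ hκ h0 => ⟨hKH κ hκ h0, hK κ hκ h0 r hr⟩
  obtain ⟨h, hh, i, p, hp, rfl⟩ :=
    exists_eq_mul_zpow_mul (fun p hp => commutator_zpow_mem hπ hw hp hK (hres p hp)) hg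
  rw [hπ, hπ, hH h hh, zero_add, hπ.map_zpow] at hg0
  obtain ⟨j, hj⟩ := hlat p hp (-i) (by rw [neg_smul]; exact eq_neg_of_add_eq_zero_right hg0)
  have hi : y ^ i = (y ^ N) ^ (-j) := by
    rw [← zpow_natCast y N, ← zpow_mul]; congr 1; linarith
  rw [mul_assoc]
  refine mul_mem hh (hKH _ ?_ (by rw [hπ, hπ.map_zpow, hg0]))
  rw [hi]
  exact mul_mem (zpow_mem hw _) hp

end NormalForm

lemma eq_zero_of_sum_smul_one_sub_fexp {Γ : Type*} {l : Γ → ℝ} {T : Set Γ} (hinj : T.InjOn l)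
    (hT0 : ∀ τ ∈ T, l τ ≠ 0) {s : Finset T} {d : T → ℝ}
    (h : ∑ τ ∈ s, d τ • (1 - fexp (l τ)) = 0) : ∀ τ ∈ s, d τ = 0 :=
  linearIndependent_iff'.1 (linearIndependent_one_sub_fexp.comp
    (fun τ : T => (⟨l τ, hT0 τ τ.2⟩ : {a : ℝ // a ≠ 0}))
    fun σ τ hστ => Subtype.ext (hinj σ.2 τ.2 (congrArg Subtype.val hστ))) s d h

lemma exists_transversal {Γ A : Type*} [Zero A] (f : Γ → A) (P : Set Γ) :
    ∃ T ⊆ P, T.InjOn f ∧ (∀ τ ∈ T, f τ ≠ 0) ∧ ∀ p ∈ P, f p ≠ 0 → ∃ τ ∈ T, f τ = f p := by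
  obtain ⟨T, hTP, hbij⟩ := Set.SurjOn.exists_bijOn_subset (f := f) (s := P) (t := f '' P \ {0})
    fun _ h => h.1
  exact ⟨T, hTP, hbij.injOn, fun τ hτ => (hbij.mapsTo hτ).2,
    fun p hp h => hbij.surjOn ⟨⟨p, hp, rfl⟩, h⟩⟩

namespace IsRootTower

section Kernel

variable {Γ V : Type*} [Group Γ] [AddCommGroup V] [Module ℚ V] {x : ℕ → Γ} {δ M k : ℕ}
  {π : Γ → V} {l l' : Γ → ℝ}

lemma stageOrder_dvd (hT : IsRootTower x δ M π) {g : Γ} (hg : g ∈ stage x k) {i : ℤ}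
    (h : π g = i • π (x k)) : (stageOrder δ M k : ℤ) ∣ i := by
  obtain ⟨j, hj⟩ := hT.lattice k g hg i (by rw [h, Int.cast_smul_eq_zsmul])
  exact ⟨j, by rw [mul_comm]; exact_mod_cast hj⟩

lemma pow_stageOrder_mem (hT : IsRootTower x δ M π) (k : ℕ) :
    x k ^ stageOrder δ M k ∈ stage x k := by
  rw [stageOrder]
  split_ifs with hk
  · exact (pow_zero (x k)).symm ▸ one_mem _
  · exact hT.pow_mem k (not_lt.1 hk)

lemma residue_ext (hT : IsRootTower x δ M π) (hl : IsLog l) (hlπ : ∀ g, l g = 0 ↔ π g = 0)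
    {i j : residues (stageOrder δ M k)}
    (h : (i : ℤ) * l (x k) - (j : ℤ) * l (x k) ∈ hl.image (stage x k)) : i = j := by
  obtain ⟨g, hg, hgl⟩ := h
  have hπ : π (g * x k ^ ((j : ℤ) - i)) = 0 := (hlπ _).1 (by
    rw [hl, hl.map_zpow, zsmul_eq_mul, hgl]
    push_cast
    ring)
  rw [hT.isLog, hT.isLog.map_zpow, add_eq_zero_iff_eq_neg, ← neg_smul, neg_sub] at hπ
  have hmod := (Int.modEq_iff_dvd.2 (hT.stageOrder_dvd hg hπ)).symm
  exact Subtype.ext (i.2.symm.trans (Eq.trans hmod j.2))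

lemma foxDeriv_mem_expFrac (hT : IsRootTower x δ M π) (hl : IsLog l)
    (hlπ : ∀ g, l g = 0 ↔ π g = 0) (j k : ℕ) :
    ∀ g ∈ stage x k, hT.foxDeriv hl j g ∈ expFrac (hl.image (stage x k)) := by
  induction k using Nat.strong_induction_on with
  | _ k ih =>
    have hφ := hT.isCrossed_foxDeriv hl j
    refine fun g hg => hφ.mem_of_mem_closure _
      (fun g hg => fexp_mem_expFrac (hl.mem_image_of_mem hg)) ?_ hg
    rintro _ ⟨i, hi, rfl⟩
    rcases lt_or_ge i δ with h | h
    · rw [hT.foxDeriv_gen hl j h]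
      split_ifs
      exacts [one_mem _, zero_mem _]
    · have hroot := hφ.one_sub_mul_comm ((Commute.refl (x i)).pow_left M)
      refine mem_expFrac_of_mul_mem (sub_mem (one_mem _) (fexp_mem_expAlg
        (hl.mem_image_of_mem (_root_.pow_mem (gen_mem_stage hi) M)))) (one_sub_fexp_ne_zero ?_)
        (hroot ▸ mul_mem (sub_mem (one_mem _) (fexp_mem_expFrac
          (hl.mem_image_of_mem (gen_mem_stage hi))))
          (expFrac_mono (hl.image_mono (stage_mono (le_of_lt hi))) (ih i hi _ (hT.pow_mem i h))))
      rw [hl.map_pow]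
      exact smul_ne_zero hT.pos.ne' fun h0 => hT.pi_gen_ne_zero i ((hlπ _).1 h0)

/-- The kernel of `π` on the `k`-th stage. -/
def kerStage (hT : IsRootTower x δ M π) (k : ℕ) : Subgroup Γ := stage x k ⊓ hT.isLog.toHom.ker

lemma mem_kerStage (hT : IsRootTower x δ M π) {g : Γ} :
    g ∈ hT.kerStage k ↔ g ∈ stage x k ∧ π g = 0 := Iff.rfl

lemma commutator_mem_kerStage (hT : IsRootTower x δ M π) {p q : Γ} (hp : p ∈ stage x k)
    (hq : q ∈ stage x k) : ⁅p, q⁆ ∈ hT.kerStage k := hT.mem_kerStage.2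
  ⟨mul_mem (mul_mem (mul_mem hp hq) (inv_mem hp)) (inv_mem hq), hT.isLog.map_commutator p q⟩

/-- The vector of all twisted Fox derivatives of an element. -/
noncomputable def foxVec (hT : IsRootTower x δ M π) (hl : IsLog l) (g : Γ) : Fin δ → ℝ⟦X⟧ :=
  fun j => hT.foxDeriv hl j g

lemma isLog_foxVec_kerStage (hT : IsRootTower x δ M π) (hl : IsLog l)
    (hlπ : ∀ g, π g = 0 → l g = 0) : IsLog fun g : hT.kerStage k => hT.foxVec hl g :=
  fun g h => funext fun _ => by
    simp [foxVec, hT.isCrossed_foxDeriv hl _ g h, hlπ g g.2.2]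

lemma foxDeriv_eq_zero_of_mem_stage (hT : IsRootTower x δ M π) (hl : IsLog l) (hk : k < δ) {g : Γ}
    (hg : g ∈ stage x k) : hT.foxDeriv hl k g = 0 :=
  (stage_le_iff (H := (hT.isCrossed_foxDeriv hl k).ker)).2
    (fun _ hj => (hT.foxDeriv_gen hl k (hj.trans hk)).trans (if_neg hj.ne)) hg

/-- The relation forces the coefficients of the commutators to vanish: mapping the vectors of
Fox derivatives with respect to `l` to Fox derivatives with respect to a logarithm `l'` that
kills `w`, only multiples of `1 - fexp (l' τ)` remain. -/
lemma eq_zero_of_commutator_relation [FiniteDimensional ℚ V] (hT : IsRootTower x δ M π)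
    (hl : IsLog l) (hlπ : ∀ g, π g = 0 → l g = 0) (hl' : IsLog l')
    (hl'π : ∀ g, π g = 0 → l' g = 0) {w : Γ} (hw : w ∈ stage x k) (hw0 : π w ≠ 0) (hl'w : l' w = 0)
    {B T : Set Γ} (hB : Subgroup.closure B = hT.kerStage k)
    (hli : LinearIndepOn ℝ (hT.foxVec hl) B) (hTk : T ⊆ stage x k) (hinj : T.InjOn l')
    (hT0 : ∀ τ ∈ T, l' τ ≠ 0) {sB : Finset B} {sT : Finset T} {f : B → ℝ} {g : T → ℝ}
    (hrel : ∑ b ∈ sB, f b • hT.foxVec hl ⁅(b : Γ), w⁆ =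
      ∑ τ ∈ sT, g τ • hT.foxVec hl ⁅(τ : Γ), w⁆) : ∀ τ ∈ sT, g τ = 0 := by
  obtain ⟨j, -, hj⟩ := hT.exists_foxDeriv_ne_zero hl' hw0
  have hψ := hT.isCrossed_foxDeriv hl' j
  obtain ⟨L, hL⟩ := exists_linearMap_eq_of_closure_eq (ψ := hT.foxDeriv hl' j)
    (hT.isLog_foxVec_kerStage hl hlπ) (fun p q => by simp [hψ p q, hl'π p p.2.2]) hB hli
  have hLcomm : ∀ p ∈ stage x k, L (hT.foxVec hl ⁅p, w⁆) =
      -((1 - fexp (l' p)) * hT.foxDeriv hl' j w) := fun p hp => by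
    rw [hL _ (hT.commutator_mem_kerStage hp hw), hψ.commutator, expChar_apply, expChar_apply,
      hl'w, fexp_zero, sub_self, zero_mul, zero_sub]
  have hBk : ∀ b ∈ B, b ∈ hT.kerStage k := fun b hb => hB ▸ Subgroup.subset_closure hb
  have hLrel := congrArg L hrel
  rw [map_sum, map_sum, Finset.sum_eq_zero fun b _ => by
    rw [map_smul, hLcomm b (hBk b b.2).1, hl'π b (hBk b b.2).2, fexp_zero, sub_self, zero_mul,
      neg_zero, smul_zero]] at hLrel
  refine eq_zero_of_sum_smul_one_sub_fexp hinj hT0 ((mul_eq_zero.1 ?_).resolve_right hj)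
  rw [Finset.sum_mul, ← neg_eq_zero, hLrel, ← Finset.sum_neg_distrib]
  exact Finset.sum_congr rfl fun τ _ => by
    rw [map_smul, hLcomm τ (hTk τ.2), smul_neg, smul_mul_assoc]

/-- The elements `newGen` for a generator `x k`; with `B` generating the kernel of `π` on the `k`-th
stage, they generate the kernel on the next one. -/
abbrev stageGen (x : ℕ → Γ) (δ M k : ℕ) (B T : Set Γ) :
    (residues (stageOrder δ M k) × B) ⊕ (T × residues (stageOrder δ M k)) → Γ :=
  newGen (↑) (↑) (x k)

section NewGen

variable {B T : Set Γ} {s : Finset (residues (stageOrder δ M k))} {sB : Finset B} {sT : Finset T}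
  {f : residues (stageOrder δ M k) → B → ℝ} {g : T → residues (stageOrder δ M k) → ℝ}
  {i : residues (stageOrder δ M k)}

lemma eq_zero_of_stageGen_relation_of_lt (hT : IsRootTower x δ M π) (hl : IsLog l)
    (hlπ : ∀ g, l g = 0 ↔ π g = 0) (hBk : ∀ b ∈ B, b ∈ hT.kerStage k) (hTk : T ⊆ stage x k)
    (hinj : T.InjOn l) (hT0 : ∀ τ ∈ T, l τ ≠ 0) (hk : k < δ) (hs : 0 ∈ s)
    (hrel : ∑ i ∈ s, ∑ b ∈ sB, f i b • hT.foxVec hl (stageGen x δ M k B T (.inl (i, b))) +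
      ∑ i ∈ s, ∑ τ ∈ sT, g τ i • hT.foxVec hl (stageGen x δ M k B T (.inr (τ, i))) = 0)
    (hi : i ∈ s) (hi0 : i ≠ 0) : ∀ τ ∈ sT, g τ i = 0 := by
  have hφ := hT.isCrossed_foxDeriv hl k
  have hcomm : ∀ τ : T, hT.foxDeriv hl k ⁅(τ : Γ), x k⁆ = -(1 - fexp (l τ)) := fun τ => by
    rw [hφ.commutator, hT.foxDeriv_eq_zero_of_mem_stage hl hk (hTk τ.2), hT.foxDeriv_gen hl k hk,
      if_pos rfl, mul_zero, mul_one, zero_sub, expChar_apply]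
  have hzero : ∀ b : B, hT.foxDeriv hl k b = 0 := fun b =>
    hT.foxDeriv_eq_zero_of_mem_stage hl hk (hBk b b.2).1
  have heq := one_sub_mul_sum_eq_of_relation hφ (fun b : B => (hlπ b).2 (hBk b b.2).2)
    (Commute.refl (x k)) (fun i j => hT.residue_ext hl hlπ)
    (fun b => by rw [hzero, mul_zero]; exact zero_mem _)
    (fun τ : T => hcomm τ ▸ neg_mem (sub_mem (one_mem _)
      (fexp_mem_expFrac (hl.mem_image_of_mem (hTk τ.2))))) hs
    (by simpa [foxVec] using congrFun hrel ⟨k, hk⟩) hi hi0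
  simp only [hzero, mul_zero, smul_zero, Finset.sum_const_zero, hcomm, smul_neg,
    Finset.sum_neg_distrib] at heq
  exact eq_zero_of_sum_smul_one_sub_fexp hinj hT0 (neg_eq_zero.1 heq.symm)

lemma eq_zero_of_stageGen_relation_of_ge [FiniteDimensional ℚ V] (hT : IsRootTower x δ M π)
    (hl : IsLog l) (hlπ : ∀ g, l g = 0 ↔ π g = 0) (hl' : IsLog l')
    (hl'π : ∀ g, π g = 0 → l' g = 0) (hl'w : l' (x k ^ stageOrder δ M k) = 0)
    (hB : Subgroup.closure B = hT.kerStage k) (hli : LinearIndepOn ℝ (hT.foxVec hl) B)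
    (hTk : T ⊆ stage x k) (hinj : T.InjOn l') (hT0 : ∀ τ ∈ T, l' τ ≠ 0) (hk : δ ≤ k) (hs : 0 ∈ s)
    (hrel : ∑ i ∈ s, ∑ b ∈ sB, f i b • hT.foxVec hl (stageGen x δ M k B T (.inl (i, b))) +
      ∑ i ∈ s, ∑ τ ∈ sT, g τ i • hT.foxVec hl (stageGen x δ M k B T (.inr (τ, i))) = 0)
    (hi : i ∈ s) (hi0 : i ≠ 0) : ∀ τ ∈ sT, g τ i = 0 := by
  have hBk : ∀ b ∈ B, b ∈ hT.kerStage k := fun b hb => hB ▸ Subgroup.subset_closure hb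
  have hw := hT.pow_stageOrder_mem k
  have hw0 : π (x k ^ stageOrder δ M k) ≠ 0 := by
    rw [hT.isLog.map_pow, stageOrder, if_neg (not_lt.2 hk), ← Nat.cast_smul_eq_nsmul ℚ]
    exact smul_ne_zero (Nat.cast_ne_zero.2 hT.pos.ne') (hT.pi_gen_ne_zero k)
  have hmem : ∀ (j : ℕ), ∀ p ∈ stage x k, hT.foxDeriv hl j p ∈ expFrac (hl.image (stage x k)) :=
    fun j => hT.foxDeriv_mem_expFrac hl hlπ j k
  have hβl : ∀ b : B, l b = 0 := fun b => (hlπ b).2 (hBk b b.2).2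
  refine hT.eq_zero_of_commutator_relation hl (fun g => (hlπ g).2) hl' hl'π hw hw0 hl'w hB hli hTk
    hinj hT0 (f := f i) (sB := sB) (funext fun j => ?_)
  have hφ := hT.isCrossed_foxDeriv hl j
  have heq := one_sub_mul_sum_eq_of_relation hφ hβl ((Commute.refl (x k)).pow_right _)
    (fun i j => hT.residue_ext hl hlπ)
    (fun b => mul_mem (sub_mem (one_mem _) (fexp_mem_expFrac (hl.mem_image_of_mem hw)))
      (hmem j b (hBk b b.2).1))
    (fun τ : T => hmem j _ (hT.commutator_mem_kerStage (hTk τ.2) hw).1) hs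
    (by simpa [foxVec] using congrFun hrel j) hi hi0
  simpa [foxVec, hφ.commutator (_ : B), hβl] using heq

lemma linearIndepOn_stageGen [FiniteDimensional ℚ V] (hT : IsRootTower x δ M π)
    (hl : IsLog l) (hlπ : ∀ g, l g = 0 ↔ π g = 0) (hl' : IsLog l')
    (hl'π : ∀ g, π g = 0 → l' g = 0) (hl'w : l' (x k ^ stageOrder δ M k) = 0)
    (hB : Subgroup.closure B = hT.kerStage k) (hli : LinearIndepOn ℝ (hT.foxVec hl) B)
    (hTk : T ⊆ stage x k) (hinj : T.InjOn l') (hT0 : ∀ τ ∈ T, l' τ ≠ 0) :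
    LinearIndepOn ℝ (fun p => hT.foxVec hl (stageGen x δ M k B T p))
      {p | ∀ τ, p ≠ .inr (τ, 0)} := by
  have hBk : ∀ b ∈ B, b ∈ hT.kerStage k := fun b hb => hB ▸ Subgroup.subset_closure hb
  have hl'l : ∀ g, l g = 0 → l' g = 0 := fun g hg => hl'π g ((hlπ g).1 hg)
  have hinj' : T.InjOn l := fun p hp q hq hpq => hinj hp hq (by
    have h0 := hl'l (p * q⁻¹) (by rw [hl, hl.map_inv, hpq, add_neg_cancel])
    rwa [hl', hl'.map_inv, add_neg_eq_zero] at h0)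
  refine linearIndepOn_of_box _ 0 fun s sB sT f g hs hg0 hrel => ?_
  have hg : ∀ i ∈ s, ∀ τ ∈ sT, g τ i = 0 := fun i hi => by
    rcases eq_or_ne i 0 with rfl | hi0
    · exact fun τ _ => hg0 τ
    rcases lt_or_ge k δ with hk | hk
    · exact hT.eq_zero_of_stageGen_relation_of_lt hl hlπ hBk hTk hinj'
        (fun τ hτ h0 => hT0 τ hτ (hl'l τ h0)) hk hs hrel hi hi0
    · exact hT.eq_zero_of_stageGen_relation_of_ge hl hlπ hl' hl'π hl'w hB hli hTk hinj hT0 hk hs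
        hrel hi hi0
  refine ⟨hg, fun i hi => linearIndependent_iff'.1 hli sB (f i) (funext fun j => ?_)⟩
  rw [Finset.sum_eq_zero (s := s) (f := fun i => ∑ τ ∈ sT, g τ i • _) fun i hi =>
    Finset.sum_eq_zero fun τ hτ => by rw [hg i hi τ hτ, zero_smul], add_zero] at hrel
  have hφ := hT.isCrossed_foxDeriv hl j
  have hzero := eq_zero_of_sum_fexp_mul (fun i j => hT.residue_ext hl hlπ)
    (f := fun i => ∑ b ∈ sB, f i b • hT.foxDeriv hl j b)
    (fun i _ => sum_mem fun b _ => Subalgebra.smul_mem _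
      (hT.foxDeriv_mem_expFrac hl hlπ j k b (hBk b b.2).1) _) (by
    simpa [foxVec, Finset.mul_sum,
      crossed_newGen_inl hφ fun b : B => (hlπ b).2 (hBk b b.2).2] using congrFun hrel j)
  simpa [foxVec] using hzero i hi

end NewGen

lemma exists_pi_mul_zpow_eq (hT : IsRootTower x δ M π) {p τ : Γ} (hp : p ∈ stage x k)
    (hτ : τ ∈ stage x k) (h : π p - π τ ∈ Submodule.span ℚ {π (x k ^ stageOrder δ M k)}) :
    ∃ j : ℤ, π (p * (x k ^ stageOrder δ M k) ^ j) = π τ := by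
  obtain ⟨q, hq⟩ := Submodule.mem_span_singleton.1 h
  rw [hT.isLog.map_pow, ← Nat.cast_smul_eq_nsmul ℚ, smul_smul] at hq
  obtain ⟨j, hj⟩ := hT.lattice k (p * τ⁻¹) (mul_mem hp (inv_mem hτ)) _ (by
    rw [hT.isLog, hT.isLog.map_inv, ← sub_eq_add_neg, hq])
  refine ⟨-j, ?_⟩
  rw [hT.isLog, hT.isLog.map_zpow, neg_smul, ← sub_eq_add_neg, sub_eq_iff_eq_add',
    ← sub_eq_iff_eq_add, ← hq, hj, hT.isLog.map_pow, ← Nat.cast_smul_eq_nsmul ℚ,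
    ← Int.cast_smul_eq_zsmul ℚ, smul_smul]

lemma stageGen_mem_kerStage (hT : IsRootTower x δ M π) {B T : Set Γ}
    (hBk : ∀ b ∈ B, b ∈ hT.kerStage k) (hTk : T ⊆ stage x k)
    (p : (residues (stageOrder δ M k) × B) ⊕ (T × residues (stageOrder δ M k))) :
    stageGen x δ M k B T p ∈ hT.kerStage (k + 1) := by
  have hmono : stage x k ≤ stage x (k + 1) := stage_mono k.le_succ
  have hy : x k ∈ stage x (k + 1) := gen_mem_stage k.lt_succ_self
  rcases p with ⟨i, b⟩ | ⟨τ, i⟩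
  · refine hT.mem_kerStage.2 ⟨mul_mem (mul_mem (zpow_mem hy i) (hmono (hBk b b.2).1))
      (inv_mem (zpow_mem hy i)), ?_⟩
    exact (hT.isLog.map_conj _ _).trans (hBk b b.2).2
  · exact hT.commutator_mem_kerStage (hmono (hTk τ.2)) (zpow_mem hy i)

lemma closure_stageGen_eq_kerStage (hT : IsRootTower x δ M π) (hl' : IsLog l')
    (hl'π : ∀ g, l' g = 0 ↔ π g ∈ Submodule.span ℚ {π (x k ^ stageOrder δ M k)})
    {B T : Set Γ} (hB : Subgroup.closure B = hT.kerStage k) (hTk : T ⊆ stage x k)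
    (hTsurj : ∀ p ∈ stage x k, l' p ≠ 0 → ∃ τ ∈ T, l' τ = l' p) :
    Subgroup.closure (stageGen x δ M k B T '' {p | ∀ τ, p ≠ .inr (τ, 0)}) =
      hT.kerStage (k + 1) := by
  set H := Subgroup.closure (stageGen x δ M k B T '' {p | ∀ τ, p ≠ .inr (τ, 0)})
  have hBk : ∀ b ∈ B, b ∈ hT.kerStage k := fun b hb => hB ▸ Subgroup.subset_closure hb
  have hle : H ≤ hT.kerStage (k + 1) := (Subgroup.closure_le _).2 <| by
    rintro _ ⟨p, -, rfl⟩
    exact hT.stageGen_mem_kerStage hBk hTk p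
  have hconj : ∀ κ ∈ stage x k, π κ = 0 → ∀ r ∈ residues (stageOrder δ M k),
      x k ^ r * κ * (x k ^ r)⁻¹ ∈ H := fun κ hκ h0 r hr => by
    have hsub : hT.kerStage k ≤ H.comap (MulAut.conj (x k ^ r)).toMonoidHom :=
      hB ▸ (Subgroup.closure_le _).2 fun b hb =>
        Subgroup.subset_closure ⟨.inl (⟨r, hr⟩, ⟨b, hb⟩), by simp, rfl⟩
    exact hsub ⟨hκ, h0⟩
  have hcomm : ∀ τ ∈ T, ∀ r ∈ residues (stageOrder δ M k), ⁅τ, x k ^ r⁆ ∈ H := fun τ hτ r hr => by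
    by_cases hr0 : r = 0
    · rw [hr0, zpow_zero, commutatorElement_one_right]
      exact one_mem H
    · exact Subgroup.subset_closure ⟨.inr (⟨τ, hτ⟩, ⟨r, hr⟩),
        fun σ h => hr0 (congrArg Subtype.val (Prod.mk.inj (Sum.inr.inj h)).2), rfl⟩
  refine le_antisymm hle fun g hg => ?_
  refine mem_of_mem_closure_insert hT.isLog (hT.pow_stageOrder_mem k) hconj ?_
    (fun p hp i => hT.stageOrder_dvd hp) (fun h hh => (hle hh).2) (stage_succ.le hg.1) hg.2
  intro p hp
  obtain ⟨τ, hτ, hpτ, hτH⟩ : ∃ τ ∈ stage x k, l' τ = l' p ∧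
      ∀ r ∈ residues (stageOrder δ M k), ⁅τ, x k ^ r⁆ ∈ H := by
    by_cases h0 : l' p = 0
    · exact ⟨1, one_mem _, by rw [hl'.map_one, h0], fun r _ => by
        rw [commutatorElement_one_left]; exact one_mem H⟩
    · obtain ⟨τ, hτ, hpτ⟩ := hTsurj p hp h0
      exact ⟨τ, hTk hτ, hpτ, hcomm τ hτ⟩
  obtain ⟨j, hj⟩ := hT.exists_pi_mul_zpow_eq hp hτ (by
    rw [sub_eq_add_neg, ← hT.isLog.map_inv, ← hT.isLog, ← hl'π, hl', hl'.map_inv, hpτ,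
      add_neg_cancel])
  exact ⟨j, τ, hτ, hj, hτH⟩

theorem exists_independent_generators_kerStage [FiniteDimensional ℚ V]
    (hT : IsRootTower x δ M π) (hl : IsLog l) (hlπ : ∀ g, l g = 0 ↔ π g = 0) (k : ℕ) :
    ∃ B : Set Γ, Subgroup.closure B = hT.kerStage k ∧ LinearIndepOn ℝ (hT.foxVec hl) B := by
  induction k with
  | zero =>
    refine ⟨∅, ?_, linearIndepOn_empty _ _⟩
    rw [Subgroup.closure_empty, kerStage, stage_zero, bot_inf_eq]
  | succ k ih =>
    obtain ⟨B, hB, hli⟩ := ih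
    obtain ⟨c, hc⟩ := exists_linearMap_ker_eq (Submodule.span ℚ {π (x k ^ stageOrder δ M k)})
    have hl' : IsLog fun g => c (π g) := hT.isLog.comp c
    have hl'π : ∀ g, c (π g) = 0 ↔ π g ∈ Submodule.span ℚ {π (x k ^ stageOrder δ M k)} := fun g =>
      by rw [← hc, LinearMap.mem_ker]
    obtain ⟨T, hTk, hinj, hT0, hTsurj⟩ := exists_transversal (fun g => c (π g)) (stage x k)
    exact ⟨_, hT.closure_stageGen_eq_kerStage hl' hl'π hB hTk hTsurj,
      (hT.linearIndepOn_stageGen hl hlπ hl' (fun g h => by rw [h, map_zero])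
        ((hl'π _).2 (Submodule.mem_span_singleton_self _)) hB hli hTk hinj hT0).image_of_comp⟩

end Kernel

end IsRootTower

/-! ### Powers of the augmentation ideal -/

section Augmentation

variable {R Γ : Type*} [CommRing R] [Group Γ]

variable (R) in
/-- The element `g - 1` of the group algebra. -/
noncomputable def subOne (g : Γ) : MonoidAlgebra R Γ := MonoidAlgebra.of R Γ g - 1

variable (R Γ) in
/-- The augmentation ideal of the group algebra, as a submodule. -/
noncomputable def aug : Submodule R (MonoidAlgebra R Γ) := Submodule.span R (Set.range (subOne R))

lemma subOne_mem_aug (g : Γ) : subOne R g ∈ aug R Γ := Submodule.subset_span ⟨g, rfl⟩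

lemma subOne_one : subOne R (1 : Γ) = 0 := by rw [subOne, map_one, sub_self]

lemma subOne_mul (g h : Γ) :
    subOne R (g * h) = subOne R g + subOne R h + subOne R g * subOne R h := by
  simp only [subOne, map_mul]
  noncomm_ring

lemma subOne_inv (g : Γ) : subOne R g⁻¹ = -subOne R g - subOne R g⁻¹ * subOne R g := by
  have h : subOne R g⁻¹ + (subOne R g + subOne R g⁻¹ * subOne R g) = 0 := by
    rw [← add_assoc, ← subOne_mul, inv_mul_cancel, subOne_one]
  rw [← neg_add']
  exact eq_neg_of_add_eq_zero_left h

lemma lift_subOne {B : Type*} [Ring B] [Algebra R B] (ρ : Γ →* B) (g : Γ) :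
    MonoidAlgebra.lift R B Γ ρ (subOne R g) = ρ g - 1 := by
  rw [subOne, map_sub, map_one, MonoidAlgebra.lift_of]

lemma lift_mem_of_mem_aug_pow {B : Type*} [Ring B] [Algebra R B] (ρ : Γ →* B)
    (W : ℕ → Submodule R B) (hρ : ∀ g, ρ g - 1 ∈ W 1)
    (hmul : ∀ n, ∀ a ∈ W n, ∀ b ∈ W 1, a * b ∈ W (n + 1)) {n : ℕ} {z : MonoidAlgebra R Γ}
    (hz : z ∈ aug R Γ ^ (n + 1)) : MonoidAlgebra.lift R B Γ ρ z ∈ W (n + 1) := by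
  have haug : aug R Γ ≤ (W 1).comap (MonoidAlgebra.lift R B Γ ρ).toLinearMap := by
    rw [aug, Submodule.span_le]
    rintro _ ⟨g, rfl⟩
    exact (congrArg (· ∈ W 1) (lift_subOne ρ g)).mpr (hρ g)
  induction n generalizing z with
  | zero => exact haug (by simpa using hz)
  | succ n ih =>
    rw [pow_succ] at hz
    refine Submodule.mul_induction_on hz (fun a ha b hb => ?_) fun a b ha hb => ?_
    · rw [map_mul]
      exact hmul _ _ (ih ha) _ (haug hb)
    · rw [map_add]
      exact add_mem ha hb

section Closure

variable {ι : Type*} {β : ι → Γ}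

lemma subOne_mem_of_closure_eq_top (hβ : Subgroup.closure (Set.range β) = ⊤) (g : Γ) :
    subOne R g ∈ Submodule.span R (Set.range fun b => subOne R (β b)) ⊔ aug R Γ ^ 2 := by
  have hmul (p q : Γ) : subOne R p * subOne R q ∈
      Submodule.span R (Set.range fun b => subOne R (β b)) ⊔ aug R Γ ^ 2 :=
    Submodule.mem_sup_right
      (pow_two (aug R Γ) ▸ Submodule.mul_mem_mul (subOne_mem_aug p) (subOne_mem_aug q))
  have hg : g ∈ Subgroup.closure (Set.range β) := hβ ▸ Subgroup.mem_top g
  induction hg using Subgroup.closure_induction with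
  | mem g hg =>
    obtain ⟨b, rfl⟩ := hg
    exact Submodule.mem_sup_left (Submodule.subset_span ⟨b, rfl⟩)
  | one => exact (subOne_one (R := R) (Γ := Γ)).symm ▸ zero_mem _
  | mul a b _ _ ha hb => exact subOne_mul (R := R) a b ▸ add_mem (add_mem ha hb) (hmul a b)
  | inv a _ ha => exact subOne_inv (R := R) a ▸ sub_mem (neg_mem ha) (hmul a⁻¹ a)

lemma aug_le_of_closure_eq_top (hβ : Subgroup.closure (Set.range β) = ⊤) :
    aug R Γ ≤ Submodule.span R (Set.range fun b => subOne R (β b)) ⊔ aug R Γ ^ 2 := by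
  conv_lhs => rw [aug]
  rw [Submodule.span_le]
  rintro _ ⟨g, rfl⟩
  exact subOne_mem_of_closure_eq_top hβ g

lemma aug_pow_le_of_closure_eq_top (hβ : Subgroup.closure (Set.range β) = ⊤) (n : ℕ) :
    aug R Γ ^ n ≤ Submodule.span R (Set.range fun l : Fin n → ι =>
      (List.ofFn fun i => subOne R (β (l i))).prod) ⊔ aug R Γ ^ (n + 1) := by
  induction n with
  | zero =>
    refine le_sup_of_le_left ?_
    simp [Submodule.one_eq_span, Set.range_const]
  | succ n ih =>
    set S := Submodule.span R (Set.range fun b => subOne R (β b)) with hS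
    set T := Submodule.span R (Set.range fun l : Fin n → ι =>
      (List.ofFn fun i => subOne R (β (l i))).prod) with hT
    have hSaug : S ≤ aug R Γ :=
      Submodule.span_mono (Set.range_subset_iff.2 fun b => ⟨β b, rfl⟩)
    calc
      aug R Γ ^ (n + 1) = aug R Γ * aug R Γ ^ n := pow_succ' _ n
      _ ≤ (S ⊔ aug R Γ ^ 2) * aug R Γ ^ n := mul_le_mul' (aug_le_of_closure_eq_top hβ) le_rfl
      _ = S * aug R Γ ^ n ⊔ aug R Γ ^ (n + 2) := by rw [Submodule.sup_mul, ← pow_add, add_comm 2]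
      _ ≤ S * T ⊔ aug R Γ ^ (n + 2) := by
        refine sup_le ((mul_le_mul' le_rfl ih).trans ?_) le_sup_right
        rw [Submodule.mul_sup, pow_succ' _ (n + 1)]
        exact sup_le_sup_left (mul_le_mul' hSaug le_rfl) _
      _ ≤ _ := by
        refine sup_le_sup_right ?_ _
        rw [hS, hT, Submodule.span_mul_span]
        refine Submodule.span_mono ?_
        rintro _ ⟨_, ⟨b, rfl⟩, _, ⟨l, rfl⟩, rfl⟩
        exact ⟨Fin.cons b l, by simp [List.ofFn_succ]⟩

end Closure

variable (R) in
/-- The group element `g` is congruent to `1` modulo every power of the augmentation ideal; that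
only `1` has this property is the form of residual nilpotence used for the tower group. -/
def IsResidual (g : Γ) : Prop := ∀ n, subOne R g ∈ aug R Γ ^ (n + 1)

end Augmentation

/-! ### Corner entries of products of matrices -/

section Corner

variable {R : Type*} [CommRing R] {N n : ℕ} {A : Fin n → Matrix (Fin N) (Fin N) R}

lemma above_ofFn_prod (hA : ∀ i, Above 1 (A i)) : Above n (List.ofFn A).prod := by
  induction n with
  | zero => simpa using Above.one
  | succ n ih =>
    rw [List.ofFn_succ', List.prod_concat]
    exact (ih fun i => hA i.castSucc).mul (hA (Fin.last n))

lemma ofFn_prod_apply_of_above (hA : ∀ i, Above 1 (A i)) (h : n < N) :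
    (List.ofFn A).prod ⟨0, by omega⟩ ⟨n, h⟩ =
      ∏ i : Fin n, A i ⟨i, by omega⟩ ⟨i + 1, by omega⟩ := by
  induction n with
  | zero => simp
  | succ n ih =>
    rw [List.ofFn_succ', List.prod_concat, Fin.prod_univ_castSucc,
      (above_ofFn_prod fun i : Fin n => hA i.castSucc).mul_apply (hA (Fin.last n))
        (k := ⟨n, by omega⟩) (by simp) rfl, ih (fun i => hA i.castSucc) (by omega)]
    rfl

lemma ofFn_prod_apply_eq_zero (hA : ∀ i, ∀ a b : Fin N, (a : ℕ) + 1 < b → A i a b = 0)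
    {a b : Fin N} (hab : (a : ℕ) + n < b) : (List.ofFn A).prod a b = 0 := by
  induction n generalizing b with
  | zero =>
    rw [List.ofFn_zero, List.prod_nil, Matrix.one_apply_ne]
    rintro rfl
    omega
  | succ n ih =>
    rw [List.ofFn_succ', List.prod_concat, Matrix.mul_apply]
    refine Finset.sum_eq_zero fun k _ => ?_
    by_cases hk : (a : ℕ) + n < k
    · rw [ih (fun i => hA i.castSucc) hk, zero_mul]
    · rw [hA _ k b (by omega), mul_zero]

lemma ofFn_prod_apply_of_hessenberg (hA : ∀ i, ∀ a b : Fin N, (a : ℕ) + 1 < b → A i a b = 0)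
    (h : n < N) : (List.ofFn A).prod ⟨0, by omega⟩ ⟨n, h⟩ =
      ∏ i : Fin n, A i ⟨i, by omega⟩ ⟨i + 1, by omega⟩ := by
  induction n with
  | zero => simp
  | succ n ih =>
    rw [List.ofFn_succ', List.prod_concat, Fin.prod_univ_castSucc, Matrix.mul_apply,
      Finset.sum_eq_single ⟨n, by omega⟩, ih (fun i => hA i.castSucc) (by omega)]
    · rfl
    · intro k _ hk
      have hkn : (k : ℕ) ≠ n := fun h => hk (Fin.ext h)
      rcases lt_or_gt_of_ne hkn with hlt | hgt
      · rw [hA (Fin.last n) k _ (by simpa using hlt), mul_zero]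
      · rw [ofFn_prod_apply_eq_zero (fun i : Fin n => hA i.castSucc) (by simpa using hgt), zero_mul]
    · simp

/-- The matrices vanishing strictly below the `d`-th superdiagonal, as a submodule. -/
def aboveSubmodule (S : Type*) [CommRing S] [Algebra S R] (N d : ℕ) :
    Submodule S (Matrix (Fin N) (Fin N) R) where
  carrier := {A | Above d A}
  add_mem' := Above.add
  zero_mem' := fun _ _ _ => rfl
  smul_mem' := fun s A hA i j h => by rw [Matrix.smul_apply, hA i j h, smul_zero]

variable (R N) in
/-- The group of upper unitriangular matrices. -/
def unitriangular : Subgroup (Matrix (Fin N) (Fin N) R)ˣ where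
  carrier := {u | Above 1 (u.val - 1)}
  one_mem' := fun i j _ => by simp
  mul_mem' {u v} hu hv := by
    have h : (u * v).val - 1 = (u.val - 1) + (v.val - 1) + (u.val - 1) * (v.val - 1) := by
      rw [Units.val_mul]
      noncomm_ring
    exact (congrArg (Above 1) h).mpr ((hu.add hv).add ((hu.mul hv).mono (by omega)))
  inv_mem' {u} hu := by
    have h0 : Above 0 u⁻¹.val := by
      refine Above.inv_unit ?_
      simpa using (hu.mono (Nat.zero_le 1)).add Above.one
    have h : u⁻¹.val - 1 = 0 - u⁻¹.val * (u.val - 1) := by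
      rw [mul_sub, Units.inv_mul, mul_one, zero_sub, neg_sub]
    refine (congrArg (Above 1) h).mpr (Above.sub (fun _ _ _ => rfl) ?_)
    simpa using h0.mul hu

lemma eq_one_of_isResidual_of_unitriangular {Γ S : Type*} [Group Γ] [CommRing S] [Algebra S R]
    {ρ : Γ →* Matrix (Fin N) (Fin N) R} (hρ : ∀ g, Above 1 (ρ g - 1)) {g : Γ}
    (hg : IsResidual S g) : ρ g = 1 := by
  have h : Above (N + 1) (MonoidAlgebra.lift S _ Γ ρ (subOne S g)) :=
    lift_mem_of_mem_aug_pow ρ (aboveSubmodule S N) hρ (fun _ _ ha _ hb => ha.mul hb) (hg N)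
  rw [lift_subOne] at h
  rw [← sub_eq_zero]
  ext i j
  exact h i j (by omega)

end Corner

/-! ### Free groups are residually nilpotent -/

section FreeGroup

lemma val_zpow_of_mul_self_eq_zero {A : Type*} [Ring A] {u : Aˣ} {E : A} (hu : u.val = 1 + E)
    (hE : E * E = 0) (k : ℤ) : (u ^ k).val = 1 + k • E := by
  have hinv : u⁻¹.val = 1 - E := by
    refine Units.inv_eq_of_mul_eq_one_right ?_
    simp [hu, mul_sub, add_mul, hE]
  induction k using Int.induction_on with
  | zero => simp
  | succ k ih =>
    rw [zpow_add_one, Units.val_mul, ih, hu]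
    simp [mul_add, add_mul, mul_assoc, hE, add_assoc]
  | pred k ih =>
    rw [zpow_sub_one, Units.val_mul, ih, hinv]
    simp [mul_sub, add_mul, sub_mul, mul_assoc, hE, add_sub_assoc]

variable {R ι : Type*} [CommRing R] {n : ℕ} {b : Fin n → ι}

variable (R) in
open Classical in
/-- For a word with letters `b`, the matrix with a `1` on the superdiagonal at each position
where the letter `c` occurs. -/
noncomputable def letterMatrix (b : Fin n → ι) (c : ι) : Matrix (Fin (n + 1)) (Fin (n + 1)) R :=
  Matrix.of fun i j => if ∃ k : Fin n, i = k.castSucc ∧ j = k.succ ∧ b k = c then 1 else 0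

lemma letterMatrix_apply_eq_zero (c : ι) {i j : Fin (n + 1)} (h : (j : ℕ) ≠ i + 1) :
    letterMatrix R b c i j = 0 := by
  refine if_neg ?_
  rintro ⟨k, rfl, rfl, -⟩
  simp at h

lemma letterMatrix_apply_self (i : Fin n) :
    letterMatrix R b (b i) i.castSucc i.succ = 1 := if_pos ⟨i, rfl, rfl, rfl⟩

lemma letterMatrix_mul_self (hb : ∀ i j : Fin n, (j : ℕ) = i + 1 → b i ≠ b j) (c : ι) :
    letterMatrix R b c * letterMatrix R b c = 0 := by
  ext i j
  rw [Matrix.mul_apply, Matrix.zero_apply]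
  refine Finset.sum_eq_zero fun k _ => ?_
  by_contra hne
  obtain ⟨hik, hkj⟩ := ne_zero_and_ne_zero_of_mul hne
  simp only [letterMatrix, Matrix.of_apply, ne_eq, ite_eq_right_iff, not_forall] at hik hkj
  obtain ⟨⟨p, rfl, rfl, hp⟩, -⟩ := hik
  obtain ⟨⟨q, hpq, rfl, hq⟩, -⟩ := hkj
  exact hb p q (by simpa using (congrArg Fin.val hpq).symm) (hp.trans hq.symm)

lemma exists_reduced_word (u : FreeGroup ι) : ∃ (n : ℕ) (b : Fin n → ι) (k : Fin n → ℤ),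
    (∀ i j : Fin n, (j : ℕ) = i + 1 → b i ≠ b j) ∧ (∀ i, k i ≠ 0) ∧
      (List.ofFn fun i => FreeGroup.of (b i) ^ k i).prod = u := by
  classical
  obtain ⟨w, hw⟩ := Monoid.CoprodI.Word.equiv.symm.surjective (freeGroupEquivCoprodI u)
  have hsymm (c : ι) (x : FreeGroup Unit) : freeGroupEquivCoprodI.symm
      (Monoid.CoprodI.of (M := fun _ : ι => FreeGroup Unit) (i := c) x) =
        FreeGroup.of c ^ FreeGroup.freeGroupUnitEquivInt x := by
    obtain ⟨k, rfl⟩ := FreeGroup.freeGroupUnitEquivInt.symm.surjective x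
    rw [MulEquiv.symm_apply_eq, map_zpow, Equiv.apply_symm_apply]
    simp [freeGroupEquivCoprodI, FreeGroup.freeGroupUnitEquivInt]
  refine ⟨w.toList.length, fun i => (w.toList.get i).1,
    fun i => FreeGroup.freeGroupUnitEquivInt (w.toList.get i).2, ?_, fun i hi => ?_, ?_⟩
  · rintro i ⟨_, hj⟩ rfl
    exact List.isChain_iff_getElem.1 w.chain_ne i hj
  · refine w.ne_one _ (List.get_mem _ i) (FreeGroup.freeGroupUnitEquivInt.injective (hi.trans ?_))
    rfl
  · rw [← freeGroupEquivCoprodI.symm_apply_apply u, ← hw]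
    change _ = freeGroupEquivCoprodI.symm w.prod
    rw [Monoid.CoprodI.Word.prod, map_list_prod, List.map_map]
    congr 1
    refine List.ext_get (by simp) fun i h1 h2 => ?_
    simp [hsymm]

lemma exists_unitriangular_ne_one [IsDomain R] [CharZero R] {u : FreeGroup ι} (hu : u ≠ 1) :
    ∃ (N : ℕ) (ρ : FreeGroup ι →* (Matrix (Fin N) (Fin N) R)ˣ),
      ρ.range ≤ unitriangular R N ∧ ρ u ≠ 1 := by
  obtain ⟨n, b, k, hb, hk, rfl⟩ := exists_reduced_word u
  have hn : n ≠ 0 := by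
    rintro rfl
    exact hu (by simp)
  let unit (c : ι) : (Matrix (Fin (n + 1)) (Fin (n + 1)) R)ˣ :=
    { val := 1 + letterMatrix R b c
      inv := 1 - letterMatrix R b c
      val_inv := by simp [mul_sub, add_mul, letterMatrix_mul_self hb]
      inv_val := by simp [mul_add, sub_mul, letterMatrix_mul_self hb] }
  refine ⟨n + 1, FreeGroup.lift unit, ?_, fun h1 => ?_⟩
  · refine FreeGroup.range_lift_le (Set.range_subset_iff.2 fun c => ?_)
    refine fun i j hij => ?_
    simpa [unit] using letterMatrix_apply_eq_zero (R := R) c (by omega)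
  · have hval (i : Fin n) : (Units.coeHom _ (unit (b i) ^ k i)) =
        1 + k i • letterMatrix R b (b i) :=
      val_zpow_of_mul_self_eq_zero rfl (letterMatrix_mul_self hb _) (k i)
    -- The corner entry of the image of a reduced word is the product of its exponents.
    have hcorner := ofFn_prod_apply_of_hessenberg (N := n + 1)
      (A := fun i => 1 + k i • letterMatrix R b (b i)) (fun i p q hpq => by
        rw [Matrix.add_apply, Matrix.smul_apply, letterMatrix_apply_eq_zero _ (by omega),
          Matrix.one_apply_ne (by rintro rfl; omega), smul_zero, add_zero]) n.lt_succ_self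
    have hprod : (List.ofFn fun i => 1 + k i • letterMatrix R b (b i)).prod = 1 := by
      have h := congrArg (Units.coeHom _) h1
      simpa [map_list_prod, List.map_ofFn, Function.comp_def, hval] using h
    rw [hprod, Matrix.one_apply_ne (by simpa [Fin.ext_iff] using hn.symm)] at hcorner
    obtain ⟨i, -, hi⟩ := Finset.prod_eq_zero_iff.1 hcorner.symm
    have hself : letterMatrix R b (b i) ⟨i, by omega⟩ ⟨i + 1, by omega⟩ = 1 :=
      letterMatrix_apply_self i
    rw [Matrix.add_apply, Matrix.smul_apply, hself, Matrix.one_apply_ne (by simp), zero_add] at hi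
    exact hk i (by simpa using hi)

theorem freeGroup_eq_one_of_isResidual [IsDomain R] [CharZero R] {u : FreeGroup ι}
    (hu : IsResidual R u) : u = 1 := by
  by_contra hne
  obtain ⟨N, ρ, hρ, hρu⟩ := exists_unitriangular_ne_one (R := R) hne
  exact hρu (Units.ext (eq_one_of_isResidual_of_unitriangular (S := R)
    (ρ := (Units.coeHom _).comp ρ) (fun g => hρ ⟨g, rfl⟩) hu))

end FreeGroup

/-! ### Residual nilpotence of root towers -/

section LinearIndependence

variable {R : Type*} [CommRing R]

lemma linearIndependent_mul {α β ι ι' : Type*} {f : ι → α → R} {g : ι' → β → R}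
    (hf : LinearIndependent R f) (hg : LinearIndependent R g) :
    LinearIndependent R fun (p : ι × ι') (q : α × β) => f p.1 q.1 * g p.2 q.2 := by
  classical
  rw [linearIndependent_iff'] at *
  intro s c h
  have hrow (b : β) : ∀ i ∈ s.image Prod.fst,
      ∑ j ∈ s.image Prod.snd, (if (i, j) ∈ s then c (i, j) else 0) * g j b = 0 := by
    refine hf _ _ (funext fun a => ?_)
    have hab := congrFun h (a, b)
    simp only [Finset.sum_apply, Pi.smul_apply, smul_eq_mul, Pi.zero_apply] at hab ⊢
    refine Eq.trans ?_ hab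
    simp_rw [Finset.sum_mul]
    rw [← Finset.sum_product', ← Finset.sum_subset (s₁ := s) (fun p hp => Finset.mem_product.2
      ⟨Finset.mem_image_of_mem _ hp, Finset.mem_image_of_mem _ hp⟩)
      (fun p _ hp => by rw [if_neg hp, zero_mul, zero_mul])]
    refine Finset.sum_congr rfl fun p hp => ?_
    rw [if_pos hp]
    ring
  intro p hp
  have hcol := hg (s.image Prod.snd) (fun j => if (p.1, j) ∈ s then c (p.1, j) else 0)
    (funext fun b => by
      simpa only [Finset.sum_apply, Pi.smul_apply, smul_eq_mul, Pi.zero_apply] using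
        hrow b p.1 (Finset.mem_image_of_mem _ hp)) p.2 (Finset.mem_image_of_mem _ hp)
  simpa [hp] using hcol

lemma linearIndependent_pi_prod {α ι : Type*} {f : ι → α → R}
    (hf : LinearIndependent R f) (n : ℕ) :
    LinearIndependent R fun (l : Fin n → ι) (κ : Fin n → α) => ∏ i, f (l i) (κ i) := by
  induction n with
  | zero =>
    rw [linearIndependent_iff]
    intro c hc
    have h := congrFun hc Fin.elim0
    ext
    simpa [Finsupp.linearCombination_unique] using h
  | succ n ih =>
    refine LinearIndependent.of_comp (LinearMap.funLeft R R (Fin.consEquiv fun _ => α)) ?_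
    rw [← linearIndependent_equiv (Fin.consEquiv fun _ => ι)]
    convert linearIndependent_mul hf ih using 1
    ext p q
    simp [LinearMap.funLeft, Fin.prod_univ_succ, Fin.consEquiv]

lemma linearIndependent_rescale [IsDomain R] [Infinite R] {ι α : Type*} {v : ι → α → R⟦X⟧}
    (hv : LinearIndependent R v) :
    LinearIndependent R⟦X⟧ fun b (κ : R × α) => rescale κ.1 (v b κ.2) := by
  rw [linearIndependent_iff'] at *
  intro s C hsum b hb
  ext q
  refine hv s (fun b => coeff q (C b)) ?_ b hb
  ext J p
  -- In degree `p + q` the relation is polynomial in the rescaling parameter and vanishes at every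
  -- element of `R`, so its coefficients vanish.
  let P : Polynomial R := ∑ z ∈ Finset.HasAntidiagonal.antidiagonal (p + q),
    Polynomial.monomial z.1 (∑ b ∈ s, coeff z.1 (v b J) * coeff z.2 (C b))
  have hP : P = 0 := by
    refine Polynomial.funext fun t => ?_
    have ht := congrArg (coeff (p + q)) (congrFun hsum (t, J))
    simp only [Finset.sum_apply, Pi.smul_apply, smul_eq_mul, map_sum, Pi.zero_apply, map_zero] at ht
    rw [Polynomial.eval_zero, ← ht]
    simp only [P, Polynomial.eval_finsetSum, Polynomial.eval_monomial, mul_comm (C _),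
      coeff_mul, coeff_rescale]
    rw [Finset.sum_comm]
    refine Finset.sum_congr rfl fun z _ => ?_
    rw [Finset.sum_mul]
    exact Finset.sum_congr rfl fun b _ => by ring
  have hcoeff : P.coeff p = ∑ b ∈ s, coeff p (v b J) * coeff q (C b) := by
    simp only [P, Polynomial.finsetSum_coeff, Polynomial.coeff_monomial]
    rw [Finset.sum_eq_single (p, q), if_pos rfl]
    · rintro ⟨a, c⟩ hac hne
      refine if_neg fun h : a = p => hne ?_
      rw [Finset.HasAntidiagonal.mem_antidiagonal] at hac
      exact Prod.ext h (by simp only at hac ⊢; omega)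
    · simp
  rw [hP, Polynomial.coeff_zero] at hcoeff
  simp only [Finset.sum_apply, Pi.smul_apply, map_sum, Pi.zero_apply, map_zero, coeff_smul]
  rw [hcoeff]
  exact Finset.sum_congr rfl fun b _ => by rw [smul_eq_mul, mul_comm]

end LinearIndependence

section Weight

variable {R : Type*} [CommRing R]

variable (R) in
/-- The filtration of upper triangular matrices of power series in which `X` and the
superdiagonal have degree one. The subtraction `d + i - j` is truncated: entries far above the
diagonal are unrestricted. -/
def weightSubmodule (N d : ℕ) : Submodule R (Matrix (Fin N) (Fin N) R⟦X⟧) where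
  carrier := {A | Above 0 A ∧ ∀ i j : Fin N, (X : R⟦X⟧) ^ (d + i - j) ∣ A i j}
  add_mem' ha hb := ⟨ha.1.add hb.1, fun i j => dvd_add (ha.2 i j) (hb.2 i j)⟩
  zero_mem' := ⟨fun _ _ _ => rfl, fun _ _ => dvd_zero _⟩
  smul_mem' s A hA := ⟨fun i j h => by rw [Matrix.smul_apply, hA.1 i j h, smul_zero], fun i j => by
    rw [Matrix.smul_apply]
    exact dvd_smul_of_dvd s (hA.2 i j)⟩

lemma mul_mem_weightSubmodule {N a b : ℕ} {A B : Matrix (Fin N) (Fin N) R⟦X⟧}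
    (hA : A ∈ weightSubmodule R N a) (hB : B ∈ weightSubmodule R N b) :
    A * B ∈ weightSubmodule R N (a + b) := by
  refine ⟨hA.1.mul hB.1, fun i j => ?_⟩
  rw [Matrix.mul_apply]
  refine Finset.dvd_sum fun k _ => ?_
  by_cases hki : (k : ℕ) < i
  · rw [hA.1 i k (by omega), zero_mul]
    exact dvd_zero _
  by_cases hjk : (j : ℕ) < k
  · rw [hB.1 k j (by omega), mul_zero]
    exact dvd_zero _
  calc (X : R⟦X⟧) ^ (a + b + i - j) ∣ X ^ ((a + i - k) + (b + k - j)) :=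
        pow_dvd_pow X (by omega)
    _ = X ^ (a + i - k) * X ^ (b + k - j) := pow_add _ _ _
    _ ∣ A i k * B k j := mul_dvd_mul (hA.2 i k) (hB.2 k j)

variable {Γ : Type*} [Group Γ] {N : ℕ} {ρ : Γ →* Matrix (Fin N) (Fin N) R⟦X⟧}

lemma sub_one_mem_weightSubmodule {A : Matrix (Fin N) (Fin N) R⟦X⟧} (hA : Above 0 A)
    (hA1 : ∀ i, constantCoeff (A i i) = 1) : A - 1 ∈ weightSubmodule R N 1 := by
  have htri := hA.sub Above.one
  refine ⟨htri, fun i j => ?_⟩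
  rcases lt_trichotomy (i : ℕ) j with h | h | h
  · rw [Nat.sub_eq_zero_of_le (by omega), pow_zero]
    exact one_dvd _
  · obtain rfl : i = j := Fin.ext h
    rw [Nat.add_sub_cancel, pow_one, X_dvd_iff, Matrix.sub_apply, map_sub, hA1,
      Matrix.one_apply_eq, map_one, sub_self]
  · rw [htri i j (by omega)]
    exact dvd_zero _

lemma eq_one_of_isResidual_of_above (hρ : ∀ g, Above 0 (ρ g))
    (hρ1 : ∀ g i, constantCoeff (ρ g i i) = 1) {g : Γ} (hg : IsResidual R g) : ρ g = 1 := by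
  have hmem (n : ℕ) : ρ g - 1 ∈ weightSubmodule R N (n + 1) := by
    rw [← lift_subOne (R := R)]
    exact lift_mem_of_mem_aug_pow ρ (weightSubmodule R N)
      (fun g => sub_one_mem_weightSubmodule (hρ g) (hρ1 g))
      (fun n a ha b hb => mul_mem_weightSubmodule ha hb) (hg n)
  rw [← sub_eq_zero]
  ext i j q
  exact X_pow_dvd_iff.1 ((hmem (q + j)).2 i j) q (by omega)

end Weight

section FoxRep

variable {Γ : Type*} [Group Γ] {x : ℕ → Γ} {δ n : ℕ} {l : Γ → ℝ} {σ : ℕ → ℝ} {J : ℕ → ℕ}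
  {ρ : Γ →* Matrix (Fin (n + 1)) (Fin (n + 1)) ℝ⟦X⟧} {g : Γ}

lemma IsFoxRep.eq_one_of_isResidual (hρ : IsFoxRep x δ l σ J ρ) (hg : IsResidual ℝ g) :
    ρ g = 1 :=
  eq_one_of_isResidual_of_above hρ.above
    (fun g i => by rw [hρ.apply_self, constantCoeff_fexp]) hg

lemma IsFoxRep.above_sub_one (hρ : IsFoxRep x δ l σ J ρ) (hg : l g = 0) : Above 1 (ρ g - 1) := by
  intro i j hij
  rcases Nat.lt_or_ge j i with h | h
  · exact ((hρ.above g).sub Above.one) i j (by omega)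
  · obtain rfl : i = j := Fin.ext (by omega)
    rw [Matrix.sub_apply, hρ.apply_self, hg, mul_zero, fexp_zero, Matrix.one_apply_eq, sub_self]

end FoxRep

namespace IsRootTower

variable {Γ V : Type*} [Group Γ] [AddCommGroup V] [Module ℚ V] {x : ℕ → Γ} {δ M : ℕ} {π : Γ → V}
  {l : Γ → ℝ}

lemma log_eq_zero_of_isResidual (hT : IsRootTower x δ M π) (hl : IsLog l) {g : Γ}
    (hg : IsResidual ℝ g) : l g = 0 := by
  obtain ⟨ρ, hρ⟩ := hT.exists_isFoxRep hl 0 (fun _ => 1) fun _ => 0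
  refine linearIndependent_fexp.injective ?_
  rw [fexp_zero, ← one_mul (l g), ← hρ.apply_self g 0, hρ.eq_one_of_isResidual hg,
    Matrix.one_apply_eq]

lemma ofFn_prod_apply_of_isFoxRep (hT : IsRootTower x δ M π) (hl : IsLog l) {n : ℕ} {σ : ℕ → ℝ}
    {J : ℕ → ℕ} {ρ : Γ →* Matrix (Fin (n + 1)) (Fin (n + 1)) ℝ⟦X⟧} (hρ : IsFoxRep x δ l σ J ρ)
    {g : Fin n → Γ} (hg : ∀ i, l (g i) = 0) :
    (List.ofFn fun i => ρ (g i) - 1).prod 0 (Fin.last n) =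
      ∏ i : Fin n, rescale (σ i - σ (i + 1)) (hT.foxDeriv hl (J i) (g i)) := by
  refine (ofFn_prod_apply_of_above (fun i => hρ.above_sub_one (hg i)) n.lt_succ_self).trans
    (Finset.prod_congr rfl fun i _ => ?_)
  change ρ (g i) i.castSucc i.succ -
    (1 : Matrix (Fin (n + 1)) (Fin (n + 1)) ℝ⟦X⟧) i.castSucc i.succ = _
  rw [hT.isFoxRep_apply_castSucc_succ hl hρ i (hg i),
    Matrix.one_apply_ne i.castSucc_lt_succ.ne, sub_zero]

lemma exists_isFoxRep_ofFn_prod_apply (hT : IsRootTower x δ M π) (hl : IsLog l) {n : ℕ}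
    (κ : Fin n → ℝ × Fin δ) :
    ∃ σ J, ∃ ρ : Γ →* Matrix (Fin (n + 1)) (Fin (n + 1)) ℝ⟦X⟧, IsFoxRep x δ l σ J ρ ∧
      ∀ g : Fin n → Γ, (∀ i, l (g i) = 0) → (List.ofFn fun i => ρ (g i) - 1).prod 0 (Fin.last n) =
        ∏ i, rescale (κ i).1 (hT.foxVec hl (g i) (κ i).2) := by
  let σ (i : ℕ) : ℝ := -∑ j ∈ Finset.range i, if h : j < n then (κ ⟨j, h⟩).1 else 0
  let J (j : ℕ) : ℕ := if h : j < n then (κ ⟨j, h⟩).2 else 0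
  obtain ⟨ρ, hρ⟩ := hT.exists_isFoxRep hl n σ J
  refine ⟨σ, J, ρ, hρ, fun g hg => ?_⟩
  rw [hT.ofFn_prod_apply_of_isFoxRep hl hρ hg]
  refine Finset.prod_congr rfl fun i _ => ?_
  have hσ : σ i - σ (i + 1) = (κ i).1 := by simp [σ, Finset.sum_range_succ]
  have hJ : J i = (κ i).2 := by simp [J]
  rw [hσ, hJ, foxVec]

section Lift

variable {ι : Type*} {β : ι → Γ} {u : FreeGroup ι}

lemma log_lift_eq_zero (hl : IsLog l) (hβ : ∀ b, l (β b) = 0) (w : FreeGroup ι) :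
    l (FreeGroup.lift β w) = 0 := by
  have h : (FreeGroup.lift β).range ≤ hl.toHom.ker :=
    FreeGroup.range_lift_le (Set.range_subset_iff.2 hβ)
  exact h ⟨w, rfl⟩

lemma sum_smul_prod_rescale_eq_zero (hT : IsRootTower x δ M π) (hl : IsLog l)
    (hβ : ∀ b, l (β b) = 0) (hu : IsResidual ℝ (FreeGroup.lift β u)) {n : ℕ}
    {a : (Fin n → ι) →₀ ℝ} {z : MonoidAlgebra ℝ (FreeGroup ι)}
    (hz : z ∈ aug ℝ (FreeGroup ι) ^ (n + 1))
    (haz : (a.sum fun w r => r • (List.ofFn fun i => subOne ℝ (FreeGroup.of (w i))).prod) + z =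
      subOne ℝ u) (κ : Fin n → ℝ × Fin δ) :
    (a.sum fun w r => r • ∏ i, rescale (κ i).1 (hT.foxVec hl (β (w i)) (κ i).2)) = 0 := by
  obtain ⟨σ, J, ρ, hρ, hprod⟩ := hT.exists_isFoxRep_ofFn_prod_apply hl κ
  let ρβ := ρ.comp (FreeGroup.lift β)
  let Φ := MonoidAlgebra.lift ℝ (Matrix (Fin (n + 1)) (Fin (n + 1)) ℝ⟦X⟧) _ ρβ
  have hΦu : Φ (subOne ℝ u) = 0 := by
    rw [lift_subOne, MonoidHom.comp_apply, hρ.eq_one_of_isResidual hu, sub_self]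
  have hΦz : Above (n + 1) (Φ z) := lift_mem_of_mem_aug_pow ρβ (aboveSubmodule ℝ (n + 1))
    (fun w => hρ.above_sub_one (log_lift_eq_zero hl hβ w)) (fun _ _ ha _ hb => Above.mul ha hb) hz
  have hcorner := congrArg (fun z => Φ z 0 (Fin.last n)) haz
  simp only [hΦu, map_add, Matrix.add_apply, Matrix.zero_apply] at hcorner
  rw [hΦz 0 (Fin.last n) (by simp), add_zero, Finsupp.sum, map_sum, Matrix.sum_apply] at hcorner
  rw [← hcorner]
  refine Finset.sum_congr rfl fun w _ => ?_
  have hΦ (i : Fin n) : Φ (subOne ℝ (FreeGroup.of (w i))) = ρ (β (w i)) - 1 := by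
    rw [lift_subOne, MonoidHom.comp_apply, FreeGroup.lift_apply_of]
  simp only [map_smul, Matrix.smul_apply, map_list_prod, List.map_ofFn, Function.comp_def, hΦ]
  rw [hprod _ fun i => hβ (w i)]

lemma isResidual_of_lift (hT : IsRootTower x δ M π) (hl : IsLog l) (hβ : ∀ b, l (β b) = 0)
    (hind : LinearIndependent ℝ fun b => hT.foxVec hl (β b))
    (hu : IsResidual ℝ (FreeGroup.lift β u)) : IsResidual ℝ u := by
  intro n
  induction n with
  | zero =>
    rw [zero_add, pow_one]
    exact subOne_mem_aug u
  | succ n ih =>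
    -- Corner entries of triangular representations of `Γ` detect the leading part `y` of `u - 1`.
    obtain ⟨y, hy, z, hz, hyz⟩ := Submodule.mem_sup.1
      (aug_pow_le_of_closure_eq_top (FreeGroup.closure_range_of ι) (n + 1) ih)
    obtain ⟨a, rfl⟩ := Finsupp.mem_span_range_iff_exists_finsupp.1 hy
    have hindep : LinearIndependent ℝ fun (w : Fin (n + 1) → ι) (κ : Fin (n + 1) → ℝ × Fin δ) =>
        ∏ i, rescale (κ i).1 (hT.foxVec hl (β (w i)) (κ i).2) :=
      (linearIndependent_pi_prod (linearIndependent_rescale hind) (n + 1)).restrict_scalars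
        fun r s h => by simpa using congrArg constantCoeff h
    have ha : a = 0 := by
      refine linearIndependent_iff.1 hindep a (funext fun κ => ?_)
      rw [Finsupp.linearCombination_apply, Finsupp.sum, Finset.sum_apply]
      exact hT.sum_smul_prod_rescale_eq_zero hl hβ hu hz hyz κ
    rw [ha, Finsupp.sum_zero_index, zero_add] at hyz
    exact hyz ▸ hz

end Lift

lemma exists_mem_stage (hT : IsRootTower x δ M π) (g : Γ) : ∃ k, g ∈ stage x k := by
  have hg : g ∈ Subgroup.closure (Set.range x) := hT.closure_range ▸ Subgroup.mem_top g
  have hsup : Subgroup.closure (Set.range x) ≤ ⨆ k, stage x k := by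
    rw [Subgroup.closure_le]
    rintro _ ⟨k, rfl⟩
    exact Subgroup.mem_iSup_of_mem (k + 1) (gen_mem_stage k.lt_succ_self)
  have hdir : Directed (· ≤ ·) (stage x) := (monotone_nat_of_le_succ fun k =>
    stage_mono k.le_succ).directed_le
  exact (Subgroup.mem_iSup_of_directed hdir).1 (hsup hg)

theorem eq_one_of_isResidual [FiniteDimensional ℚ V] (hT : IsRootTower x δ M π) {g : Γ}
    (hg : IsResidual ℝ g) : g = 1 := by
  obtain ⟨c, hc⟩ := exists_linearMap_ker_eq (⊥ : Submodule ℚ V)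
  have hl : IsLog fun g => c (π g) := hT.isLog.comp c
  have hlπ (g : Γ) : c (π g) = 0 ↔ π g = 0 := by
    rw [← LinearMap.mem_ker, hc, Submodule.mem_bot]
  obtain ⟨k, hk⟩ := hT.exists_mem_stage g
  obtain ⟨B, hB, hind⟩ := hT.exists_independent_generators_kerStage hl hlπ k
  have hgB : g ∈ Subgroup.closure B := by
    rw [hB, hT.mem_kerStage, ← hlπ]
    exact ⟨hk, hT.log_eq_zero_of_isResidual hl hg⟩
  rw [FreeGroup.closure_eq_range] at hgB
  obtain ⟨u, rfl⟩ := hgB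
  have hlB (b : B) : c (π b) = 0 :=
    (hlπ b).2 (hT.mem_kerStage.1 (hB ▸ Subgroup.subset_closure b.2)).2
  rw [freeGroup_eq_one_of_isResidual (hT.isResidual_of_lift hl hlB hind hg), map_one]

end IsRootTower

end RootTowers

/-! ### Invariant cones of filtered modules -/

section Cone

variable {R E : Type*} [Ring R] [AddCommGroup E] [Module R E]

/-- `P` is the preimage in `H'` of the positive cone of a `T`-invariant translation-invariant total
order on `H' / H`. -/
structure IsInvariantCone (T : E → E) (H H' : Submodule R E) (P : Set E) : Prop where
  mem : ∀ {a}, a ∈ P → a ∈ H'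
  notMem : ∀ {a}, a ∈ P → a ∉ H
  add_mem : ∀ {a b}, a ∈ P → b ∈ P → a + b ∈ P
  add_mem_of_mem : ∀ {a b}, a ∈ P → b ∈ H → a + b ∈ P
  mem_or_neg_mem : ∀ {a}, a ∈ H' → a ∉ H → a ∈ P ∨ -a ∈ P
  map_mem : ∀ {a}, a ∈ P → T a ∈ P

variable {T : E → E} {H H' : Submodule R E}

lemma isInvariantCone_self (T : E → E) (H : Submodule R E) : IsInvariantCone T H H ∅ where
  mem := fun ha => absurd ha (Set.notMem_empty _)
  notMem := fun ha => absurd ha (Set.notMem_empty _)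
  add_mem := fun ha => absurd ha (Set.notMem_empty _)
  add_mem_of_mem := fun ha => absurd ha (Set.notMem_empty _)
  mem_or_neg_mem := fun ha hna => absurd ha hna
  map_mem := fun ha => absurd ha (Set.notMem_empty _)

lemma IsInvariantCone.union {L : Submodule R E} {P Q : Set E} (hP : IsInvariantCone T H L P)
    (hQ : IsInvariantCone T L H' Q) (hHL : H ≤ L) (hLH' : L ≤ H') :
    IsInvariantCone T H H' (P ∪ Q) where
  mem := Or.rec (fun ha => hLH' (hP.mem ha)) hQ.mem
  notMem := Or.rec hP.notMem fun ha h => hQ.notMem ha (hHL h)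
  add_mem := by
    rintro a b (ha | ha) (hb | hb)
    · exact Or.inl (hP.add_mem ha hb)
    · exact Or.inr (add_comm a b ▸ hQ.add_mem_of_mem hb (hP.mem ha))
    · exact Or.inr (hQ.add_mem_of_mem ha (hP.mem hb))
    · exact Or.inr (hQ.add_mem ha hb)
  add_mem_of_mem := fun ha hb => ha.imp (fun ha => hP.add_mem_of_mem ha hb)
    fun ha => hQ.add_mem_of_mem ha (hHL hb)
  mem_or_neg_mem := by
    intro a ha hna
    by_cases hL : a ∈ L
    · exact (hP.mem_or_neg_mem hL hna).imp Or.inl Or.inl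
    · exact (hQ.mem_or_neg_mem ha hL).imp Or.inr Or.inr
  map_mem := Or.imp hP.map_mem hQ.map_mem

variable {K : Type*} [Field K] [LinearOrder K] [Module K E] {H H' : Submodule K E}

/-- `T` maps the submodules `H ≤ H'` to themselves and acts on `H' / H` as multiplication by a
positive scalar. -/
def PositiveStep (T : E → E) (H H' : Submodule K E) : Prop :=
  H ≤ H' ∧ ∃ μ : K, 0 < μ ∧ ∀ a ∈ H', T a - μ • a ∈ H

lemma PositiveStep.map_mem (h : PositiveStep T H H') {a : E} (ha : a ∈ H) : T a ∈ H := by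
  obtain ⟨hle, μ, -, hT⟩ := h
  simpa using add_mem (hT a (hle ha)) (H.smul_mem μ ha)

lemma le_of_chain (h : Relation.ReflTransGen (PositiveStep T) H H') : H ≤ H' := by
  induction h with
  | refl => exact le_rfl
  | tail _ h ih => exact ih.trans h.1

variable [IsStrictOrderedRing K]

variable (E K) in
lemma exists_total_cone : ∃ P : Set E, 0 ∉ P ∧ (∀ a ∈ P, ∀ b ∈ P, a + b ∈ P) ∧
    (∀ a, a ≠ 0 → a ∈ P ∨ -a ∈ P) ∧ ∀ r : K, 0 < r → ∀ a ∈ P, r • a ∈ P := by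
  let b := Module.Basis.ofVectorSpace K E
  classical
  let _ : LinearOrder (Module.Basis.ofVectorSpaceIndex K E) := linearOrderOfSTO WellOrderingRel
  refine ⟨{a | 0 < toLex (b.repr a)}, by simp, fun u hu v hv => ?_, fun u hu => ?_, ?_⟩
  · simpa using add_pos (Set.mem_ofPred.1 hu) hv
  · have hne : toLex (b.repr u) ≠ 0 := by simpa using hu
    simpa using hne.symm.lt_or_gt
  · intro r hr u hu
    obtain ⟨j, hj, hj'⟩ := Finsupp.Lex.lt_iff.1 hu
    refine Finsupp.Lex.lt_iff.2 ⟨j, fun i hi => ?_, ?_⟩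
    · have hi0 : b.repr u i = 0 := (hj i hi).symm
      simp [hi0]
    · simpa using mul_pos hr hj'

lemma PositiveStep.exists_isInvariantCone (h : PositiveStep T H H') :
    ∃ P, IsInvariantCone T H H' P := by
  obtain ⟨hle, μ, hμ, hT⟩ := h
  obtain ⟨Q, hzero, hadd, htotal, hsmul⟩ := exists_total_cone (E ⧸ H) K
  have hker {a : E} : H.mkQ a = 0 ↔ a ∈ H := by simp
  refine ⟨{a | a ∈ H' ∧ H.mkQ a ∈ Q}, And.left, fun ha haH => ?_, fun ha hb => ?_,
    fun ha hb => ?_, fun ha haH => ?_, fun {a} ha => ?_⟩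
  · exact hzero (hker.2 haH ▸ ha.2)
  · exact ⟨add_mem ha.1 hb.1, map_add H.mkQ _ _ ▸ hadd _ ha.2 _ hb.2⟩
  · exact ⟨add_mem ha.1 (hle hb), by rw [map_add, hker.2 hb, add_zero]; exact ha.2⟩
  · exact (htotal _ (mt hker.1 haH)).imp (fun h => ⟨ha, h⟩)
      fun h => ⟨neg_mem ha, map_neg H.mkQ _ ▸ h⟩
  · have hTa : T a = T a - μ • a + μ • a := (sub_add_cancel _ _).symm
    refine ⟨hTa ▸ add_mem (hle (hT a ha.1)) (H'.smul_mem μ ha.1), ?_⟩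
    rw [hTa, map_add, hker.2 (hT a ha.1), zero_add, map_smul]
    exact hsmul μ hμ _ ha.2

lemma exists_isInvariantCone_of_chain (h : Relation.ReflTransGen (PositiveStep T) H H') :
    ∃ P, IsInvariantCone T H H' P := by
  induction h with
  | refl => exact ⟨∅, isInvariantCone_self T H⟩
  | tail hc hs ih =>
    obtain ⟨P, hP⟩ := ih
    obtain ⟨Q, hQ⟩ := hs.exists_isInvariantCone
    exact ⟨P ∪ Q, hP.union hQ (le_of_chain hc) hs.1⟩

end Cone

section ChainMul

variable {K A : Type*} [Field K] [LinearOrder K] [IsStrictOrderedRing K] [Ring A] [Algebra K A]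
  {T : A →ₐ[K] A} {H H' U W : Submodule K A}

lemma PositiveStep.mul {U' : Submodule K A} (hH : PositiveStep T H H') (hU : PositiveStep T U U')
    (hle : U' ≤ W) (hW : ∀ a ∈ W, T a ∈ W) :
    PositiveStep T (H' * U ⊔ H * W) (H' * U' ⊔ H * W) := by
  have hTH : ∀ a ∈ H, T a ∈ H := fun a => hH.map_mem
  obtain ⟨-, μ, hμ, hTH'⟩ := hH
  obtain ⟨hUU', ν, hν, hTU'⟩ := hU
  refine ⟨sup_le_sup_right (mul_le_mul' le_rfl hUU') _, μ * ν, mul_pos hμ hν, ?_⟩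
  let F : A →ₗ[K] A := T.toLinearMap - (μ * ν) • LinearMap.id
  have hF (a : A) : F a = T a - (μ * ν) • a := rfl
  suffices H' * U' ⊔ H * W ≤ (H' * U ⊔ H * W).comap F from fun a ha => this ha
  refine sup_le (Submodule.mul_le.2 fun a ha b hb => ?_) (Submodule.mul_le.2 fun a ha b hb => ?_)
  · have hFab : F (a * b) = μ • (a * (T b - ν • b)) + (T a - μ • a) * T b := by
      rw [hF, map_mul, mul_sub, sub_mul, smul_sub, mul_smul_comm, smul_mul_assoc, smul_smul]
      abel
    rw [Submodule.mem_comap, hFab]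
    exact add_mem
      (Submodule.mem_sup_left (Submodule.smul_mem _ _ (Submodule.mul_mem_mul ha (hTU' b hb))))
      (Submodule.mem_sup_right (Submodule.mul_mem_mul (hTH' a ha) (hW b (hle hb))))
  · rw [Submodule.mem_comap, hF, map_mul]
    exact Submodule.mem_sup_right (sub_mem (Submodule.mul_mem_mul (hTH a ha) (hW b hb))
      (Submodule.smul_mem _ _ (Submodule.mul_mem_mul ha hb)))

lemma chain_mul_of_step (hs : PositiveStep T H H')
    (hU : Relation.ReflTransGen (PositiveStep T) U W) (hW : ∀ a ∈ W, T a ∈ W) :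
    Relation.ReflTransGen (PositiveStep T) (H' * U ⊔ H * W) (H' * W) := by
  induction hU using Relation.ReflTransGen.head_induction_on with
  | refl => rw [sup_eq_left.2 (mul_le_mul' hs.1 le_rfl)]
  | head h h' ih => exact .head (hs.mul h (le_of_chain h') hW) ih

lemma chain_mul (hH : Relation.ReflTransGen (PositiveStep T) H H')
    (hU : Relation.ReflTransGen (PositiveStep T) U W) (hW : ∀ a ∈ W, T a ∈ W)
    (hle : H' * U ≤ H * W) : Relation.ReflTransGen (PositiveStep T) (H * W) (H' * W) := by
  induction hH using Relation.ReflTransGen.head_induction_on with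
  | refl => exact .refl
  | @head H L h h' ih =>
    have hLU : L * U ≤ H * W := (mul_le_mul' (le_of_chain h') le_rfl).trans hle
    have hchain := chain_mul_of_step h hU hW
    rw [sup_eq_right.2 hLU] at hchain
    exact hchain.trans (ih (hle.trans (mul_le_mul' h.1 le_rfl)))

end ChainMul

/-! ### Bi-orders from the augmentation filtration -/

section AugPow

variable {R Γ : Type*} [CommRing R] [Group Γ]

lemma aug_mul_aug_le : aug R Γ * aug R Γ ≤ aug R Γ := by
  conv_lhs => rw [aug]
  rw [Submodule.span_mul_span, Submodule.span_le]
  rintro _ ⟨_, ⟨g, rfl⟩, _, ⟨h, rfl⟩, rfl⟩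
  have hgh : subOne R g * subOne R h = subOne R (g * h) - (subOne R g + subOne R h) := by
    rw [subOne_mul, add_sub_cancel_left]
  simp only [hgh]
  exact sub_mem (subOne_mem_aug _) (add_mem (subOne_mem_aug _) (subOne_mem_aug _))

variable (R Γ) in
lemma antitone_aug_pow_succ : Antitone fun n => aug R Γ ^ (n + 1) :=
  antitone_nat_of_succ_le fun n => by
    rw [pow_succ _ (n + 1), pow_succ _ n, mul_assoc]
    exact mul_le_mul' le_rfl aug_mul_aug_le

lemma mul_mem_aug_pow {i j k : ℕ} (hk : k + 1 ≤ i + j) {a b : MonoidAlgebra R Γ}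
    (ha : a ∈ aug R Γ ^ i) (hb : b ∈ aug R Γ ^ j) : a * b ∈ aug R Γ ^ (k + 1) := by
  obtain ⟨l, hl⟩ := Nat.exists_eq_add_of_le hk
  refine antitone_aug_pow_succ R Γ (Nat.le_add_right k l) ?_
  change a * b ∈ aug R Γ ^ (k + l + 1)
  rw [add_right_comm, ← hl, pow_add]
  exact Submodule.mul_mem_mul ha hb

lemma subOne_mem_aug_pow_one (g : Γ) : subOne R g ∈ aug R Γ ^ 1 :=
  (pow_one (aug R Γ)).symm ▸ subOne_mem_aug g

lemma subOne_conj (a b : Γ) : subOne R (b * a * b⁻¹) =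
    subOne R a + (subOne R b * subOne R a +
      (subOne R a + subOne R b * subOne R a) * subOne R b⁻¹) := by
  have hb : subOne R b + subOne R b⁻¹ + subOne R b * subOne R b⁻¹ = 0 := by
    rw [← subOne_mul, mul_inv_cancel, subOne_one]
  rw [subOne_mul, subOne_mul, ← sub_eq_zero, ← hb]
  noncomm_ring

lemma exists_subOne_mem_notMem {g : Γ} (hg : ¬ IsResidual R g) :
    ∃ n, subOne R g ∈ aug R Γ ^ (n + 1) ∧ subOne R g ∉ aug R Γ ^ (n + 2) := by
  by_contra! h
  refine hg fun n => ?_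
  induction n with
  | zero => exact subOne_mem_aug_pow_one g
  | succ n ih => exact h n ih

lemma mapDomainAlgHom_subOne (τ : Γ →* Γ) (g : Γ) :
    MonoidAlgebra.mapDomainAlgHom R R τ (subOne R g) = subOne R (τ g) := by
  rw [subOne, map_sub, map_one]
  simp [subOne]

lemma mapDomainAlgHom_mem_aug_pow (τ : Γ →* Γ) (n : ℕ) {z : MonoidAlgebra R Γ}
    (hz : z ∈ aug R Γ ^ n) : MonoidAlgebra.mapDomainAlgHom R R τ z ∈ aug R Γ ^ n := by
  have hle : (aug R Γ).map (MonoidAlgebra.mapDomainAlgHom R R τ).toLinearMap ≤ aug R Γ := by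
    rw [aug, Submodule.map_span_le]
    rintro _ ⟨g, rfl⟩
    exact mapDomainAlgHom_subOne (R := R) τ g ▸ subOne_mem_aug (τ g)
  refine pow_le_pow_left' hle n ?_
  rw [← Submodule.map_pow]
  exact Submodule.mem_map_of_mem hz

end AugPow

/-- `P` is the set of elements greater than `1` for some bi-order of the group. -/
structure IsPositiveCone {G : Type*} [Group G] (P : Set G) : Prop where
  one_notMem : 1 ∉ P
  mul_mem : ∀ {a b}, a ∈ P → b ∈ P → a * b ∈ P
  mem_or_inv_mem : ∀ {a}, a ≠ 1 → a ∈ P ∨ a⁻¹ ∈ P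
  conj_mem : ∀ {a}, a ∈ P → ∀ b, b * a * b⁻¹ ∈ P

section AugCone

variable {R Γ : Type*} [CommRing R] [Group Γ]
  {T : MonoidAlgebra R Γ → MonoidAlgebra R Γ} {Q : ℕ → Set (MonoidAlgebra R Γ)}

/-- The group elements `g` for which `g - 1` has positive leading term, `Q n` being the set of
elements of filtration degree `n + 1` with positive leading term. -/
def augCone (Q : ℕ → Set (MonoidAlgebra R Γ)) : Set Γ := {g | ∃ n, subOne R g ∈ Q n}

lemma mul_mem_augCone (hQ : ∀ n, IsInvariantCone T (aug R Γ ^ (n + 2)) (aug R Γ ^ (n + 1)) (Q n))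
    {a b : Γ} (ha : a ∈ augCone Q) (hb : b ∈ augCone Q) : a * b ∈ augCone Q := by
  obtain ⟨n, ha⟩ := ha
  obtain ⟨m, hb⟩ := hb
  have hab {k : ℕ} (hk : k ≤ n + m) : subOne R a * subOne R b ∈ aug R Γ ^ (k + 2) :=
    mul_mem_aug_pow (by omega) ((hQ n).mem ha) ((hQ m).mem hb)
  rcases lt_trichotomy n m with h | rfl | h
  · refine ⟨n, ?_⟩
    rw [subOne_mul, add_assoc]
    exact (hQ n).add_mem_of_mem ha
      (add_mem (antitone_aug_pow_succ R Γ h ((hQ m).mem hb)) (hab (by omega)))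
  · refine ⟨n, ?_⟩
    rw [subOne_mul]
    exact (hQ n).add_mem_of_mem ((hQ n).add_mem ha hb) (hab (by omega))
  · refine ⟨m, ?_⟩
    rw [subOne_mul, add_comm (subOne R a), add_assoc]
    exact (hQ m).add_mem_of_mem hb
      (add_mem (antitone_aug_pow_succ R Γ h ((hQ n).mem ha)) (hab (by omega)))

lemma mem_or_inv_mem_augCone
    (hQ : ∀ n, IsInvariantCone T (aug R Γ ^ (n + 2)) (aug R Γ ^ (n + 1)) (Q n)) {a : Γ}
    (ha : ¬ IsResidual R a) : a ∈ augCone Q ∨ a⁻¹ ∈ augCone Q := by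
  obtain ⟨n, hmem, hnot⟩ := exists_subOne_mem_notMem ha
  refine ((hQ n).mem_or_neg_mem hmem hnot).imp (fun h => ⟨n, h⟩) fun h => ⟨n, ?_⟩
  rw [subOne_inv, sub_eq_add_neg]
  exact (hQ n).add_mem_of_mem h
    (neg_mem (mul_mem_aug_pow (by omega) (subOne_mem_aug_pow_one a⁻¹) hmem))

lemma conj_mem_augCone (hQ : ∀ n, IsInvariantCone T (aug R Γ ^ (n + 2)) (aug R Γ ^ (n + 1)) (Q n))
    {a : Γ} (ha : a ∈ augCone Q) (b : Γ) : b * a * b⁻¹ ∈ augCone Q := by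
  obtain ⟨n, ha⟩ := ha
  have hmem := (hQ n).mem ha
  have hba : subOne R b * subOne R a ∈ aug R Γ ^ (n + 2) :=
    mul_mem_aug_pow (by omega) (subOne_mem_aug_pow_one b) hmem
  refine ⟨n, subOne_conj (R := R) a b ▸ (hQ n).add_mem_of_mem ha (add_mem hba ?_)⟩
  exact mul_mem_aug_pow le_rfl (add_mem hmem (antitone_aug_pow_succ R Γ n.le_succ hba))
    (subOne_mem_aug_pow_one b⁻¹)

lemma isPositiveCone_augCone
    (hQ : ∀ n, IsInvariantCone T (aug R Γ ^ (n + 2)) (aug R Γ ^ (n + 1)) (Q n))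
    (hres : ∀ g : Γ, IsResidual R g → g = 1) : IsPositiveCone (augCone Q) where
  one_notMem := by
    rintro ⟨n, hn⟩
    exact (hQ n).notMem hn (subOne_one (R := R) (Γ := Γ) ▸ zero_mem _)
  mul_mem := mul_mem_augCone hQ
  mem_or_inv_mem := fun ha => mem_or_inv_mem_augCone hQ (mt (hres _) ha)
  conj_mem := conj_mem_augCone hQ

variable {K : Type*} [Field K] [LinearOrder K] [IsStrictOrderedRing K] {τ : Γ →* Γ}

lemma aug_pow_chain
    (h : Relation.ReflTransGen (PositiveStep (MonoidAlgebra.mapDomainAlgHom K K τ))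
      (aug K Γ ^ 2) (aug K Γ)) (n : ℕ) :
    Relation.ReflTransGen (PositiveStep (MonoidAlgebra.mapDomainAlgHom K K τ))
      (aug K Γ ^ (n + 2)) (aug K Γ ^ (n + 1)) := by
  induction n with
  | zero => rwa [zero_add, zero_add, pow_one]
  | succ n ih =>
    have hpow : aug K Γ ^ (n + 1 + 2) = aug K Γ ^ 2 * aug K Γ ^ (n + 1) := by
      rw [← pow_add, add_comm]
    rw [hpow, pow_succ' _ (n + 1)]
    refine chain_mul h ih (fun a => mapDomainAlgHom_mem_aug_pow τ (n + 1)) (le_of_eq ?_)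
    rw [← hpow, ← pow_succ']

theorem exists_isPositiveCone_of_chain (hres : ∀ g : Γ, IsResidual K g → g = 1)
    (h : Relation.ReflTransGen (PositiveStep (MonoidAlgebra.mapDomainAlgHom K K τ))
      (aug K Γ ^ 2) (aug K Γ)) :
    ∃ P : Set Γ, IsPositiveCone P ∧ ∀ a ∈ P, τ a ∈ P := by
  choose Q hQ using fun n => exists_isInvariantCone_of_chain (aug_pow_chain h n)
  refine ⟨augCone Q, isPositiveCone_augCone hQ hres, ?_⟩
  rintro a ⟨n, hn⟩
  exact ⟨n, mapDomainAlgHom_subOne (R := K) τ a ▸ (hQ n).map_mem hn⟩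

end AugCone

section BaseChain

open Polynomial

variable {R Γ : Type*} [CommRing R] [Group Γ] {τ : Γ →* Γ} {x : ℕ → Γ}

variable (R) in
/-- The linear map `X ^ k ↦ x k - 1`, under which multiplication by `X` on polynomials corresponds
to the shift `x k ↦ x (k + 1)`. -/
noncomputable def evAug (x : ℕ → Γ) : R[X] →ₗ[R] MonoidAlgebra R Γ :=
  (Polynomial.basisMonomials R).constr R fun k => subOne R (x k)

lemma evAug_X_pow (k : ℕ) : evAug R x (X ^ k) = subOne R (x k) := by
  rw [X_pow_eq_monomial, ← congrFun (coe_basisMonomials R) k]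
  exact (Polynomial.basisMonomials R).constr_basis R _ k

lemma evAug_mem_aug (p : R[X]) : evAug R x p ∈ aug R Γ := by
  rw [evAug, Module.Basis.constr_apply]
  exact sum_mem fun k _ => Submodule.smul_mem _ _ (subOne_mem_aug _)

lemma mapDomainAlgHom_evAug (hτ : ∀ k, τ (x k) = x (k + 1)) (p : R[X]) :
    MonoidAlgebra.mapDomainAlgHom R R τ (evAug R x p) = evAug R x (X * p) := by
  induction p using Polynomial.induction_on' with
  | add p q hp hq => rw [mul_add, map_add, map_add, map_add, hp, hq]
  | monomial k a =>
    rw [← C_mul_X_pow_eq_monomial, ← smul_eq_C_mul, mul_smul_comm, map_smul, map_smul, map_smul,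
      ← pow_succ', evAug_X_pow, evAug_X_pow, mapDomainAlgHom_subOne, hτ]

variable (R) in
/-- The square of the augmentation ideal together with the image under `evAug` of the ideal
generated by `p`. -/
noncomputable def augPart (x : ℕ → Γ) (p : R[X]) : Submodule R (MonoidAlgebra R Γ) :=
  aug R Γ ^ 2 ⊔ LinearMap.range (evAug R x ∘ₗ LinearMap.mulLeft R p)

lemma augPart_one (hx : Subgroup.closure (Set.range x) = ⊤) : augPart R x 1 = aug R Γ := by
  have hsq : aug R Γ ^ 2 ≤ aug R Γ := (sq _).trans_le aug_mul_aug_le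
  refine le_antisymm (sup_le hsq ?_) ((aug_le_of_closure_eq_top hx).trans (sup_le ?_ le_sup_left))
  · rintro _ ⟨r, rfl⟩
    rw [LinearMap.comp_apply]
    exact evAug_mem_aug _
  · refine le_sup_of_le_right (Submodule.span_le.2 ?_)
    rintro _ ⟨k, rfl⟩
    exact ⟨X ^ k, by rw [LinearMap.comp_apply, LinearMap.mulLeft_apply, one_mul, evAug_X_pow]⟩

lemma augPart_eq_aug_sq {p : R[X]} (hp : ∀ k, evAug R x (p * X ^ k) ∈ aug R Γ ^ 2) :
    augPart R x p = aug R Γ ^ 2 := by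
  refine sup_eq_left.2 ?_
  rintro _ ⟨r, rfl⟩
  rw [LinearMap.comp_apply, LinearMap.mulLeft_apply]
  induction r using Polynomial.induction_on' with
  | add q r hq hr =>
    rw [mul_add, map_add]
    exact add_mem hq hr
  | monomial k a =>
    rw [← C_mul_X_pow_eq_monomial, ← smul_eq_C_mul, mul_smul_comm, map_smul]
    exact Submodule.smul_mem _ _ (hp k)

variable {K : Type*} [Field K] [LinearOrder K]

lemma positiveStep_augPart (hτ : ∀ k, τ (x k) = x (k + 1)) (p : K[X]) {μ : K} (hμ : 0 < μ) :
    PositiveStep (MonoidAlgebra.mapDomainAlgHom K K τ) (augPart K x ((X - C μ) * p))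
      (augPart K x p) := by
  refine ⟨sup_le_sup_left ?_ _, μ, hμ, fun a ha => ?_⟩
  · rintro _ ⟨r, rfl⟩
    refine ⟨(X - C μ) * r, ?_⟩
    simp only [LinearMap.comp_apply, LinearMap.mulLeft_apply]
    rw [mul_left_comm, mul_assoc]
  · obtain ⟨i, hi, _, ⟨r, rfl⟩, rfl⟩ := Submodule.mem_sup.1 ha
    refine Submodule.mem_sup.2 ⟨_, sub_mem (mapDomainAlgHom_mem_aug_pow τ 2 hi)
      (Submodule.smul_mem _ μ hi), _, ⟨r, rfl⟩, ?_⟩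
    have hr : (X - C μ) * p * r = X * (p * r) - μ • (p * r) := by
      rw [smul_eq_C_mul, ← sub_mul, mul_assoc]
    simp only [LinearMap.comp_apply, LinearMap.mulLeft_apply]
    rw [hr, map_sub, map_smul, map_add, smul_add, mapDomainAlgHom_evAug hτ]
    abel

lemma aug_chain (hx : Subgroup.closure (Set.range x) = ⊤) (hτ : ∀ k, τ (x k) = x (k + 1))
    (s : Multiset K) (hs : ∀ μ ∈ s, 0 < μ)
    (hA : ∀ k, evAug K x ((s.map fun μ => X - C μ).prod * X ^ k) ∈ aug K Γ ^ 2) :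
    Relation.ReflTransGen (PositiveStep (MonoidAlgebra.mapDomainAlgHom K K τ))
      (aug K Γ ^ 2) (aug K Γ) := by
  rw [← augPart_eq_aug_sq hA, ← augPart_one (R := K) hx]
  clear hA
  induction s using Multiset.induction_on with
  | empty => rw [Multiset.map_zero, Multiset.prod_zero]
  | cons μ s ih =>
    rw [Multiset.map_cons, Multiset.prod_cons]
    exact (ih fun ν hν => hs ν (Multiset.mem_cons_of_mem hν)).head
      (positiveStep_augPart hτ _ (hs μ (Multiset.mem_cons_self _ _)))

end BaseChain

/-! ### Towers of translated relators -/

section Tower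

variable {n : ℕ} {m : Fin n → ℤ} {κ : Fin n → ℕ} {δ : ℕ} {i₀ : Fin n} {U : Type*} [Group U]

/-- The `l`-th translate of the word `∏ i, u (κ i) ^ m i` in the terms of a sequence `u`. -/
def relWord (m : Fin n → ℤ) (κ : Fin n → ℕ) (u : ℕ → U) (l : ℕ) : U :=
  ((List.finRange n).map fun i => u (κ i + l) ^ m i).prod

lemma map_relWord {V : Type*} [Group V] (φ : U →* V) (u : ℕ → U) (l : ℕ) :
    φ (relWord m κ u l) = relWord m κ (φ ∘ u) l := by
  simp [relWord, map_list_prod, Function.comp_def]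

lemma IsLog.map_relWord {A : Type*} [AddCommGroup A] {f : U → A} (hf : IsLog f) (u : ℕ → U)
    (l : ℕ) : f (relWord m κ u l) = ∑ i, m i • f (u (κ i + l)) := by
  change (hf.toHom (relWord m κ u l)).toAdd = _
  rw [relWord, map_list_prod, List.map_map, ← Fin.prod_univ_def, toAdd_prod]
  exact Finset.sum_congr rfl fun i _ => hf.map_zpow _ _

/-- The group generated by `x 0, x 1, …` subject to all translates of one relator. -/
abbrev Tower (m : Fin n → ℤ) (κ : Fin n → ℕ) : Type :=
  PresentedGroup (Set.range (relWord m κ FreeGroup.of))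

/-- The generators of `Tower m κ`. -/
def towerGen (m : Fin n → ℤ) (κ : Fin n → ℕ) (k : ℕ) : Tower m κ := PresentedGroup.of k

lemma closure_range_towerGen : Subgroup.closure (Set.range (towerGen m κ)) = ⊤ :=
  PresentedGroup.closure_range_of _

lemma relWord_towerGen (l : ℕ) : relWord m κ (towerGen m κ) l = 1 :=
  (map_relWord (PresentedGroup.mk _) FreeGroup.of l).symm.trans
    (PresentedGroup.one_of_mem ⟨l, rfl⟩)

/-- The homomorphism out of `Tower m κ` given by a solution of all the relations. -/
def towerLift (u : ℕ → U) (hu : ∀ l, relWord m κ u l = 1) : Tower m κ →* U :=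
  PresentedGroup.toGroup (f := u) (by
    rintro _ ⟨l, rfl⟩
    rw [map_relWord, ← hu l]
    congr 1
    exact funext fun k => FreeGroup.lift_apply_of)

lemma towerLift_gen (u : ℕ → U) (hu : ∀ l, relWord m κ u l = 1) (k : ℕ) :
    towerLift u hu (towerGen m κ k) = u k :=
  PresentedGroup.toGroup.of _

/-- The endomorphism of `Tower m κ` sending each generator to the next one. -/
def towerShift (m : Fin n → ℤ) (κ : Fin n → ℕ) : Tower m κ →* Tower m κ :=
  towerLift (fun k => towerGen m κ (k + 1)) fun l => relWord_towerGen (l + 1)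

lemma towerShift_gen (k : ℕ) : towerShift m κ (towerGen m κ k) = towerGen m κ (k + 1) :=
  towerLift_gen _ _ k

/-- The index `i₀` is the only one at which `κ` attains its maximum `δ`. -/
def IsTop (κ : Fin n → ℕ) (δ : ℕ) (i₀ : Fin n) : Prop := κ i₀ = δ ∧ ∀ i ≠ i₀, κ i < δ

lemma IsTop.le (h : IsTop κ δ i₀) (i : Fin n) : κ i ≤ δ := by
  rcases eq_or_ne i i₀ with rfl | hi
  · exact h.1.le
  · exact (h.2 i hi).le

lemma exists_relWord_eq_one_iff (h : IsTop κ δ i₀) (m : Fin n → ℤ) :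
    ∃ L : List (Fin n), (∀ i ∈ L, κ i < δ) ∧ ∀ (u : ℕ → U) (l : ℕ),
      relWord m κ u l = 1 ↔ u (δ + l) ^ m i₀ = (L.map fun i => u (κ i + l) ^ m i).prod⁻¹ := by
  obtain ⟨L₁, L₂, hL⟩ := List.append_of_mem (List.mem_finRange i₀)
  have hnodup := List.nodup_middle.1 (hL ▸ List.nodup_finRange n)
  rw [List.nodup_cons, List.mem_append, or_comm, ← List.mem_append] at hnodup
  refine ⟨L₂ ++ L₁, fun i hi => h.2 i (ne_of_mem_of_not_mem hi hnodup.1), fun u l => ?_⟩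
  rw [relWord, hL, List.map_append, List.prod_append, List.map_cons, List.prod_cons, h.1,
    List.map_append, List.prod_append, mul_eq_one_iff_inv_eq, mul_inv_rev, eq_mul_inv_iff_mul_eq,
    eq_comm]

lemma exists_zpow_eq {a : ℤ} (hU : ∀ u : U, ∃ v, v ^ a.natAbs = u) (u : U) : ∃ v, v ^ a = u := by
  rcases Int.natAbs_eq a with h | h
  · obtain ⟨v, hv⟩ := hU u
    exact ⟨v, by rw [h, zpow_natCast, hv]⟩
  · obtain ⟨v, hv⟩ := hU u⁻¹
    exact ⟨v, by rw [h, zpow_neg, zpow_natCast, hv, inv_inv]⟩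

lemma exists_seq_eq_of_recursion {α : Type*} [Nonempty α] (F : ℕ → (ℕ → α) → α)
    (hF : ∀ k g g', (∀ j < k, g j = g' j) → F k g = F k g') : ∃ u : ℕ → α, ∀ k, u k = F k u := by
  let step (k : ℕ) (g : ∀ j < k, α) : α :=
    F k fun j => if hj : j < k then g j hj else Classical.arbitrary α
  refine ⟨fun k => Nat.strongRec step k, fun k => ?_⟩
  beta_reduce
  rw [Nat.strongRec_eq]
  exact hF k _ _ fun j hj => dif_pos hj

lemma exists_relWord_eq_one (h : IsTop κ δ i₀) (hU : ∀ u : U, ∃ v, v ^ (m i₀).natAbs = u)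
    (f : ℕ → U) : ∃ u : ℕ → U, (∀ l, relWord m κ u l = 1) ∧ ∀ j < δ, u j = f j := by
  obtain ⟨L, hL, hrel⟩ := exists_relWord_eq_one_iff (U := U) h m
  choose root hroot using exists_zpow_eq hU
  obtain ⟨u, hu⟩ := exists_seq_eq_of_recursion (fun k (g : ℕ → U) => if k < δ then f k else
    root (L.map fun i => g (κ i + (k - δ)) ^ m i).prod⁻¹) fun k g g' hg => by
      split_ifs with hk
      · rfl
      · refine congrArg (fun w : List U => root w.prod⁻¹) (List.map_congr_left fun i hi => ?_)
        rw [hg _ (by have := hL i hi; omega)]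
  refine ⟨u, fun l => (hrel u l).2 ?_, fun j hj => by rw [hu, if_pos hj]⟩
  rw [hu (δ + l), if_neg (by omega), Nat.add_sub_cancel_left, hroot]

lemma exists_tower_hom (h : IsTop κ δ i₀) (hU : ∀ u : U, ∃ v, v ^ (m i₀).natAbs = u)
    (f : ℕ → U) : ∃ ρ : Tower m κ →* U, ∀ j < δ, ρ (towerGen m κ j) = f j := by
  obtain ⟨u, hrel, hu⟩ := exists_relWord_eq_one h hU f
  exact ⟨towerLift u hrel, fun j hj => (towerLift_gen u hrel j).trans (hu j hj)⟩

lemma towerGen_pow_mem_stage (h : IsTop κ δ i₀) {k : ℕ} (hk : δ ≤ k) :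
    towerGen m κ k ^ (m i₀).natAbs ∈ stage (towerGen m κ) k := by
  obtain ⟨L, hL, hrel⟩ := exists_relWord_eq_one_iff (U := Tower m κ) h m
  have hpow := (hrel _ _).1 (relWord_towerGen (k - δ))
  rw [Nat.add_sub_cancel' hk] at hpow
  have hmem : towerGen m κ k ^ m i₀ ∈ stage (towerGen m κ) k := by
    rw [hpow]
    refine inv_mem (Subgroup.list_prod_mem _ fun y hy => ?_)
    obtain ⟨i, hi, rfl⟩ := List.mem_map.1 hy
    exact zpow_mem (gen_mem_stage (by have := hL i hi; omega)) _
  rcases Int.natAbs_eq (m i₀) with habs | habs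
  · rwa [habs, zpow_natCast] at hmem
  · rwa [habs, zpow_neg, zpow_natCast, inv_mem_iff] at hmem

end Tower

/-! ### Divisibility by polynomials with primitive tail -/

section Arithmetic

open Polynomial

lemma isPrimitive_of_eraseLead {R : Type*} [CommRing R] {A : R[X]} (hA : A.eraseLead.IsPrimitive) :
    A.IsPrimitive := fun r hr => hA r <| C_dvd_iff_dvd_coeff _ _ |>.2 fun k => by
  rw [eraseLead_coeff]
  split_ifs
  · exact dvd_zero r
  · exact (C_dvd_iff_dvd_coeff _ _).1 hr k

lemma eraseLead_map_eq_zero_of_dvd_X_pow {R S : Type*} [CommRing R] [CommRing S] [IsDomain S]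
    {f : R →+* S} {A : R[X]} (hA : f A.leadingCoeff ≠ 0) {k : ℕ} (h : A.map f ∣ X ^ k) :
    A.eraseLead.map f = 0 := by
  obtain ⟨j, -, hj⟩ := (dvd_prime_pow prime_X k).1 h
  have hdeg : A.natDegree = j := by
    rw [← natDegree_map_of_leadingCoeff_ne_zero f hA,
      natDegree_eq_of_degree_eq (degree_eq_degree_of_associated hj), natDegree_X_pow]
  ext i
  rw [coeff_map, coeff_zero, eraseLead_coeff]
  split_ifs with hi
  · exact map_zero f
  · rcases lt_or_gt_of_ne hi with hlt | hgt
    · rw [← coeff_map]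
      exact X_pow_dvd_iff.1 hj.symm.dvd i (hdeg ▸ hlt)
    · rw [coeff_eq_zero_of_natDegree_lt hgt, map_zero]

lemma dvd_den_mul_sub_num_mul_X_pow {A v : ℤ[X]} (hA : A.IsPrimitive) {k : ℕ} {q : ℚ}
    (h : A.map (Int.castRingHom ℚ) ∣ v.map (Int.castRingHom ℚ) - C q * X ^ k) :
    A ∣ C (q.den : ℤ) * v - C q.num * X ^ k := by
  have hmap : (C (q.den : ℤ) * v - C q.num * X ^ k).map (Int.castRingHom ℚ) =
      C (q.den : ℚ) * (v.map (Int.castRingHom ℚ) - C q * X ^ k) := by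
    rw [mul_sub, ← mul_assoc, ← C_mul, Rat.den_mul_eq_num]
    simp
  rw [IsPrimitive.Int.dvd_iff_map_cast_dvd_map_cast _ _ hA, hmap]
  exact h.mul_left _

lemma leadingCoeff_dvd_num {A v : ℤ[X]} {k : ℕ} (hv : v.degree < k) {q : ℚ}
    (h : A ∣ C (q.den : ℤ) * v - C q.num * X ^ k) : A.leadingCoeff ∣ q.num := by
  rcases eq_or_ne q 0 with rfl | hq
  · exact dvd_zero _
  have hnum : q.num ≠ 0 := Rat.num_ne_zero.2 hq
  have hdeg : (C (q.den : ℤ) * v).degree < (C q.num * X ^ k).degree := by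
    rw [degree_C_mul_X_pow k hnum]
    rwa [degree_C_mul (by exact_mod_cast q.den_nz)]
  have hlead := leadingCoeff_dvd_leadingCoeff h
  rwa [leadingCoeff_sub_of_degree_lt' hdeg, leadingCoeff_C_mul_X_pow, dvd_neg] at hlead

lemma den_eq_one_of_dvd {A v : ℤ[X]} (hA : A.eraseLead.IsPrimitive) {k : ℕ} {q : ℚ}
    (hnum : A.leadingCoeff ∣ q.num) (h : A ∣ C (q.den : ℤ) * v - C q.num * X ^ k) :
    q.den = 1 := by
  by_contra hne
  obtain ⟨p, hp, hpden⟩ := Nat.exists_prime_and_dvd hne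
  have := Fact.mk hp
  have hpnum : ¬ (p : ℤ) ∣ q.num := fun hdvd => hp.one_lt.ne' <| Nat.dvd_one.1 <|
    q.reduced ▸ Nat.dvd_gcd (Int.natCast_dvd.1 hdvd) hpden
  let f : ℤ →+* ZMod p := Int.castRingHom (ZMod p)
  have hf (z : ℤ) : f z = 0 ↔ (p : ℤ) ∣ z := ZMod.intCast_zmod_eq_zero_iff_dvd z p
  -- A divisor of `X ^ k` over a field is a monomial, so `p` divides all lower coefficients of `A`.
  have hdvd : A.map f ∣ X ^ k := by
    have hmod := Polynomial.map_dvd f h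
    have hden : f (q.den : ℤ) = 0 := (hf _).2 (by exact_mod_cast hpden)
    rw [Polynomial.map_sub, Polynomial.map_mul, map_C, hden, C_0, zero_mul, zero_sub, dvd_neg,
      Polynomial.map_mul, map_C, Polynomial.map_pow, map_X] at hmod
    exact (isUnit_C.2 (Ne.isUnit (mt (hf _).1 hpnum))).dvd_mul_left.1 hmod
  have hzero := eraseLead_map_eq_zero_of_dvd_X_pow
    (mt (hf _).1 fun hlead => hpnum (hlead.trans hnum)) hdvd
  refine (Nat.prime_iff_prime_int.1 hp).not_isUnit (hA p ((C_dvd_iff_dvd_coeff _ _).2 fun i => ?_))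
  rw [← hf, ← coeff_map, hzero, coeff_zero]

lemma exists_eq_mul_leadingCoeff {A v : ℤ[X]} (hA : A.eraseLead.IsPrimitive) {k : ℕ}
    (hv : v.degree < k) {q : ℚ}
    (h : A.map (Int.castRingHom ℚ) ∣ v.map (Int.castRingHom ℚ) - C q * X ^ k) :
    ∃ j : ℤ, q = j * A.leadingCoeff := by
  have hdvd := dvd_den_mul_sub_num_mul_X_pow (isPrimitive_of_eraseLead hA) h
  have hnum := leadingCoeff_dvd_num hv hdvd
  have hden := den_eq_one_of_dvd hA hnum hdvd
  obtain ⟨j, hj⟩ := hnum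
  exact ⟨j, by rw [← Rat.coe_int_num_of_den_eq_one hden, hj, Int.cast_mul, mul_comm]⟩

lemma eq_zero_of_dvd_sub_C_mul_X_pow {K : Type*} [Field K] {A v : K[X]} {k : ℕ}
    (hk : k < A.natDegree) (hv : v.degree < k) {q : K} (h : A ∣ v - C q * X ^ k) : q = 0 := by
  have hk' : (k : WithBot ℕ) < A.degree := by
    rwa [degree_eq_natDegree (ne_zero_of_natDegree_gt hk), Nat.cast_lt]
  have hzero : v - C q * X ^ k = 0 := eq_zero_of_dvd_of_degree_lt h <|
    (degree_sub_le _ _).trans_lt (max_lt (hv.trans hk') ((degree_C_mul_X_pow_le k q).trans_lt hk'))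
  have hcoeff := congrArg (fun p => coeff p k) (sub_eq_zero.1 hzero)
  rw [coeff_eq_zero_of_degree_lt hv, coeff_C_mul_X_pow, if_pos rfl] at hcoeff
  exact hcoeff.symm

lemma splits_of_forall_aeval_im_eq_zero {A : ℝ[X]} (h : ∀ z : ℂ, aeval z A = 0 → z.im = 0) :
    A.Splits := by
  refine Splits.of_splits_map Complex.ofRealHom (IsAlgClosed.splits _) fun z hz => ⟨z.re, ?_⟩
  have hroot : aeval z A = 0 := by
    rw [aeval_def, ← eval_map]
    exact (mem_roots'.1 hz).2
  exact Complex.ext rfl (h z hroot).symm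

end Arithmetic

/-! ### The tower as a root tower -/

section TowerInstance

open Polynomial

variable {n : ℕ} {m : Fin n → ℤ} {κ : Fin n → ℕ} {δ : ℕ} {i₀ : Fin n}

/-- The polynomial recording the exponent sums in the relators of `Tower m κ`. -/
noncomputable def relPoly (m : Fin n → ℤ) (κ : Fin n → ℕ) : ℤ[X] := ∑ i, C (m i) * X ^ κ i

lemma coeff_relPoly (k : ℕ) : (relPoly m κ).coeff k = ∑ i with κ i = k, m i := by
  simp only [relPoly, finsetSum_coeff, coeff_C_mul_X_pow, Finset.sum_filter, eq_comm]

lemma sum_zsmul_X_pow (R : Type*) [CommRing R] (l : ℕ) :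
    ∑ i, m i • (X ^ (κ i + l) : R[X]) = (relPoly m κ).map (Int.castRingHom R) * X ^ l := by
  simp [relPoly, Polynomial.map_sum, Finset.sum_mul, pow_add, mul_assoc]

lemma coeff_relPoly_top (h : IsTop κ δ i₀) : (relPoly m κ).coeff δ = m i₀ := by
  rw [coeff_relPoly, Finset.sum_filter, Finset.sum_eq_single i₀, if_pos h.1]
  · exact fun i _ hi => if_neg (h.2 i hi).ne
  · exact fun hi => absurd (Finset.mem_univ _) hi

lemma natDegree_relPoly_le (h : IsTop κ δ i₀) : (relPoly m κ).natDegree ≤ δ :=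
  natDegree_sum_le_of_forall_le _ _ fun i _ => (natDegree_C_mul_X_pow_le _ _).trans (h.le i)

lemma natDegree_relPoly (h : IsTop κ δ i₀) (hm : m i₀ ≠ 0) : (relPoly m κ).natDegree = δ :=
  natDegree_eq_of_le_of_coeff_ne_zero (natDegree_relPoly_le h) (by rwa [coeff_relPoly_top h])

lemma leadingCoeff_relPoly (h : IsTop κ δ i₀) (hm : m i₀ ≠ 0) :
    (relPoly m κ).leadingCoeff = m i₀ := by
  rw [leadingCoeff, natDegree_relPoly h hm, coeff_relPoly_top h]

/-- The rationalised abelianisation of `Tower m κ`. -/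
abbrev TowerAb (m : Fin n → ℤ) (κ : Fin n → ℕ) : Type :=
  AdjoinRoot ((relPoly m κ).map (Int.castRingHom ℚ))

lemma finiteDimensional_towerAb (h : IsTop κ δ i₀) (hm : m i₀ ≠ 0) :
    FiniteDimensional ℚ (TowerAb m κ) := by
  refine (AdjoinRoot.powerBasis ?_).finite
  rw [Polynomial.map_ne_zero_iff (RingHom.injective_int _), ← leadingCoeff_ne_zero,
    leadingCoeff_relPoly h hm]
  exact hm

/-- The abelianisation map of `Tower m κ`, sending the `k`-th generator to `X ^ k`. -/
noncomputable def towerAb (m : Fin n → ℤ) (κ : Fin n → ℕ) (g : Tower m κ) : TowerAb m κ :=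
  (towerLift (fun k => Multiplicative.ofAdd (AdjoinRoot.mk _ (X ^ k))) (fun l => by
    have hlog : IsLog (Multiplicative.toAdd : Multiplicative (TowerAb m κ) → _) := fun _ _ => rfl
    apply Multiplicative.toAdd.injective
    rw [hlog.map_relWord, toAdd_one]
    simp only [toAdd_ofAdd, ← map_zsmul, ← map_sum]
    rw [sum_zsmul_X_pow, map_mul, AdjoinRoot.mk_self, zero_mul]) g).toAdd

lemma towerAb_gen (k : ℕ) : towerAb m κ (towerGen m κ k) = AdjoinRoot.mk _ (X ^ k) := by
  rw [towerAb, towerLift_gen, toAdd_ofAdd]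

lemma isLog_towerAb : IsLog (towerAb m κ) := fun g h => by
  rw [towerAb, map_mul, toAdd_mul]
  rfl

lemma exists_towerAb_eq_mk_of_mem_stage {k : ℕ} {g : Tower m κ} (hg : g ∈ stage (towerGen m κ) k) :
    ∃ v : ℤ[X], v.degree < k ∧ towerAb m κ g = AdjoinRoot.mk _ (v.map (Int.castRingHom ℚ)) := by
  induction hg using Subgroup.closure_induction with
  | mem y hy =>
    obtain ⟨j, hj, rfl⟩ := hy
    refine ⟨X ^ j, ?_, ?_⟩
    · rw [degree_X_pow]
      exact_mod_cast hj
    · rw [towerAb_gen, Polynomial.map_pow, map_X]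
  | one =>
    exact ⟨0, WithBot.bot_lt_coe k, by
      rw [isLog_towerAb.map_one, Polynomial.map_zero, map_zero]⟩
  | mul a b _ _ ha hb =>
    obtain ⟨v, hv, hv'⟩ := ha
    obtain ⟨w, hw, hw'⟩ := hb
    exact ⟨v + w, (degree_add_le _ _).trans_lt (max_lt hv hw), by
      rw [isLog_towerAb, hv', hw', Polynomial.map_add, map_add]⟩
  | inv a _ ha =>
    obtain ⟨v, hv, hv'⟩ := ha
    exact ⟨-v, by rwa [degree_neg], by
      rw [isLog_towerAb.map_inv, hv', Polynomial.map_neg, map_neg]⟩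

lemma exists_eq_mul_stageOrder_of_towerAb_eq (h : IsTop κ δ i₀) (hm : m i₀ ≠ 0)
    (hp : (relPoly m κ).eraseLead.IsPrimitive) {k : ℕ} {g : Tower m κ}
    (hg : g ∈ stage (towerGen m κ) k) {q : ℚ}
    (hq : towerAb m κ g = q • towerAb m κ (towerGen m κ k)) :
    ∃ j : ℤ, q = j * (stageOrder δ (m i₀).natAbs k : ℚ) := by
  obtain ⟨v, hv, hgv⟩ := exists_towerAb_eq_mk_of_mem_stage hg
  have hdvd : (relPoly m κ).map (Int.castRingHom ℚ) ∣
      v.map (Int.castRingHom ℚ) - C q * X ^ k := by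
    rw [← AdjoinRoot.mk_eq_mk, ← hgv, hq, towerAb_gen, ← smul_eq_C_mul, AdjoinRoot.smul_mk]
  rw [stageOrder]
  split_ifs with hk
  · have hdeg : k < ((relPoly m κ).map (Int.castRingHom ℚ)).natDegree := by
      rwa [natDegree_map_eq_of_injective (RingHom.injective_int _), natDegree_relPoly h hm]
    rw [eq_zero_of_dvd_sub_C_mul_X_pow hdeg (degree_map_le.trans_lt hv) hdvd]
    exact ⟨0, by simp⟩
  · obtain ⟨j, hj⟩ := exists_eq_mul_leadingCoeff hp hv hdvd
    rw [leadingCoeff_relPoly h hm] at hj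
    refine ⟨j * (m i₀).sign, ?_⟩
    rw [hj, ← Int.cast_natCast (R := ℚ), ← Int.cast_mul, ← Int.cast_mul, mul_assoc,
      Int.sign_mul_natAbs]

lemma isRootTower_towerGen (h : IsTop κ δ i₀) (hm : m i₀ ≠ 0)
    (hp : (relPoly m κ).eraseLead.IsPrimitive) :
    IsRootTower (towerGen m κ) δ (m i₀).natAbs (towerAb m κ) where
  isLog := isLog_towerAb
  closure_range := closure_range_towerGen
  pos := Int.natAbs_pos.2 hm
  pow_mem _ hk := towerGen_pow_mem_stage h hk
  exists_hom _ _ hU f := exists_tower_hom h hU f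
  lattice _ _ hg _ hq := exists_eq_mul_stageOrder_of_towerAb_eq h hm hp hg hq

lemma isLog_mkQ_subOne (R Γ : Type*) [CommRing R] [Group Γ] :
    IsLog fun g : Γ => (aug R Γ ^ 2).mkQ (subOne R g) := fun g h => by
  have hmem : subOne R g * subOne R h ∈ aug R Γ ^ 2 :=
    pow_two (aug R Γ) ▸ Submodule.mul_mem_mul (subOne_mem_aug g) (subOne_mem_aug h)
  beta_reduce
  rw [subOne_mul, map_add, map_add, Submodule.mkQ_apply _ (_ * _),
    (Submodule.Quotient.mk_eq_zero _).2 hmem, add_zero]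

lemma evAug_relPoly_mem (R : Type*) [CommRing R] (l : ℕ) :
    evAug R (towerGen m κ) ((relPoly m κ).map (Int.castRingHom R) * X ^ l) ∈
      aug R (Tower m κ) ^ 2 := by
  have hlog := isLog_mkQ_subOne R (Tower m κ)
  have hrel := hlog.map_relWord (m := m) (κ := κ) (towerGen m κ) l
  rw [relWord_towerGen, hlog.map_one] at hrel
  rw [← sum_zsmul_X_pow, ← Submodule.Quotient.mk_eq_zero, ← Submodule.mkQ_apply, map_sum, map_sum,
    hrel]
  exact Finset.sum_congr rfl fun i _ => by rw [map_zsmul, map_zsmul, evAug_X_pow]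

theorem exists_isPositiveCone_towerShift (h : IsTop κ δ i₀) (hm : m i₀ ≠ 0)
    (hp : (relPoly m κ).eraseLead.IsPrimitive)
    (hroots : ∀ z : ℂ, aeval z (relPoly m κ) = 0 → z.im = 0 ∧ 0 < z.re) :
    ∃ P : Set (Tower m κ), IsPositiveCone P ∧ ∀ a ∈ P, towerShift m κ a ∈ P := by
  have := finiteDimensional_towerAb h hm
  let A : ℝ[X] := (relPoly m κ).map (Int.castRingHom ℝ)
  have hA : A.leadingCoeff ≠ 0 := by
    rw [leadingCoeff_map_of_injective (RingHom.injective_int _), leadingCoeff_relPoly h hm]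
    exact Int.cast_ne_zero.2 hm
  have haeval (z : ℂ) (hz : aeval z A = 0) : z.im = 0 ∧ 0 < z.re :=
    hroots z (by rwa [← aeval_map_algebraMap ℝ z (relPoly m κ)])
  have hsplits : A.Splits := splits_of_forall_aeval_im_eq_zero fun z hz => (haeval z hz).1
  refine exists_isPositiveCone_of_chain
    (fun g => (isRootTower_towerGen h hm hp).eq_one_of_isResidual)
    (aug_chain closure_range_towerGen towerShift_gen A.roots (fun μ hμ => ?_) fun k => ?_)
  · have hroot : aeval (μ : ℂ) A = 0 := by
      rw [← Complex.coe_algebraMap, aeval_algebraMap_apply, coe_aeval_eq_eval,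
        (mem_roots'.1 hμ).2.eq_zero, map_zero]
    exact (haeval μ hroot).2
  · have hmem := evAug_relPoly_mem (m := m) (κ := κ) ℝ k
    have hprod : A * X ^ k =
        A.leadingCoeff • ((A.roots.map fun μ => X - C μ).prod * X ^ k) := by
      rw [smul_eq_C_mul, ← mul_assoc, ← hsplits.eq_prod_roots]
    rw [hprod, map_smul] at hmem
    exact (Submodule.smul_mem_iff _ hA).1 hmem

end TowerInstance

universe u

/-! ### Bi-orders on ascending HNN extensions -/

lemma IsPositiveCone.isBiOrderable {G : Type*} [Group G] {P : Set G} (hP : IsPositiveCone P) :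
    IsBiOrderable G := by
  refine ⟨fun a b => a⁻¹ * b ∈ P, { trichotomous := ?_, irrefl := ?_, trans := ?_ }, ?_⟩
  · intro a b hab hba
    by_contra hne
    rcases hP.mem_or_inv_mem fun h => hne (inv_mul_eq_one.1 h) with h | h
    · exact hab h
    · exact hba (by rwa [mul_inv_rev, inv_inv] at h)
  · intro a h
    exact hP.one_notMem (by rwa [inv_mul_cancel] at h)
  · intro a b c h h'
    simpa [mul_assoc] using hP.mul_mem h h'
  · intro a b c h
    refine ⟨by simpa [mul_assoc] using h, ?_⟩
    simpa [mul_assoc] using hP.conj_mem h c⁻¹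

lemma isPositiveCone_of_ker {G A : Type*} [Group G] [CommGroup A] [LinearOrder A]
    [IsOrderedMonoid A] (f : G →* A) {N : Set G} (hker : ∀ a ∈ N, f a = 1) (hone : 1 ∉ N)
    (hmul : ∀ a ∈ N, ∀ b ∈ N, a * b ∈ N) (htot : ∀ a, f a = 1 → a ≠ 1 → a ∈ N ∨ a⁻¹ ∈ N)
    (hconj : ∀ a ∈ N, ∀ b, b * a * b⁻¹ ∈ N) : IsPositiveCone {a | 1 < f a ∨ a ∈ N} where
  one_notMem := by
    rintro (h | h)
    · exact lt_irrefl _ (h.trans_eq (map_one f))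
    · exact hone h
  mul_mem := by
    rintro a b (ha | ha) (hb | hb)
    · exact Or.inl ((one_lt_mul' ha hb).trans_eq (map_mul f a b).symm)
    · exact Or.inl (by rwa [map_mul, hker b hb, mul_one])
    · exact Or.inl (by rwa [map_mul, hker a ha, one_mul])
    · exact Or.inr (hmul a ha b hb)
  mem_or_inv_mem {a} ha := by
    rcases lt_trichotomy 1 (f a) with h | h | h
    · exact Or.inl (Or.inl h)
    · exact (htot a h.symm ha).imp Or.inr Or.inr
    · exact Or.inr (Or.inl (by rwa [map_inv, one_lt_inv']))
  conj_mem := by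
    rintro a (ha | ha) b
    · exact Or.inl (by rwa [map_mul, map_mul, map_inv, mul_inv_cancel_comm])
    · exact Or.inr (hconj a ha b)

section Extension

variable {G Γ : Type*} [Group G] [Group Γ] {ι : Γ →* G} {τ : Γ →* Γ} {t : G} {P : Set Γ}

lemma map_mul_pow (hτ : ∀ γ, ι γ * t = t * ι (τ γ)) (γ : Γ) (j : ℕ) :
    ι γ * t ^ j = t ^ j * ι (τ^[j] γ) := by
  induction j generalizing γ with
  | zero => simp
  | succ j ih =>
    rw [pow_succ', ← mul_assoc, hτ, mul_assoc, ih, ← mul_assoc, Function.iterate_succ_apply]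

lemma map_eq_pow_conj (hτ : ∀ γ, ι γ * t = t * ι (τ γ)) (γ : Γ) (j : ℕ) :
    ι γ = t ^ j * ι (τ^[j] γ) * (t ^ j)⁻¹ :=
  eq_mul_inv_of_mul_eq (map_mul_pow hτ γ j)

lemma exists_pow_mul_map_mul (hτ : ∀ γ, ι γ * t = t * ι (τ γ))
    (hgen : Subgroup.closure (insert t (Set.range ι)) = ⊤) (g : G) :
    ∃ (j l : ℕ) (γ : Γ), g = t ^ j * ι γ * (t ^ l)⁻¹ := by
  have hg : g ∈ Subgroup.closure (insert t (Set.range ι)) := hgen ▸ Subgroup.mem_top g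
  have hι (β : Γ) (y : G) (hy : ∃ (j l : ℕ) (γ : Γ), y = t ^ j * ι γ * (t ^ l)⁻¹) :
      ∃ (j l : ℕ) (γ : Γ), ι β * y = t ^ j * ι γ * (t ^ l)⁻¹ := by
    obtain ⟨j, l, γ, rfl⟩ := hy
    refine ⟨j, l, τ^[j] β * γ, ?_⟩
    rw [← mul_assoc, ← mul_assoc, map_mul_pow hτ, map_mul, mul_assoc (t ^ j)]
  induction hg using Subgroup.closure_induction_left with
  | one => exact ⟨0, 0, 1, by simp⟩
  | mul_left y hy z _ hz =>
    rcases hy with rfl | ⟨β, rfl⟩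
    · obtain ⟨j, l, γ, rfl⟩ := hz
      exact ⟨j + 1, l, γ, by simp only [pow_succ', mul_assoc]⟩
    · exact hι β z hz
  | inv_mul_cancel y hy z _ hz =>
    rcases hy with rfl | ⟨β, rfl⟩
    · obtain ⟨j, l, γ, rfl⟩ := hz
      cases j with
      | zero =>
        refine ⟨0, l + 1, τ γ, ?_⟩
        rw [inv_mul_eq_iff_eq_mul, pow_zero, one_mul, one_mul, ← mul_assoc, ← hτ, pow_succ]
        group
      | succ j => exact ⟨j, l, γ, by simp only [pow_succ', mul_assoc, inv_mul_cancel_left]⟩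
    · rw [← map_inv]
      exact hι β⁻¹ z hz

/-- The union of the conjugates by the powers of `t` of the image of `P`: the positive cone induced
by `P` on the kernel of the exponent sum in `t`. -/
def ascendingCone (ι : Γ →* G) (t : G) (P : Set Γ) : Set G :=
  {g | ∃ j : ℕ, ∃ γ ∈ P, g = t ^ j * ι γ * (t ^ j)⁻¹}

lemma exists_of_mem_ascendingCone (hτ : ∀ γ, ι γ * t = t * ι (τ γ)) (hP : ∀ a ∈ P, τ a ∈ P) {g : G}
    (hg : g ∈ ascendingCone ι t P) :
    ∃ j₀, ∀ j, j₀ ≤ j → ∃ γ ∈ P, g = t ^ j * ι γ * (t ^ j)⁻¹ := by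
  obtain ⟨j₀, γ, hγ, rfl⟩ := hg
  refine ⟨j₀, fun j hj => ?_⟩
  obtain ⟨i, rfl⟩ := Nat.exists_eq_add_of_le hj
  refine ⟨τ^[i] γ, Set.MapsTo.iterate (s := P) hP i hγ, ?_⟩
  rw [map_eq_pow_conj hτ γ i, pow_add]
  group

lemma one_notMem_ascendingCone (hι : Function.Injective ι) (hone : 1 ∉ P) :
    1 ∉ ascendingCone ι t P := by
  rintro ⟨j, γ, hγ, h⟩
  rw [eq_comm, conj_eq_one_iff, map_eq_one_iff ι hι] at h
  exact hone (h ▸ hγ)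

lemma mul_mem_ascendingCone (hτ : ∀ γ, ι γ * t = t * ι (τ γ)) (hP : ∀ a ∈ P, τ a ∈ P)
    (hcone : IsPositiveCone P) {g h : G} (hg : g ∈ ascendingCone ι t P)
    (hh : h ∈ ascendingCone ι t P) : g * h ∈ ascendingCone ι t P := by
  obtain ⟨i, hi⟩ := exists_of_mem_ascendingCone hτ hP hg
  obtain ⟨j, hj⟩ := exists_of_mem_ascendingCone hτ hP hh
  obtain ⟨γ, hγ, rfl⟩ := hi (max i j) (le_max_left _ _)
  obtain ⟨β, hβ, rfl⟩ := hj (max i j) (le_max_right _ _)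
  exact ⟨max i j, γ * β, hcone.mul_mem hγ hβ, by rw [map_mul]; group⟩

lemma map_conj_mem_ascendingCone (hτ : ∀ γ, ι γ * t = t * ι (τ γ)) (hcone : IsPositiveCone P)
    (β : Γ) {g : G} (hg : g ∈ ascendingCone ι t P) : ι β * g * (ι β)⁻¹ ∈ ascendingCone ι t P := by
  obtain ⟨j, γ, hγ, rfl⟩ := hg
  refine ⟨j, τ^[j] β * γ * (τ^[j] β)⁻¹, hcone.conj_mem hγ _, ?_⟩
  rw [map_eq_pow_conj hτ β j, map_mul, map_mul, map_inv]
  group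

lemma conj_mem_ascendingCone_iff (hτ : ∀ γ, ι γ * t = t * ι (τ γ)) (hP : ∀ a ∈ P, τ a ∈ P)
    (hcone : IsPositiveCone P) (hgen : Subgroup.closure (insert t (Set.range ι)) = ⊤) (b g : G) :
    b * g * b⁻¹ ∈ ascendingCone ι t P ↔ g ∈ ascendingCone ι t P := by
  have hb : b ∈ Subgroup.closure (insert t (Set.range ι)) := hgen ▸ Subgroup.mem_top b
  induction hb using Subgroup.closure_induction generalizing g with
  | mem y hy =>
    rcases hy with rfl | ⟨β, rfl⟩
    · refine ⟨fun h => ?_, ?_⟩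
      · obtain ⟨j₀, hj⟩ := exists_of_mem_ascendingCone hτ hP h
        obtain ⟨γ, hγ, hconj⟩ := hj (j₀ + 1) (Nat.le_succ j₀)
        rw [pow_succ', mul_inv_rev, ← mul_assoc, mul_left_inj, mul_assoc, mul_assoc, mul_right_inj,
          ← mul_assoc] at hconj
        exact ⟨j₀, γ, hγ, hconj⟩
      · rintro ⟨j, γ, hγ, rfl⟩
        exact ⟨j + 1, γ, hγ, by simp only [pow_succ', mul_inv_rev, mul_assoc]⟩
    · refine ⟨fun h => ?_, map_conj_mem_ascendingCone hτ hcone β⟩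
      have hconj := map_conj_mem_ascendingCone hτ hcone β⁻¹ h
      rwa [map_inv, inv_inv, mul_assoc, inv_mul_cancel_right, inv_mul_cancel_left] at hconj
  | one => rw [one_mul, inv_one, mul_one]
  | mul a b _ _ ha hb =>
    refine Iff.trans ?_ ((ha (b * g * b⁻¹)).trans (hb g))
    simp only [mul_inv_rev, mul_assoc]
  | inv a _ ha =>
    refine (ha (a⁻¹ * g * a⁻¹⁻¹)).symm.trans ?_
    simp only [inv_inv, mul_assoc, mul_inv_cancel_left, mul_inv_cancel, mul_one]

theorem isBiOrderable_of_ascending (hι : Function.Injective ι)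
    (hτ : ∀ γ, ι γ * t = t * ι (τ γ)) (hgen : Subgroup.closure (insert t (Set.range ι)) = ⊤)
    (deg : G →* Multiplicative ℤ) (hdt : deg t = Multiplicative.ofAdd 1)
    (hdι : ∀ γ, deg (ι γ) = 1) (hcone : IsPositiveCone P) (hP : ∀ a ∈ P, τ a ∈ P) :
    IsBiOrderable G := by
  refine (isPositiveCone_of_ker deg (N := ascendingCone ι t P) ?_
    (one_notMem_ascendingCone hι hcone.one_notMem)
    (fun _ ha _ hb => mul_mem_ascendingCone hτ hP hcone ha hb) (fun a hdeg ha => ?_)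
    fun a ha b => (conj_mem_ascendingCone_iff hτ hP hcone hgen b a).2 ha).isBiOrderable
  · rintro _ ⟨j, γ, -, rfl⟩
    rw [map_mul, map_mul, map_inv, hdι, mul_one, mul_inv_cancel]
  · obtain ⟨j, l, γ, rfl⟩ := exists_pow_mul_map_mul hτ hgen a
    obtain rfl : j = l := by
      rw [map_mul, map_mul, map_inv, hdι, mul_one, map_pow, map_pow, hdt, mul_inv_eq_one,
        ← ofAdd_nsmul, ← ofAdd_nsmul] at hdeg
      simpa using hdeg
    refine (hcone.mem_or_inv_mem (a := γ) fun hγ => ha ?_).imp (fun h => ⟨j, γ, h, rfl⟩)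
      fun h => ⟨j, γ⁻¹, h, ?_⟩
    · rw [hγ, map_one, mul_one, mul_inv_cancel]
    · rw [map_inv]
      group

end Extension

lemma exists_ascending_extension {Γ : Type u} [Group Γ] {τ : Γ →* Γ} (hτ : Function.Injective τ) :
    ∃ (H : Type u) (_ : Group H) (ι : Γ →* H) (s : H),
      Function.Injective ι ∧ ∀ γ, ι γ * s = s * ι (τ γ) := by
  let φ : (⊤ : Subgroup Γ) ≃* τ.range := Subgroup.topEquiv.trans (MonoidHom.ofInjective hτ)
  refine ⟨HNNExtension Γ ⊤ τ.range φ, inferInstance, HNNExtension.of, HNNExtension.t⁻¹,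
    HNNExtension.of_injective φ, fun γ => ?_⟩
  have ht := HNNExtension.t_mul_of (φ := φ) ⟨γ, Subgroup.mem_top γ⟩
  rw [mul_inv_eq_iff_eq_mul, mul_assoc, eq_inv_mul_iff_mul_eq]
  exact ht

/-! ### Groups of principal words -/

section Presentation

variable {n : ℕ} {m d : Fin n → ℤ} {κ : Fin n → ℕ} {e : ℤ} {H : Type*} [Group H]

/-- The word `∏ i, s ^ (-d i) * y ^ (m i) * s ^ (d i)`. -/
def principalWord (m d : Fin n → ℤ) (y s : H) : H :=
  ((List.finRange n).map fun i => s ^ (-(d i)) * y ^ m i * s ^ d i).prod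

lemma map_principalWord {K : Type*} [Group K] (f : H →* K) (y s : H) :
    f (principalWord m d y s) = principalWord m d (f y) (f s) := by
  simp only [principalWord, map_list_prod, List.map_map, Function.comp_def, map_mul, map_zpow]

lemma principalWord_one_left (s : H) : principalWord m d 1 s = 1 :=
  List.prod_eq_one fun y hy => by
    obtain ⟨i, -, rfl⟩ := List.mem_map.1 hy
    rw [one_zpow, mul_one, zpow_neg, inv_mul_cancel]

lemma relWord_conj (hκ : ∀ i, (κ i : ℤ) = d i - e) (y s : H) (l : ℕ) :
    relWord m κ (fun k => (s ^ k)⁻¹ * y * s ^ k) l =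
      s ^ (e - l) * principalWord m d y s * (s ^ (e - l))⁻¹ := by
  rw [← MulAut.conj_apply, principalWord, map_list_prod, List.map_map, relWord]
  refine congrArg List.prod (List.map_congr_left fun i _ => ?_)
  have hpow : s ^ (κ i + l) = s ^ d i * (s ^ (e - l))⁻¹ := by
    rw [← zpow_natCast, ← zpow_neg, ← zpow_add, Nat.cast_add, hκ]
    congr 1
    ring
  have hconj := conj_zpow (i := m i) (a := (s ^ (κ i + l))⁻¹) (b := y)
  rw [inv_inv] at hconj
  rw [hconj, hpow, Function.comp_apply, MulAut.conj_apply]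
  group

/-- The group with generators `x = of true`, `t = of false` and the single relator
`principalWord m d x t`. -/
abbrev PrincipalWordGroup (m d : Fin n → ℤ) : Type :=
  PresentedGroup {principalWord m d (FreeGroup.of true) (FreeGroup.of false)}

/-- The homomorphism out of `PrincipalWordGroup m d` with `x ↦ y` and `t ↦ s`. -/
def principalLift (y s : H) (h : principalWord m d y s = 1) : PrincipalWordGroup m d →* H :=
  PresentedGroup.toGroup (f := fun b => if b then y else s) (by
    rintro _ rfl
    rw [map_principalWord, FreeGroup.lift_apply_of, FreeGroup.lift_apply_of]
    exact h)

lemma principalLift_true (y s : H) (h : principalWord m d y s = 1) :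
    principalLift y s h (.of true) = y :=
  PresentedGroup.toGroup.of _

lemma principalLift_false (y s : H) (h : principalWord m d y s = 1) :
    principalLift y s h (.of false) = s :=
  PresentedGroup.toGroup.of _

lemma principalWord_of :
    principalWord m d (.of true : PrincipalWordGroup m d) (.of false) = 1 :=
  (map_principalWord (PresentedGroup.mk _) _ _).symm.trans (PresentedGroup.one_of_mem rfl)

/-- The exponent sum in `t`. -/
def tDegree (m d : Fin n → ℤ) : PrincipalWordGroup m d →* Multiplicative ℤ :=
  principalLift 1 (Multiplicative.ofAdd 1) (principalWord_one_left _)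

/-- The homomorphism from the tower to the group of the principal word sending the `k`-th generator
to `t ^ (-k) * x * t ^ k`. -/
def towerMap (m : Fin n → ℤ) (hκ : ∀ i, (κ i : ℤ) = d i - e) :
    Tower m κ →* PrincipalWordGroup m d :=
  towerLift (fun k => (.of false ^ k)⁻¹ * .of true * .of false ^ k) fun l => by
    rw [relWord_conj hκ, conj_eq_one_iff, principalWord_of]

lemma towerMap_gen (hκ : ∀ i, (κ i : ℤ) = d i - e) (k : ℕ) :
    towerMap m hκ (towerGen m κ k) = (.of false ^ k)⁻¹ * .of true * .of false ^ k :=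
  towerLift_gen _ _ k

lemma tower_hom_ext {f g : Tower m κ →* H}
    (h : ∀ k, f (towerGen m κ k) = g (towerGen m κ k)) : f = g :=
  PresentedGroup.ext h

lemma towerMap_mul (hκ : ∀ i, (κ i : ℤ) = d i - e) (γ : Tower m κ) :
    towerMap m hκ γ * .of false = .of false * towerMap m hκ (towerShift m κ γ) := by
  have hconj : (MulAut.conj (.of false : PrincipalWordGroup m d)⁻¹).toMonoidHom.comp
      (towerMap m hκ) = (towerMap m hκ).comp (towerShift m κ) := by
    refine tower_hom_ext fun k => ?_
    rw [MonoidHom.comp_apply, MonoidHom.comp_apply, towerShift_gen, towerMap_gen, towerMap_gen]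
    simp [pow_succ, mul_assoc]
  have hγ := DFunLike.congr_fun hconj γ
  rw [MonoidHom.comp_apply, MonoidHom.comp_apply] at hγ
  rw [← hγ]
  simp [mul_assoc]

lemma tDegree_towerMap (hκ : ∀ i, (κ i : ℤ) = d i - e) (γ : Tower m κ) :
    tDegree m d (towerMap m hκ γ) = 1 := by
  have hcomp : (tDegree m d).comp (towerMap m hκ) = 1 := tower_hom_ext fun k => by
    rw [MonoidHom.comp_apply, towerMap_gen, MonoidHom.one_apply, map_mul, map_mul, map_inv,
      tDegree, principalLift_true, mul_one, inv_mul_cancel]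
  exact DFunLike.congr_fun hcomp γ

lemma towerShift_iterate_gen (k : ℕ) : (towerShift m κ)^[k] (towerGen m κ 0) = towerGen m κ k := by
  induction k with
  | zero => rfl
  | succ k ih => rw [Function.iterate_succ_apply', ih, towerShift_gen]

lemma towerMap_injective (hκ : ∀ i, (κ i : ℤ) = d i - e)
    (hτ : Function.Injective (towerShift m κ)) : Function.Injective (towerMap m hκ) := by
  obtain ⟨H, _, ι, s, hι, hs⟩ := exists_ascending_extension hτ
  have hgen (k : ℕ) : (s ^ k)⁻¹ * ι (towerGen m κ 0) * s ^ k = ι (towerGen m κ k) := by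
    rw [mul_assoc, map_mul_pow hs, inv_mul_cancel_left, towerShift_iterate_gen]
  have hword : principalWord m d (ι (towerGen m κ 0)) s = 1 := by
    have hrel := map_relWord (m := m) (κ := κ) ι (towerGen m κ) 0
    rw [relWord_towerGen, map_one] at hrel
    rw [← conj_eq_one_iff (a := s ^ (e - (0 : ℕ))), ← relWord_conj hκ, funext hgen]
    exact hrel.symm
  have hcomp : (principalLift _ s hword).comp (towerMap m hκ) = ι := tower_hom_ext fun k => by
    rw [MonoidHom.comp_apply, towerMap_gen, map_mul, map_mul, map_inv, map_pow, principalLift_true,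
      principalLift_false, hgen]
  rw [← hcomp] at hι
  exact Function.Injective.of_comp hι

lemma closure_insert_range_towerMap (hκ : ∀ i, (κ i : ℤ) = d i - e) :
    Subgroup.closure (insert (.of false) (Set.range (towerMap m hκ))) = ⊤ := by
  rw [eq_top_iff, ← PresentedGroup.closure_range_of, Subgroup.closure_le]
  rintro _ ⟨b, rfl⟩
  refine Subgroup.subset_closure ?_
  cases b with
  | false => exact Set.mem_insert _ _
  | true => exact Set.mem_insert_of_mem _ ⟨towerGen m κ 0, by rw [towerMap_gen]; simp⟩

theorem isBiOrderable_of_isPositiveCone_tower (hκ : ∀ i, (κ i : ℤ) = d i - e) {P : Set (Tower m κ)}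
    (hcone : IsPositiveCone P) (hP : ∀ a ∈ P, towerShift m κ a ∈ P) :
    IsBiOrderable (PrincipalWordGroup m d) := by
  have hτ : Function.Injective (towerShift m κ) := by
    refine (injective_iff_map_eq_one _).2 fun a ha => ?_
    by_contra hne
    rcases hcone.mem_or_inv_mem hne with h | h
    · exact hcone.one_notMem (ha ▸ hP a h)
    · have hone := hP _ h
      rw [map_inv, ha, inv_one] at hone
      exact hcone.one_notMem hone
  exact isBiOrderable_of_ascending (towerMap_injective hκ hτ) (towerMap_mul hκ)
    (closure_insert_range_towerMap hκ) (tDegree m d) (principalLift_false _ _ _)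
    (tDegree_towerMap hκ) hcone hP

end Presentation

section Data

open Polynomial

variable {n : ℕ} {m d : Fin n → ℤ} {κ : Fin n → ℕ} {e D : ℤ} {δ : ℕ} {i₀ : Fin n}

lemma isTop_of_isGreatest (hκ : ∀ i, (κ i : ℤ) = d i - e) (hD : IsGreatest (Set.range d) D)
    (hδ : (δ : ℤ) = D - e) (hi₀ : d i₀ = D) (huniq : ∀ i, d i = D → i = i₀) : IsTop κ δ i₀ := by
  refine ⟨by have := hκ i₀; omega, fun i hi => ?_⟩
  have hlt : d i < D := lt_of_le_of_ne (hD.2 ⟨i, rfl⟩) fun h => hi (huniq i h)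
  have := hκ i
  omega

lemma coeff_relPoly_eq_sum (hκ : ∀ i, (κ i : ℤ) = d i - e) (k : ℕ) :
    (relPoly m κ).coeff k = ∑ i with d i - e = k, m i := by
  rw [coeff_relPoly]
  refine Finset.sum_congr (Finset.filter_congr fun i _ => ?_) fun _ _ => rfl
  rw [← hκ, Nat.cast_inj]

lemma relPoly_eq_sum (h : IsTop κ δ i₀) : relPoly m κ =
    ∑ k ∈ Finset.range δ, C ((relPoly m κ).coeff k) * X ^ k +
      C ((relPoly m κ).coeff δ) * X ^ δ := by
  rw [← Finset.sum_range_succ]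
  exact (relPoly m κ).as_sum_range_C_mul_X_pow' (Nat.lt_succ_of_le (natDegree_relPoly_le h))

lemma isPrimitive_eraseLead_of_gcd_eq_one {R : Type*} [CommRing R]
    [NormalizedGCDMonoid R] {A : R[X]} (hA : (Finset.range A.natDegree).gcd A.coeff = 1) :
    A.eraseLead.IsPrimitive := fun r hr => by
  rw [isUnit_iff_dvd_one, ← hA]
  refine Finset.dvd_gcd fun k hk => ?_
  rw [← eraseLead_coeff_of_ne k (Finset.mem_range.1 hk).ne]
  exact (C_dvd_iff_dvd_coeff _ _).1 hr k

end Data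

end PrincipalGroup

open PrincipalGroup in
theorem biorderable_of_principal_positive_real_roots_general
    (n : ℕ) (m d : Fin n → ℤ) (e D : ℤ)
    (he : IsLeast (Set.range d) e) (hD : IsGreatest (Set.range d) D)
    (htidyD : (∑ i ∈ Finset.univ.filter fun i => d i = D, m i) ≠ 0)
    (hprincipal : ∃! i : Fin n, d i = D)
    (δ : ℕ) (hδ : (δ : ℤ) = D - e)
    (a : ℕ → ℤ)
    (ha : ∀ k : ℕ, a k = ∑ i ∈ Finset.univ.filter fun i => d i - e = (k : ℤ), m i)
    (mval : ℤ) (hmval : mval = -(a δ))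
    (hgcd : (Finset.range δ).gcd a = 1)
    (hroots : ∀ z : ℂ,
      Polynomial.aeval z
        ((∑ k ∈ Finset.range δ, Polynomial.C (a k) * Polynomial.X ^ k) -
          Polynomial.C mval * Polynomial.X ^ δ) = 0 →
      z.im = 0 ∧ 0 < z.re) :
    IsBiOrderable (PresentedGroup
      ({((List.finRange n).map fun i =>
          (FreeGroup.of false) ^ (-(d i)) * (FreeGroup.of true) ^ (m i) *
            (FreeGroup.of false) ^ (d i)).prod} : Set (FreeGroup Bool))) := by
  obtain ⟨i₀, hi₀, huniq⟩ := hprincipal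
  obtain ⟨κ, hκ⟩ : ∃ κ : Fin n → ℕ, ∀ i, (κ i : ℤ) = d i - e :=
    ⟨fun i => (d i - e).toNat, fun i => Int.toNat_of_nonneg (sub_nonneg.2 (he.2 ⟨i, rfl⟩))⟩
  have htop : IsTop κ δ i₀ := isTop_of_isGreatest hκ hD hδ hi₀ huniq
  have hcoeff : (relPoly m κ).coeff = a :=
    funext fun k => (coeff_relPoly_eq_sum hκ k).trans (ha k).symm
  have hm : m i₀ ≠ 0 := by
    rw [← coeff_relPoly_top (m := m) htop, coeff_relPoly_eq_sum hκ]
    simpa only [hδ, sub_left_inj] using htidyD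
  have hprim : (relPoly m κ).eraseLead.IsPrimitive :=
    isPrimitive_eraseLead_of_gcd_eq_one (by rwa [hcoeff, natDegree_relPoly htop hm])
  have hpoly := relPoly_eq_sum (m := m) htop
  rw [hcoeff, ← neg_eq_iff_eq_neg.2 hmval, Polynomial.C_neg, neg_mul, ← sub_eq_add_neg] at hpoly
  rw [← hpoly] at hroots
  obtain ⟨P, hcone, hP⟩ := exists_isPositiveCone_towerShift htop hm hprim hroots
  exact isBiOrderable_of_isPositiveCone_tower hκ hcone hP

/-- **Theorem D.** Let `G = ⟨x, t ∣ w⟩` where `w = ∏ i, t^(-d i) x^(m i) t^(d i)` is a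
principal word (tidy, with a unique index attaining the maximal `t`-exponent `D`).
With `δ = D - e` and `a k = ∑_{d i - e = k} m i`, the associated polynomial is
`A(X) = a 0 + a 1 * X + ⋯ + a (δ-1) * X^(δ-1) - mval * X^δ` where `-mval = a δ`.
If `gcd (a 0, …, a (δ-1)) = 1`, `mval` does not divide `a (δ-1)`, and every complex
root of `A(X)` is a positive real number, then `G` is bi-orderable.
Here `x = FreeGroup.of true`, `t = FreeGroup.of false`. -/
theorem biorderable_of_principal_positive_real_roots
    (n : ℕ) (hn : 1 ≤ n) (m d : Fin n → ℤ)
    (e D : ℤ)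
    (he : IsLeast (Set.range d) e) (hD : IsGreatest (Set.range d) D)
    (htidyE : (∑ i ∈ Finset.univ.filter fun i => d i = e, m i) ≠ 0)
    (htidyD : (∑ i ∈ Finset.univ.filter fun i => d i = D, m i) ≠ 0)
    (hprincipal : ∃! i : Fin n, d i = D)
    (δ : ℕ) (hδ : (δ : ℤ) = D - e)
    (a : ℕ → ℤ)
    (ha : ∀ k : ℕ, a k = ∑ i ∈ Finset.univ.filter fun i => d i - e = (k : ℤ), m i)
    (mval : ℤ) (hmval : mval = -(a δ))
    (hgcd : (Finset.range δ).gcd a = 1)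
    (hndvd : ¬ mval ∣ a (δ - 1))
    (hroots : ∀ z : ℂ,
      Polynomial.aeval z
        ((∑ k ∈ Finset.range δ, Polynomial.C (a k) * Polynomial.X ^ k) -
          Polynomial.C mval * Polynomial.X ^ δ) = 0 →
      z.im = 0 ∧ 0 < z.re) :
    IsBiOrderable (PresentedGroup
      ({((List.finRange n).map fun i =>
          (FreeGroup.of false) ^ (-(d i)) * (FreeGroup.of true) ^ (m i) *
            (FreeGroup.of false) ^ (d i)).prod} : Set (FreeGroup Bool))) :=
  biorderable_of_principal_positive_real_roots_general n m d e D he hD htidyD hprincipal δ hδ a ha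
    mval hmval hgcd hroots
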